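/- Let f be a homeomorphism of the open annulus 𝔸 isotopic to the identity and satisfying the intersection property, and let F be a lift of f to ℝ². Suppose there exist two path-connected sets X₁ and X₂ in ℝ² satisfying: (1) F(X_i) ∩ X_i = ∅ for i = 1, 2; (2) T^k(X_i) ∩ X_i = ∅ for i = 1, 2 and every k ∈ ℤ \ {0}; (3) either X₁ = X₂ or T^k(X₁) ∩ X₂ = ∅ for every k ∈ ℤ; (4) there exist positive integers p_i, q_i (i = 1, 2) such that F^{q₁}(X₁) ∩ T^{p₁}(X₁) ≠ ∅ and F^{q₂}(X₂) ∩ T^{−p₂}(X₂) ≠ ∅. Then F has a fixed point. -/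

import Mathlib

open Filter Topology Set

noncomputable section

/-- The plane ℝ². -/
abbrev Plane := ℝ × ℝ

/-- The open annulus 𝔸 = ℝ/ℤ × ℝ. -/
abbrev Ann := AddCircle (1 : ℝ) × ℝ

/-- The covering map π : ℝ² → 𝔸, (x,y) ↦ (x + ℤ, y). -/
def prj : Plane → Ann := fun p => ((p.1 : AddCircle (1 : ℝ)), p.2)

/-- The deck transformation T^k : ℝ² → ℝ², (x,y) ↦ (x + k, y). -/
def Tr (k : ℤ) : Plane → Plane := fun p => (p.1 + (k : ℝ), p.2)

/-- `F` is a lift of `f` to the universal cover ℝ² of the annulus. -/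
def IsLift (f : Ann ≃ₜ Ann) (F : Plane ≃ₜ Plane) : Prop :=
  ∀ p : Plane, prj (F p) = f (prj p)

/-- `f` is isotopic to the identity: there is a continuous family of homeomorphisms
joining the identity to `f`. -/
def IsotopicToId (f : Ann ≃ₜ Ann) : Prop :=
  ∃ H : ℝ → Ann → Ann,
    Continuous (fun q : ℝ × Ann => H q.1 q.2) ∧
    (∀ t : ℝ, ∃ h : Ann ≃ₜ Ann, ∀ z, H t z = h z) ∧
    (∀ z, H 0 z = z) ∧ (∀ z, H 1 z = f z)

/-- An essential circle in 𝔸: a simple closed curve which is not null-homotopic. -/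
def IsEssentialCircle (c : Set Ann) : Prop :=
  ∃ φ : C(AddCircle (1 : ℝ), Ann), Function.Injective φ ∧ Set.range φ = c ∧
    ¬ ∃ pt : Ann, φ.Homotopic (ContinuousMap.const _ pt)

/-- `f` has the intersection property: every essential circle meets its image. -/
def IntersectionProperty (f : Ann → Ann) : Prop :=
  ∀ c : Set Ann, IsEssentialCircle c → (c ∩ f '' c).Nonempty

/-- `z` is a positively recurrent point of `g`: some subsequence of the forward orbit
of `z` converges to `z`. -/
def PosRec {X : Type*} [TopologicalSpace X] (g : X → X) (z : X) : Prop :=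
  ∃ φ : ℕ → ℕ, StrictMono φ ∧ Tendsto (fun k => g^[φ k] z) atTop (𝓝 z)

/-- The positively recurrent point `z` has rotation number `ρ` for the lift `F` of `f`. -/
def HasRotNum (f : Ann → Ann) (F : Plane → Plane) (z : Ann) (ρ : ℝ) : Prop :=
  PosRec f z ∧
    ∀ zt : Plane, prj zt = z →
      ∀ φ : ℕ → ℕ, StrictMono φ →
        Tendsto (fun k => f^[φ k] z) atTop (𝓝 z) →
        Tendsto (fun k => ((F^[φ k] zt).1 - zt.1) / (φ k : ℝ)) atTop (𝓝 ρ)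

/-- The rotation set Rot(F): the set of rotation numbers of positively recurrent
points of `f`. -/
def Rot (f : Ann → Ann) (F : Plane → Plane) : Set ℝ := {ρ | ∃ z, HasRotNum f F z ρ}

/-- The region `L(Γ)` of the plane on the left (west) of a line `Γ` (as a subset of ℝ²):
points lying in the connected component of the complement of `Γ` containing all far-west
points of the horizontal axis. -/
def Lset (Γ : Set Plane) : Set Plane :=
  {p | ∃ s : ℝ, ∀ x ≤ s, p ∈ connectedComponentIn Γᶜ ((x, 0) : Plane)}

/-- The region `R(Γ)` of the plane on the right (east) of a line `Γ`. -/
def Rset (Γ : Set Plane) : Set Plane :=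
  {p | ∃ s : ℝ, ∀ x ≥ s, p ∈ connectedComponentIn Γᶜ ((x, 0) : Plane)}

/-- The relation `Γ₁ < Γ₂` on (essential, oriented from south to north) lines:
`Cl(L(Γ₁)) ⊆ L(Γ₂)`. -/
def lineLT (Γ₁ Γ₂ : Set Plane) : Prop := closure (Lset Γ₁) ⊆ Lset Γ₂

/-- An essential line in ℝ², oriented from south to north: a properly embedded copy of ℝ
whose second coordinate tends to ±∞ at ±∞. -/
def IsEssLinePlane (Γ : ℝ → Plane) : Prop :=
  Continuous Γ ∧ Function.Injective Γ ∧ IsProperMap Γ ∧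
    Tendsto (fun t => (Γ t).2) atTop atTop ∧ Tendsto (fun t => (Γ t).2) atBot atBot

/-- An essential line in the annulus 𝔸: a properly embedded simple path joining one end
to the other. -/
def IsEssLineAnn (γ : ℝ → Ann) : Prop :=
  Continuous γ ∧ Function.Injective γ ∧ IsProperMap γ ∧
    ((Tendsto (fun t => (γ t).2) atTop atTop ∧ Tendsto (fun t => (γ t).2) atBot atBot) ∨
     (Tendsto (fun t => (γ t).2) atTop atBot ∧ Tendsto (fun t => (γ t).2) atBot atTop))

/-- An oriented essential line in 𝔸 joining the lower end S to the upper end N. -/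
def IsEssLineAnnSN (γ : ℝ → Ann) : Prop :=
  Continuous γ ∧ Function.Injective γ ∧ IsProperMap γ ∧
    Tendsto (fun t => (γ t).2) atTop atTop ∧ Tendsto (fun t => (γ t).2) atBot atBot

/-!
Suppose `F` has no fixed point. After a conjugation commuting with the deck translations, the
points of `X₁` and `X₂` that matter lie on two horizontal segments. Extend these to a locally finite
deck-invariant tiling of the plane by free rectangles, taken so wide that the cells `R₁` and `R₂` of
the segments meet their image under `F` or `Tr 1`, and draw an arrow `b → b'` when `F b` meets `b'`.
A cycle of arrows of minimal length would let one perturb `F`, by pushes with disjoint supports, to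
a fixed point free map with a periodic orbit, which Brouwer's theorem forbids; so there are no
cycles. The union `A` of the cells reached from the translates of `R₁` satisfies
`F A ⊆ interior A`. If it contains no translate of `R₂`, then `interior A \ F A` is disjoint from
its image and, by a winding number computation, contains an essential circle of the annulus, against
the intersection property. Hence each of `R₁`, `R₂` reaches a translate of the other. As `R₁`
reaches a translate of itself to the right and `R₂` one to the left, some cell reaches itself.
-/

section Isotopy

variable {X : Type*} [TopologicalSpace X]

/-- `F` is joined to the identity by a continuous family of injective maps. Only injectivity is
recorded, because it is what makes the displacement `H t z - H t w` of two points nonzero. -/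
def InjIsotopicToId (F : X → X) : Prop :=
  ∃ H : ℝ → X → X, Continuous (fun q : ℝ × X => H q.1 q.2) ∧
    (∀ t, Function.Injective (H t)) ∧ (∀ z, H 0 z = z) ∧ ∀ z, H 1 z = F z

theorem InjIsotopicToId.refl : InjIsotopicToId (id : X → X) :=
  ⟨fun _ => id, continuous_snd, fun _ => Function.injective_id, fun _ => rfl, fun _ => rfl⟩

theorem InjIsotopicToId.comp {F G : X → X} (hF : InjIsotopicToId F) (hG : InjIsotopicToId G) :
    InjIsotopicToId (F ∘ G) := by
  obtain ⟨H, hHc, hHi, hH0, hH1⟩ := hF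
  obtain ⟨K, hKc, hKi, hK0, hK1⟩ := hG
  exact ⟨fun t => H t ∘ K t, hHc.comp (continuous_fst.prodMk hKc), fun t => (hHi t).comp (hKi t),
    fun z => by simp [hH0, hK0], fun z => by simp [hH1, hK1]⟩

theorem InjIsotopicToId.conj {F : X → X} (hF : InjIsotopicToId F) (Φ : X ≃ₜ X) :
    InjIsotopicToId (Φ ∘ F ∘ Φ.symm) := by
  obtain ⟨H, hHc, hHi, hH0, hH1⟩ := hF
  refine ⟨fun t => Φ ∘ H t ∘ Φ.symm, ?_,
    fun t => Φ.injective.comp ((hHi t).comp Φ.symm.injective), fun z => by simp [hH0],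
    fun z => by simp [hH1]⟩
  exact Φ.continuous.comp
    (hHc.comp (continuous_fst.prodMk (Φ.symm.continuous.comp continuous_snd)))

end Isotopy

section Tent

variable {X : Type*} [PseudoMetricSpace X] {S : Set X} {r : ℝ} {z : X}

/-- The tent function of height `1` over `S`, vanishing at distance at least `r` from `S`. -/
def tent (S : Set X) (r : ℝ) (z : X) : ℝ := max 0 (1 - Metric.infDist z S / r)

theorem tent_eq_one (hz : z ∈ S) : tent S r z = 1 := by
  simp [tent, Metric.infDist_zero_of_mem hz]

theorem tent_eq_zero (hr : 0 < r) (hz : r ≤ Metric.infDist z S) : tent S r z = 0 :=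
  max_eq_left (sub_nonpos.2 ((one_le_div hr).2 hz))

theorem tent_of_infDist_le (hr : 0 < r) (hz : Metric.infDist z S ≤ r) :
    tent S r z = 1 - Metric.infDist z S / r :=
  max_eq_right (sub_nonneg.2 ((div_le_one hr).2 hz))

theorem tent_image {f : X → X} (hf : Isometry f) : tent (f '' S) r (f z) = tent S r z := by
  rw [tent, Metric.infDist_image hf, tent]

theorem abs_tent_sub_tent_le (hr : 0 < r) (S : Set X) (z w : X) :
    |tent S r z - tent S r w| ≤ dist z w / r := by
  have hinf : |Metric.infDist w S - Metric.infDist z S| ≤ dist z w := by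
    simpa [← Real.dist_eq, dist_comm w z] using
      (Metric.lipschitz_infDist_pt S).dist_le_mul w z
  calc |tent S r z - tent S r w|
      ≤ |(1 - Metric.infDist z S / r) - (1 - Metric.infDist w S / r)| := by
        refine (abs_max_sub_max_le_max _ _ _ _).trans_eq ?_
        rw [sub_self, abs_zero, max_eq_right (abs_nonneg _)]
    _ = |Metric.infDist w S - Metric.infDist z S| / r := by
        rw [sub_sub_sub_cancel_left, ← sub_div, abs_div, abs_of_pos hr]
    _ ≤ dist z w / r := by gcongr

theorem continuous_tent : Continuous (tent S r) := by
  have := Metric.continuous_infDist_pt S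
  unfold tent
  fun_prop

end Tent

section Push

variable {E : Type*} [NormedAddCommGroup E] [NormedSpace ℝ E]

theorem approximatesLinearOn_add_tent_smul {r : ℝ} (hr : 0 < r) (S : Set E) (v : E) :
    ApproximatesLinearOn (fun z => z + tent S r z • v)
      (ContinuousLinearEquiv.refl ℝ E : E →L[ℝ] E) univ (Real.toNNReal (‖v‖ / r)) := by
  intro x _ y _
  have hdiff : x + tent S r x • v - (y + tent S r y • v) -
      (ContinuousLinearEquiv.refl ℝ E : E →L[ℝ] E) (x - y) = (tent S r x - tent S r y) • v := by
    simp only [ContinuousLinearEquiv.coe_refl, ContinuousLinearMap.id_apply, sub_smul]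
    abel
  rw [hdiff, norm_smul, Real.norm_eq_abs, Real.coe_toNNReal _ (by positivity), ← dist_eq_norm]
  calc |tent S r x - tent S r y| * ‖v‖ ≤ dist x y / r * ‖v‖ := by
        gcongr; exact abs_tent_sub_tent_le hr S x y
    _ = ‖v‖ / r * dist x y := by ring

theorem toNNReal_norm_div_lt {r : ℝ} {v : E} (hv : ‖v‖ < r) :
    Subsingleton E ∨ Real.toNNReal (‖v‖ / r) <
      ‖((ContinuousLinearEquiv.refl ℝ E).symm : E →L[ℝ] E)‖₊⁻¹ := by
  rcases subsingleton_or_nontrivial E with hE | hE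
  · exact Or.inl hE
  right
  have hnorm : ‖((ContinuousLinearEquiv.refl ℝ E).symm : E →L[ℝ] E)‖₊ = 1 :=
    ContinuousLinearMap.nnnorm_id
  rw [hnorm, inv_one, Real.toNNReal_lt_one]
  exact (div_lt_one ((norm_nonneg v).trans_lt hv)).2 hv

theorem injective_add_tent_smul {r : ℝ} (S : Set E) {v : E} (hv : ‖v‖ < r) :
    Function.Injective fun z => z + tent S r z • v :=
  injOn_univ.1 <| injOn_iff_injective.2 <|
    (approximatesLinearOn_add_tent_smul ((norm_nonneg v).trans_lt hv) S v).injective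
      (toNNReal_norm_div_lt hv)

theorem exists_homeomorph_add_tent_smul [CompleteSpace E] {r : ℝ} (S : Set E) {v : E}
    (hv : ‖v‖ < r) :
    ∃ g : E ≃ₜ E, (∀ z, g z = z + tent S r z • v) ∧ InjIsotopicToId g := by
  have hr : 0 < r := (norm_nonneg v).trans_lt hv
  refine ⟨(approximatesLinearOn_add_tent_smul hr S v).toHomeomorph _ (toNNReal_norm_div_lt hv),
    fun z => rfl, fun t z => z + tent S r z • (projIcc 0 1 zero_le_one t : ℝ) • v, ?_,
    fun t => injective_add_tent_smul S ?_, fun z => by simp, fun z => by simp; rfl⟩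
  · have := continuous_tent (S := S) (r := r)
    fun_prop
  · obtain ⟨ht0, ht1⟩ := (projIcc (0 : ℝ) 1 zero_le_one t).2
    rw [norm_smul, Real.norm_of_nonneg ht0]
    exact (mul_le_of_le_one_left (norm_nonneg v) ht1).trans_lt hv

end Push

section Translates

variable {E : Type*} [AddCommGroup E] {Λ : AddSubgroup E} {U V : Set E}

/-- `U` is disjoint from its translates by the nonzero elements of `Λ`. -/
def TranslateDisjoint (Λ : AddSubgroup E) (U : Set E) : Prop :=
  ∀ v ∈ Λ, ∀ z ∈ U, v + z ∈ U → v = 0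

theorem TranslateDisjoint.mono (hV : TranslateDisjoint Λ V) (hUV : U ⊆ V) :
    TranslateDisjoint Λ U :=
  fun v hv z hz hvz => hV v hv z (hUV hz) (hUV hvz)

theorem translateDisjoint_bot (U : Set E) : TranslateDisjoint ⊥ U :=
  fun _ hv _ _ _ => (AddSubgroup.mem_bot).1 hv

end Translates

section SupportedPush

section Group

variable {E : Type*} [AddCommGroup E] [TopologicalSpace E] {Λ : AddSubgroup E} {U V : Set E}
  {g h : E ≃ₜ E}

/-- `g` is a `Λ`-equivariant homeomorphism, isotopic to the identity, which preserves `U` and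
fixes every point outside the `Λ`-translates of `U`. -/
structure IsSupportedPush (Λ : AddSubgroup E) (U : Set E) (g : E ≃ₜ E) : Prop where
  injIsotopicToId : InjIsotopicToId g
  map_add : ∀ v ∈ Λ, ∀ z, g (v + z) = v + g z
  eq_self : ∀ z, (∀ v ∈ Λ, v + z ∉ U) → g z = z
  mapsTo : MapsTo g U U

namespace IsSupportedPush

theorem refl (Λ : AddSubgroup E) (U : Set E) : IsSupportedPush Λ U (Homeomorph.refl E) :=
  ⟨InjIsotopicToId.refl, fun _ _ _ => rfl, fun _ _ => rfl, mapsTo_id U⟩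

theorem trans (hg : IsSupportedPush Λ U g) (hh : IsSupportedPush Λ U h) :
    IsSupportedPush Λ U (g.trans h) where
  injIsotopicToId := hh.injIsotopicToId.comp hg.injIsotopicToId
  map_add v hv z := by simp [hg.map_add v hv, hh.map_add v hv]
  eq_self z hz := by simp [hg.eq_self z hz, hh.eq_self z hz]
  mapsTo := hh.mapsTo.comp hg.mapsTo

theorem eq_self_of_disjoint (hg : IsSupportedPush Λ U g) (hV : TranslateDisjoint Λ V)
    (hUV : U ⊆ V) {z : E} (hzV : z ∈ V) (hzU : z ∉ U) : g z = z :=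
  hg.eq_self z fun v hv hvz => hzU <| by
    obtain rfl := hV v hv z hzV (hUV hvz)
    rwa [zero_add] at hvz

theorem mono (hg : IsSupportedPush Λ U g) (hV : TranslateDisjoint Λ V) (hUV : U ⊆ V) :
    IsSupportedPush Λ V g where
  injIsotopicToId := hg.injIsotopicToId
  map_add := hg.map_add
  eq_self z hz := hg.eq_self z fun v hv hvz => hz v hv (hUV hvz)
  mapsTo z hz := by
    by_cases hzU : z ∈ U
    · exact hUV (hg.mapsTo hzU)
    · rwa [hg.eq_self_of_disjoint hV hUV hz hzU]

theorem mem_of_apply_mem (hg : IsSupportedPush Λ U g) (hU : TranslateDisjoint Λ U) {z : E}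
    (hz : g z ∈ U) : z ∈ U := by
  by_contra hzU
  by_cases hzΛ : ∀ v ∈ Λ, v + z ∉ U
  · exact hzU (hg.eq_self z hzΛ ▸ hz)
  · push Not at hzΛ
    obtain ⟨v, hv, hvz⟩ := hzΛ
    obtain rfl := hU v hv _ hz (hg.map_add v hv z ▸ hg.mapsTo hvz)
    exact hzU (zero_add z ▸ hvz)

end IsSupportedPush

theorem exists_isSupportedPush_eqOn {ι : Type*} {U : ι → Set E} {g : ι → E ≃ₜ E}
    (hU : TranslateDisjoint Λ (⋃ i, U i)) (hd : Pairwise fun i j => Disjoint (U i) (U j))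
    (hg : ∀ i, IsSupportedPush Λ (U i) (g i)) (s : Finset ι) :
    ∃ h : E ≃ₜ E, IsSupportedPush Λ (⋃ i ∈ s, U i) h ∧ ∀ i ∈ s, EqOn h (g i) (U i) := by
  classical
  induction s using Finset.induction_on with
  | empty => exact ⟨Homeomorph.refl E, .refl _ _, by simp⟩
  | insert i s his ih =>
    obtain ⟨h, hh, heq⟩ := ih
    have hins : TranslateDisjoint Λ (⋃ j ∈ insert i s, U j) :=
      hU.mono (iUnion₂_subset fun j _ => subset_iUnion U j)
    refine ⟨h.trans (g i), (hh.mono hins ?_).trans ((hg i).mono hins ?_), fun j hj z hz => ?_⟩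
    · exact biUnion_subset_biUnion_left fun j hj => Finset.mem_insert_of_mem hj
    · exact subset_biUnion_of_mem (u := U) (Finset.mem_insert_self i s)
    · rcases Finset.mem_insert.1 hj with rfl | hjs
      · have hzs : z ∉ ⋃ k ∈ s, U k := by
          simp only [mem_iUnion, not_exists]
          exact fun k hk hzk => (hd (ne_of_mem_of_not_mem hk his)).le_bot ⟨hzk, hz⟩
        rw [Homeomorph.trans_apply, hh.eq_self_of_disjoint hU
          (iUnion₂_subset fun k _ => subset_iUnion U k) (mem_iUnion_of_mem j hz) hzs]
      · have hji : j ≠ i := ne_of_mem_of_not_mem hjs his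
        rw [Homeomorph.trans_apply, heq j hjs hz]
        exact (hg i).eq_self_of_disjoint hU (subset_iUnion U i)
          (mem_iUnion_of_mem j ((hg j).mapsTo hz))
          fun hzi => (hd hji).le_bot ⟨(hg j).mapsTo hz, hzi⟩

end Group

variable {E : Type*} [NormedAddCommGroup E] {Λ : AddSubgroup E} {U : Set E}

theorem infDist_translates_eq_dist (hU : TranslateDisjoint Λ U) {a z : E} {r : ℝ}
    (hball : Metric.ball a r ⊆ U) (hz : z ∈ U)
    (hzr : Metric.infDist z ((· + a) '' Λ) < r) :
    Metric.infDist z ((· + a) '' Λ) = dist z a := by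
  have hne : ((· + a) '' (Λ : Set E)).Nonempty := ⟨_, 0, Λ.zero_mem, rfl⟩
  refine le_antisymm (Metric.infDist_le_dist_of_mem ⟨0, Λ.zero_mem, zero_add a⟩)
    (le_of_forall_gt_imp_ge_of_dense fun ρ hρ => ?_)
  obtain ⟨_, ⟨v, hv, rfl⟩, hd⟩ := (Metric.infDist_lt_iff hne).1 (lt_min hρ hzr)
  have hvz : -v + z ∈ U := hball <| by
    rw [Metric.mem_ball, ← dist_add_left v, add_neg_cancel_left]
    exact hd.trans_le (min_le_right _ _)
  obtain rfl : v = 0 := neg_eq_zero.1 (hU _ (Λ.neg_mem hv) z hz hvz)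
  simp only [zero_add] at hd
  exact (hd.trans_le (min_le_left _ _)).le

theorem exists_isSupportedPush_of_ball_subset [NormedSpace ℝ E] [CompleteSpace E]
    (hU : TranslateDisjoint Λ U)
    {a b : E} {r : ℝ} (hball : Metric.ball a r ⊆ U) (hab : dist a b < r) :
    ∃ g : E ≃ₜ E, IsSupportedPush Λ U g ∧ g a = b := by
  have hr : 0 < r := dist_nonneg.trans_lt hab
  have hv : ‖b - a‖ < r := by rwa [← dist_eq_norm, dist_comm]
  set S : Set E := (· + a) '' (Λ : Set E) with hS
  obtain ⟨g, hg, hiso⟩ := exists_homeomorph_add_tent_smul S hv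
  have hS_add : ∀ v ∈ Λ, (v + ·) '' S = S := fun v hv => by
    ext z
    constructor
    · rintro ⟨_, ⟨w, hw, rfl⟩, rfl⟩
      exact ⟨v + w, Λ.add_mem hv hw, add_assoc v w a⟩
    · rintro ⟨w, hw, rfl⟩
      exact ⟨_, ⟨w - v, Λ.sub_mem hw hv, rfl⟩, by simp; abel⟩
  have hself : ∀ z, r ≤ Metric.infDist z S → g z = z := fun z hz => by
    rw [hg, tent_eq_zero hr hz, zero_smul, add_zero]
  refine ⟨g, ⟨hiso, fun v hv z => ?_, fun z hz => hself z (not_lt.1 fun hlt => ?_),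
    fun z hz => ?_⟩, ?_⟩
  · have htent : tent S r (v + z) = tent S r z := by
      conv_lhs => rw [← hS_add v hv]
      exact tent_image (isometry_add_left v)
    rw [hg, hg, htent, add_assoc]
  · obtain ⟨_, ⟨v, hv, rfl⟩, hd⟩ :=
      (Metric.infDist_lt_iff (⟨_, 0, Λ.zero_mem, rfl⟩ : S.Nonempty)).1 hlt
    refine hz (-v) (Λ.neg_mem hv) (hball ?_)
    rwa [Metric.mem_ball, ← dist_add_left v, add_neg_cancel_left]
  · by_cases hzr : Metric.infDist z S < r
    · have hdist := infDist_translates_eq_dist hU hball hz hzr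
      have htent : tent S r z = 1 - dist z a / r := by rw [tent_of_infDist_le hr hzr.le, hdist]
      have hpos : 0 < tent S r z := by
        rw [htent, sub_pos, div_lt_one hr]
        exact hdist ▸ hzr
      refine hball ?_
      calc dist (g z) a ≤ dist (g z) z + dist z a := dist_triangle _ _ _
        _ = tent S r z * ‖b - a‖ + dist z a := by
            rw [hg, dist_eq_norm, add_sub_cancel_left, norm_smul, Real.norm_of_nonneg hpos.le]
        _ < tent S r z * r + dist z a := by gcongr
        _ = r := by rw [htent]; field_simp; ring
    · rwa [hself z (not_lt.1 hzr)]
  · rw [hg, tent_eq_one (hS ▸ ⟨0, Λ.zero_mem, zero_add a⟩ : a ∈ S), one_smul, add_sub_cancel]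

theorem exists_isSupportedPush [NormedSpace ℝ E] [CompleteSpace E]
    (hU : TranslateDisjoint Λ U) (hUo : IsOpen U)
    (hUc : IsPreconnected U) {a b : E} (ha : a ∈ U) (hb : b ∈ U) :
    ∃ g : E ≃ₜ E, IsSupportedPush Λ U g ∧ g a = b := by
  refine hUc.induction₂' (fun a b => ∃ g : E ≃ₜ E, IsSupportedPush Λ U g ∧ g a = b)
    (fun x hx => ?_) ?_ ha hb
  · obtain ⟨r, hr, hrU⟩ := Metric.isOpen_iff.1 hUo x hx
    filter_upwards [mem_nhdsWithin_of_mem_nhds (Metric.ball_mem_nhds x (half_pos hr))] with y hy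
    refine ⟨exists_isSupportedPush_of_ball_subset hU hrU ?_,
      exists_isSupportedPush_of_ball_subset hU (r := r / 2)
        ((Metric.ball_subset_ball' ?_).trans hrU) hy⟩
    · rw [dist_comm]; exact (Metric.mem_ball.1 hy).trans (half_lt_self hr)
    · linarith [Metric.mem_ball.1 hy]
  · rintro x y z _ _ _ ⟨g, hg, rfl⟩ ⟨h, hh, rfl⟩
    exact ⟨g.trans h, hg.trans hh, rfl⟩

end SupportedPush

section Connectedness

variable {E : Type*} [NormedAddCommGroup E] [NormedSpace ℝ E]

theorem isConnected_ball_diff_center (hE : 1 < Module.rank ℝ E) (p : E) {r : ℝ} (hr : 0 < r) :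
    IsConnected (Metric.ball p r \ {p}) := by
  have himage : OpenPartialHomeomorph.univBall p r '' {0}ᶜ = Metric.ball p r \ {p} := by
    have hinj : Function.Injective (OpenPartialHomeomorph.univBall p r : E → E) :=
      injOn_univ.1 <| by
        simpa using (OpenPartialHomeomorph.univBall p r : OpenPartialHomeomorph E E).injOn
    have hrange : range (OpenPartialHomeomorph.univBall p r : E → E) = Metric.ball p r := by
      rw [← image_univ, ← OpenPartialHomeomorph.univBall_source p r,
        OpenPartialHomeomorph.image_source_eq_target, OpenPartialHomeomorph.univBall_target p hr]
    rw [compl_eq_univ_sdiff, image_sdiff hinj, image_univ, image_singleton, hrange,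
      OpenPartialHomeomorph.univBall_apply_zero]
  rw [← himage]
  exact (isConnected_compl_singleton_of_one_lt_rank hE 0).image _
    (OpenPartialHomeomorph.continuous_univBall p r).continuousOn

theorem isPreconnected_diff_singleton (hE : 1 < Module.rank ℝ E) {U : Set E} (hUo : IsOpen U)
    (hU : IsPreconnected U) (p : E) : IsPreconnected (U \ {p}) := by
  classical
  by_cases hp : p ∈ U
  swap
  · rwa [sdiff_singleton_eq_self hp]
  obtain ⟨r, hr, hrU⟩ := Metric.isOpen_iff.1 hUo p hp
  obtain ⟨⟨w, hw⟩, hball⟩ := isConnected_ball_diff_center hE p hr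
  refine isPreconnected_of_forall_constant fun f hf x hx y hy => ?_
  have hconst : ∀ z ∈ Metric.ball p r, Function.update f p (f w) z = f w := fun z hz => by
    rcases eq_or_ne z p with rfl | hzp
    · simp
    · rw [Function.update_of_ne hzp]
      exact hball.constant (hf.mono (sdiff_subset_sdiff_left hrU)) ⟨hz, hzp⟩ hw
  have hcont : ContinuousOn (Function.update f p (f w)) U := fun z hz => by
    rcases eq_or_ne z p with rfl | hzp
    · refine (continuousAt_const (y := f w)).congr ?_ |>.continuousWithinAt
      filter_upwards [Metric.ball_mem_nhds z hr] with u hu using (hconst u hu).symm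
    · refine (hf.continuousAt ((hUo.sdiff isClosed_singleton).mem_nhds ⟨hz, hzp⟩)).congr ?_
        |>.continuousWithinAt
      filter_upwards [isClosed_singleton.isOpen_compl.mem_nhds hzp] with u hu
      exact (Function.update_of_ne hu _ _).symm
  simpa [Function.update_of_ne hx.2, Function.update_of_ne hy.2] using
    hU.constant hcont hx.1 hy.1

theorem isPreconnected_diff_of_finite (hE : 1 < Module.rank ℝ E) {U P : Set E} (hUo : IsOpen U)
    (hU : IsPreconnected U) (hP : P.Finite) : IsPreconnected (U \ P) := by
  induction P, hP using Set.Finite.induction_on with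
  | empty => rwa [sdiff_empty]
  | @insert a s _ hs ih =>
    rw [← union_singleton, ← sdiff_sdiff]
    exact isPreconnected_diff_singleton hE (hUo.sdiff hs.isClosed) ih a

theorem isPreconnected_thickening {K : Set E} (hK : IsPreconnected K) (δ : ℝ) :
    IsPreconnected (Metric.thickening δ K) := by
  rcases le_or_gt δ 0 with hδ | hδ
  · simp [Metric.thickening_of_nonpos hδ, isPreconnected_empty]
  refine isPreconnected_of_forall_pair fun x hx y hy => ?_
  obtain ⟨x', hx', hxx'⟩ := Metric.mem_thickening_iff.1 hx
  obtain ⟨y', hy', hyy'⟩ := Metric.mem_thickening_iff.1 hy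
  refine ⟨Metric.ball x' δ ∪ K ∪ Metric.ball y' δ, ?_, Or.inl (Or.inl hxx'), Or.inr hyy', ?_⟩
  · exact union_subset (union_subset (Metric.ball_subset_thickening hx' δ)
      (Metric.self_subset_thickening hδ K)) (Metric.ball_subset_thickening hy' δ)
  · exact ((convex_ball x' δ).isPreconnected.union x' (Metric.mem_ball_self hδ) hx' hK).union y'
      (Or.inr hy') (Metric.mem_ball_self hδ) (convex_ball y' δ).isPreconnected

end Connectedness

section Thickening

theorem eventually_disjoint_thickening {X : Type*} [PseudoMetricSpace X] {K L : Set X}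
    (hK : IsCompact K) (hL : IsClosed L) (hKL : Disjoint K L) :
    ∀ᶠ δ in 𝓝[>] (0 : ℝ), Disjoint (Metric.thickening δ K) (Metric.thickening δ L) := by
  obtain ⟨δ, hδ, hd⟩ := hKL.exists_thickenings hK hL
  filter_upwards [Ioo_mem_nhdsGT hδ] with ε hε
  exact hd.mono (Metric.thickening_mono hε.2.le _) (Metric.thickening_mono hε.2.le _)

theorem eventually_mapsTo_compl_thickening {X : Type*} [MetricSpace X] {F : X → X}
    (hF : Continuous F) {K : Set X} (hK : IsCompact K) (hfree : MapsTo F K Kᶜ) :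
    ∀ᶠ δ in 𝓝[>] (0 : ℝ), MapsTo F (Metric.thickening δ K) (Metric.thickening δ K)ᶜ := by
  have hd : Disjoint K (F '' K) :=
    disjoint_left.2 <| by rintro _ hz ⟨w, hw, rfl⟩; exact hfree hw hz
  obtain ⟨δ, hδ, hd⟩ := hd.exists_thickenings hK (hK.image hF).isClosed
  obtain ⟨δ', hδ', hsub⟩ := hK.exists_thickening_subset_open
    (Metric.isOpen_thickening.preimage hF)
    fun z hz => Metric.self_subset_thickening hδ _ (mem_image_of_mem F hz)
  filter_upwards [Ioo_mem_nhdsGT hδ, Ioo_mem_nhdsGT hδ'] with ε hε hε' z hz hFz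
  exact hd.le_bot ⟨Metric.thickening_mono hε.2.le _ hFz,
    hsub (Metric.thickening_mono hε'.2.le _ hz)⟩

open scoped Pointwise in
theorem eventually_translateDisjoint_thickening {E : Type*} [NormedAddCommGroup E]
    {Λ : AddSubgroup E} [DiscreteTopology Λ] {K : Set E} (hK : IsCompact K)
    (hΛ : TranslateDisjoint Λ K) :
    ∀ᶠ δ in 𝓝[>] (0 : ℝ), TranslateDisjoint Λ (Metric.thickening δ K) := by
  have hcl : IsClosed ((Λ : Set E) \ {0}) :=
    isClosed_of_subset_discrete_closed sdiff_subset ⟨‹_›⟩ Λ.isClosed_of_discrete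
  have hd : Disjoint (K - K) ((Λ : Set E) \ {0}) := disjoint_left.2 <| by
    rintro _ ⟨x, hx, y, hy, rfl⟩ ⟨hv, hv0⟩
    exact hv0 (hΛ _ hv y hy (by simpa using hx))
  have hKK : IsCompact (K - K) := sub_eq_add_neg K K ▸ hK.add hK.neg
  obtain ⟨ε, hε, hdε⟩ := ((eventually_disjoint_thickening hKK hcl hd).and
    self_mem_nhdsWithin).exists.imp fun _ h => h.symm
  filter_upwards [Ioo_mem_nhdsGT (half_pos hε)] with δ hδ v hv z hz hvz
  by_contra hv0
  obtain ⟨x, hx, hzx⟩ := Metric.mem_thickening_iff.1 hz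
  obtain ⟨y, hy, hzy⟩ := Metric.mem_thickening_iff.1 hvz
  refine hdε.le_bot ⟨Metric.mem_thickening_iff.2 ⟨y - x, sub_mem_sub hy hx, ?_⟩,
    Metric.self_subset_thickening hε _ ⟨hv, hv0⟩⟩
  calc dist v (y - x) = dist (v + z - z) (y - x) := by rw [add_sub_cancel_right]
    _ ≤ dist (v + z) y + dist z x := dist_sub_sub_le _ _ _ _
    _ < ε := by linarith [hδ.2]

end Thickening

section Homogeneity

variable {E : Type*} [NormedAddCommGroup E] [NormedSpace ℝ E] [CompleteSpace E]

theorem exists_isSupportedPush_mapsTo (hE : 1 < Module.rank ℝ E) {Λ : AddSubgroup E} {U J P : Set E}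
    (hUo : IsOpen U) (hUc : IsPreconnected U) (hU : TranslateDisjoint Λ U) (hJU : J ⊆ U)
    (hJ : J.Infinite) (hP : P.Finite) (hPU : P ⊆ U) :
    ∃ g : E ≃ₜ E, IsSupportedPush Λ U g ∧ MapsTo g P J := by
  induction P, hP using Set.Finite.induction_on with
  | empty => exact ⟨_, .refl Λ U, mapsTo_empty _ _⟩
  | @insert x s hxs hs ih =>
    obtain ⟨g, hg, hgJ⟩ := ih ((subset_insert x s).trans hPU)
    obtain ⟨b, hbJ, hbs⟩ := (hJ.sdiff (hs.image g)).nonempty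
    have hgx : g x ∉ g '' s := fun h => hxs (g.injective.mem_set_image.1 h)
    obtain ⟨h, hh, hhb⟩ := exists_isSupportedPush (hU.mono (sdiff_subset (t := g '' s)))
      (hUo.sdiff (hs.image g).isClosed) (isPreconnected_diff_of_finite hE hUo hUc (hs.image g))
      ⟨hg.mapsTo (hPU (mem_insert x s)), hgx⟩ ⟨hJU hbJ, hbs⟩
    refine ⟨g.trans h, hg.trans (hh.mono hU sdiff_subset), ?_⟩
    rintro y (rfl | hy)
    · rwa [Homeomorph.trans_apply, hhb]
    · rw [Homeomorph.trans_apply, hh.eq_self_of_disjoint hU sdiff_subset (hJU (hgJ hy))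
        fun hc => hc.2 (mem_image_of_mem g hy)]
      exact hgJ hy

theorem exists_fixedPointFree_perturbation {ι : Type*} [Finite ι] {F : E ≃ₜ E}
    (hF : InjIsotopicToId F) (hfix : ∀ z, F z ≠ z) {K : ι → Set E} (hKc : ∀ i, IsCompact (K i))
    (hKp : ∀ i, IsPreconnected (K i)) (hd : Pairwise fun i j => Disjoint (K i) (K j))
    (hfree : ∀ i, MapsTo F (K i) (K i)ᶜ) {a b : ι → E} (ha : ∀ i, a i ∈ K i)
    (hb : ∀ i, b i ∈ K i) :
    ∃ H : E ≃ₜ E, InjIsotopicToId H ∧ (∀ z, H z ≠ z) ∧ ∀ i x, F x = a i → H x = b i := by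
  have hfree' : ∀ᶠ δ in 𝓝[>] (0 : ℝ), ∀ i,
      MapsTo F (Metric.thickening δ (K i)) (Metric.thickening δ (K i))ᶜ :=
    eventually_all.2 fun i => eventually_mapsTo_compl_thickening F.continuous (hKc i) (hfree i)
  have hd' : ∀ᶠ δ in 𝓝[>] (0 : ℝ), Pairwise fun i j =>
      Disjoint (Metric.thickening δ (K i)) (Metric.thickening δ (K j)) :=
    eventually_all.2 fun i => eventually_all.2 fun j => eventually_imp_distrib_left.2 fun hij =>
      eventually_disjoint_thickening (hKc i) (hKc j).isClosed (hd hij)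
  obtain ⟨δ, ⟨hfreeδ, hdδ⟩, hδ⟩ := ((hfree'.and hd').and self_mem_nhdsWithin).exists
  have hsub : ∀ i, K i ⊆ Metric.thickening δ (K i) := fun i => Metric.self_subset_thickening hδ _
  choose g hg hgab using fun i => exists_isSupportedPush
    (translateDisjoint_bot (Metric.thickening δ (K i))) Metric.isOpen_thickening
    (isPreconnected_thickening (hKp i) δ) (hsub i (ha i)) (hsub i (hb i))
  cases nonempty_fintype ι
  obtain ⟨h, hh, heq⟩ := exists_isSupportedPush_eqOn (translateDisjoint_bot _) hdδ hg Finset.univ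
  refine ⟨F.trans h, hh.injIsotopicToId.comp hF, fun z hz => ?_, fun i x hx => ?_⟩
  · by_cases hmem : ∃ i, F z ∈ Metric.thickening δ (K i)
    · obtain ⟨i, hi⟩ := hmem
      have hmaps := (hg i).mapsTo hi
      rw [← heq i (Finset.mem_univ i) hi, ← Homeomorph.trans_apply, hz] at hmaps
      exact hfreeδ i hmaps hi
    · refine hfix z ((hh.eq_self _ fun v hv hmem' => hmem ?_).symm.trans hz)
      rw [AddSubgroup.mem_bot.1 hv, zero_add] at hmem'
      simpa using hmem'
  · rw [Homeomorph.trans_apply, hx, heq i (Finset.mem_univ i) (hsub i (ha i)), hgab]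

theorem exists_fixedPointFree_perturbation_fixing {ι : Type*} [Finite ι] {F : E ≃ₜ E}
    (hF : InjIsotopicToId F) (hfix : ∀ z, F z ≠ z) {K : ι → Set E} (hKc : ∀ i, IsCompact (K i))
    (hKp : ∀ i, IsPreconnected (K i)) (hd : Pairwise fun i j => Disjoint (K i) (K j))
    (hfree : ∀ i, MapsTo F (K i) (K i)ᶜ) {a b : ι → E} (ha : ∀ i, a i ∈ K i)
    (hb : ∀ i, b i ∈ K i) {P : Set E} (hP : P.Finite) (hKP : ∀ i, Disjoint (K i) P) :
    ∃ H : E ≃ₜ E, InjIsotopicToId H ∧ (∀ z, H z ≠ z) ∧ (∀ i x, F x = a i → H x = b i) ∧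
      ∀ x, F x ∈ P → H x = F x := by
  have := hP.to_subtype
  have hdP : ∀ i (p : P), Disjoint (K i) {p.1} := fun i p =>
    (hKP i).mono_right (singleton_subset_iff.2 p.2)
  set L : ι ⊕ P → Set E := Sum.elim K fun p => {p.1}
  have hdL : Pairwise fun i j => Disjoint (L i) (L j) := by
    rintro (i | p) (j | q) hij
    · exact hd (fun h => hij (congrArg _ h))
    · exact hdP i q
    · exact (hdP j p).symm
    · exact disjoint_singleton.2 fun h => hij (congrArg _ (Subtype.ext h))
  obtain ⟨H, hH, hHfix, hHab⟩ := exists_fixedPointFree_perturbation hF hfix (K := L)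
    (a := Sum.elim a Subtype.val) (b := Sum.elim b Subtype.val)
    (Sum.rec hKc fun _ => isCompact_singleton) (Sum.rec hKp fun _ => isPreconnected_singleton)
    hdL (Sum.rec hfree fun p z (hz : z = p) (hz' : F z = p) => hfix z (hz'.trans hz.symm))
    (Sum.rec ha fun _ => rfl) (Sum.rec hb fun _ => rfl)
  exact ⟨H, hH, hHfix, fun i => hHab (.inl i), fun x hx => hHab (.inr ⟨F x, hx⟩) x rfl⟩

end Homogeneity

section TwoPeriodic

theorem exists_continuous_exp_eq {X : Type*} [TopologicalSpace X] [LocallyPathConnectedSpace X]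
    [SimplyConnectedSpace X] {g : X → ℂ} (hg : Continuous g) (h0 : ∀ x, g x ≠ 0) :
    ∃ Θ : X → ℂ, Continuous Θ ∧ ∀ x, Complex.exp (Θ x) = g x := by
  obtain ⟨x⟩ := (inferInstance : Nonempty X)
  obtain ⟨Θ, ⟨-, hΘ⟩, -⟩ := Complex.isCoveringMapOn_exp.existsUnique_continuousMap_lifts ⟨g, hg⟩
    (Complex.exp_log (h0 x)) h0
  exact ⟨Θ, Θ.continuous, congrFun hΘ⟩

theorem eq_of_exp_eq_const {X : Type*} [TopologicalSpace X] [PreconnectedSpace X] {φ : X → ℂ}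
    (hφ : Continuous φ) {w : ℂ} (h : ∀ x, Complex.exp (φ x) = w) (x y : X) : φ x = φ y :=
  Complex.isCoveringMap_exp.const_of_comp hφ (fun a b => Subtype.ext ((h a).trans (h b).symm)) x y

/- If `F` swaps `z` and `F z`, then a continuous argument `Θ t w` of `H t (F w) - H t w` satisfies
`Θ 1 z = Θ 0 (F z) + c` and `Θ 1 (F z) = Θ 0 z + c`, while `Θ t (F z) - Θ t z` is a constant odd
multiple of `πi`. -/
theorem InjIsotopicToId.apply_apply_ne {F : Plane → Plane} (hFc : Continuous F)
    (hF : InjIsotopicToId F) (hfix : ∀ z, F z ≠ z) (z : Plane) : F (F z) ≠ z := by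
  intro hz
  obtain ⟨H, hHc, hHi, hH0, hH1⟩ := hF
  set e : ℝ × Plane → ℂ := fun q =>
    Complex.equivRealProdCLM.symm (H q.1 (F q.2) - H q.1 q.2) with he
  have hec : Continuous e := Complex.equivRealProdCLM.symm.continuous.comp
    ((hHc.comp (continuous_fst.prodMk (hFc.comp continuous_snd))).sub hHc)
  have he0 : ∀ q, e q ≠ 0 := fun q h =>
    hfix _ (hHi _ (sub_eq_zero.1 ((map_eq_zero_iff _ (ContinuousLinearEquiv.injective _)).1 h)))
  obtain ⟨Θ, hΘ, hexp⟩ := exists_continuous_exp_eq hec he0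
  have hshift : Θ (1, z) - Θ (0, F z) = Θ (1, F z) - Θ (0, F (F z)) := by
    refine eq_of_exp_eq_const (φ := fun w => Θ (1, w) - Θ (0, F w)) (by fun_prop)
      (w := 1) (fun w => ?_) z (F z)
    have : e (1, w) = e (0, F w) := by simp only [he, hH0, hH1]
    rw [Complex.exp_sub, hexp, hexp, this, div_self (he0 _)]
  have hneg : ∀ t, Complex.exp (Θ (t, F z) - Θ (t, z)) = -1 := fun t => by
    have : e (t, F z) = -e (t, z) := by simp only [he, hz, ← map_neg, neg_sub]
    rw [Complex.exp_sub, hexp, hexp, this, neg_div, div_self (he0 _)]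
  have htime : Θ (1, F z) - Θ (1, z) = Θ (0, F z) - Θ (0, z) :=
    eq_of_exp_eq_const (φ := fun t : ℝ => Θ (t, F z) - Θ (t, z)) (by fun_prop) hneg 1 0
  have hzero : Θ (0, F z) - Θ (0, z) = 0 := by
    rw [hz] at hshift
    linear_combination (-1 / 2 : ℂ) * hshift - (1 / 2 : ℂ) * htime
  have := hneg 0
  rw [hzero, Complex.exp_zero] at this
  norm_num at this

end TwoPeriodic

section CriticalBall

variable {E : Type*} [NormedAddCommGroup E] {x y y' z w : E} {r : ℝ}

/-- The open ball of radius `r` around `x` is critical for `h`: it is disjoint from its image and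
from its preimage, but its closure contains a point `y` with `h y` on the bounding sphere too. -/
structure IsCriticalBall (h : E → E) (x : E) (r : ℝ) (y : E) : Prop where
  dist_eq : dist y x = r
  dist_apply_eq : dist (h y) x = r
  lt_dist_apply : ∀ z, dist z x < r → r < dist (h z) x
  lt_dist : ∀ z, dist (h z) x < r → r < dist z x

namespace IsCriticalBall

variable {h : E → E}

theorem apply_right_eq (hb : IsCriticalBall h x r y) : dist (h y) x = dist y x :=
  hb.dist_apply_eq.trans hb.dist_eq.symm

theorem center_ne (hb : IsCriticalBall h x r y) (hfix : ∀ z, h z ≠ z) : y ≠ x := by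
  rintro rfl
  exact hfix y (dist_eq_zero.1 (hb.apply_right_eq.trans (dist_self y)))

theorem apply_center_ne (hb : IsCriticalBall h x r y) (hfix : ∀ z, h z ≠ z) : h y ≠ x :=
  dist_pos.1 (hb.apply_right_eq ▸ dist_pos.2 (hb.center_ne hfix))

end IsCriticalBall

variable [NormedSpace ℝ E]

theorem isCompact_segment (x y : E) : IsCompact (segment ℝ x y) := by
  rw [segment_eq_image_lineMap]
  exact isCompact_Icc.image (by fun_prop)

theorem eq_left_or_dist_lt_of_mem_segment (hyx : y ≠ x) (hw : w ∈ segment ℝ y x) :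
    w = y ∨ dist w x < dist y x := by
  rw [segment_eq_image_lineMap] at hw
  obtain ⟨t, ⟨h0, h1⟩, rfl⟩ := hw
  rcases h0.eq_or_lt with rfl | h0
  · exact .inl (AffineMap.lineMap_apply_zero y x)
  · right
    rw [dist_lineMap_right, Real.norm_of_nonneg (sub_nonneg.2 h1)]
    nlinarith [dist_pos.2 hyx]

theorem eq_of_mem_segment_of_mem_segment (hyx : y ≠ x) (hy' : dist y' x = dist y x) (hne : y ≠ y')
    (hz : z ∈ segment ℝ y x) (hz' : z ∈ segment ℝ y' x) : z = x := by
  rw [segment_symm, segment_eq_image'] at hz hz'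
  obtain ⟨t, ⟨ht, -⟩, rfl⟩ := hz
  obtain ⟨t', ⟨ht', -⟩, h⟩ := hz'
  have h : t' • (y' - x) = t • (y - x) := by simpa using h
  have hn := congrArg norm h
  rw [norm_smul, norm_smul, ← dist_eq_norm, ← dist_eq_norm, hy', Real.norm_of_nonneg ht,
    Real.norm_of_nonneg ht'] at hn
  obtain rfl : t' = t := mul_right_cancel₀ (dist_pos.2 hyx).ne' hn
  rcases ht.eq_or_lt with rfl | h0
  · simp
  · exact absurd (sub_left_injective (smul_right_injective E h0.ne' h)).symm hne

theorem mem_closure_ball_of_dist_le (hr : 0 < r) (hw : dist w x ≤ r) :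
    w ∈ closure (Metric.ball x r) := by
  rw [closure_ball x hr.ne']
  exact hw

theorem exists_mem_segment_notMem_segment (hyx : y ≠ x) {U : Set E} (hU : U ∈ 𝓝 x) :
    ∃ x' ∈ segment ℝ y x, x' ∈ U ∧ x ∉ segment ℝ y x' := by
  have hlim : Tendsto (AffineMap.lineMap y x : ℝ → E) (𝓝[<] 1) (𝓝 x) := by
    have : Continuous (AffineMap.lineMap y x : ℝ → E) := by fun_prop
    simpa using (this.tendsto 1).mono_left nhdsWithin_le_nhds
  obtain ⟨t, htU, ht0, ht1⟩ := ((hlim.eventually_mem hU).and (Ioo_mem_nhdsLT one_pos)).exists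
  refine ⟨_, segment_eq_image_lineMap ℝ y x ▸ ⟨t, ⟨ht0.le, ht1.le⟩, rfl⟩, htU, fun hx => ?_⟩
  have hdist := dist_add_dist_of_mem_segment hx
  rw [dist_left_lineMap, Real.norm_of_nonneg ht0.le] at hdist
  nlinarith [dist_pos.2 hyx, dist_nonneg (x := x) (y := AffineMap.lineMap y x t)]

/- The radius is the minimum of `max (dist z x) (dist (h z) x)`. A point inside the ball whose image
is not outside could be moved to make both distances smaller than this minimum. -/
theorem exists_isCriticalBall [ProperSpace E] (h : E ≃ₜ E) (hfix : ∀ z, h z ≠ z) (x : E) :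
    ∃ r y, IsCriticalBall h x r y := by
  set φ : E → ℝ := fun z => max (dist z x) (dist (h z) x)
  obtain ⟨y, hy⟩ : ∃ y, ∀ z, φ y ≤ φ z := by
    refine Continuous.exists_forall_le_of_isBounded (f := φ) (by fun_prop) x
      ((Metric.isBounded_closedBall (x := x) (r := φ x)).subset fun z hz => ?_)
    exact (le_max_left _ _).trans (mem_ofPred_eq ▸ hz)
  set r := φ y
  have hr : 0 < r := by
    refine lt_of_not_ge fun hc => hfix y ?_
    exact (dist_le_zero.1 ((le_max_right _ _).trans hc)).trans
      (dist_le_zero.1 ((le_max_left _ _).trans hc)).symm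
  have hA : ∀ z, dist z x < r → r < dist (h z) x := fun z hz => by
    by_contra! hc
    obtain ⟨w, hw, hwx⟩ := mem_closure_iff.1 (mem_closure_ball_of_dist_le hr hc)
      (h.symm ⁻¹' Metric.ball x r) (Metric.isOpen_ball.preimage h.symm.continuous) (by simpa)
    refine (hy (h.symm w)).not_gt (max_lt hw ?_)
    rwa [h.apply_symm_apply]
  have hB : ∀ z, dist (h z) x < r → r < dist z x := fun z hz => by
    by_contra! hc
    obtain ⟨w, hw, hwx⟩ := mem_closure_iff.1 (mem_closure_ball_of_dist_le hr hc)
      (h ⁻¹' Metric.ball x r) (Metric.isOpen_ball.preimage h.continuous) hz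
    exact (hy w).not_gt (max_lt hwx hw)
  refine ⟨r, y, ⟨?_, ?_, hA, hB⟩⟩
  · exact (le_max_left _ _).antisymm (not_lt.1 fun hc => (hA y hc).not_ge (le_max_right _ _))
  · exact (le_max_right _ _).antisymm (not_lt.1 fun hc => (hB y hc).not_ge (le_max_left _ _))

namespace IsCriticalBall

variable {h : E → E}

theorem eq_or_dist_lt (hb : IsCriticalBall h x r y) (hfix : ∀ z, h z ≠ z)
    (hw : w ∈ segment ℝ y x) : w = y ∨ dist w x < r :=
  hb.dist_eq ▸ eq_left_or_dist_lt_of_mem_segment (hb.center_ne hfix) hw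

theorem eq_apply_or_dist_lt (hb : IsCriticalBall h x r y) (hfix : ∀ z, h z ≠ z)
    (hw : w ∈ segment ℝ (h y) x) : w = h y ∨ dist w x < r :=
  hb.dist_apply_eq ▸ eq_left_or_dist_lt_of_mem_segment (hb.apply_center_ne hfix) hw

theorem notMem_segment (hb : IsCriticalBall h x r y) (hfix : ∀ z, h z ≠ z)
    (hw : w ∈ segment ℝ y x) : h w ∉ segment ℝ y x := fun hw' => by
  rcases hb.eq_or_dist_lt hfix hw, hb.eq_or_dist_lt hfix hw' with ⟨rfl | hlt, heq | hlt'⟩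
  · exact hfix _ heq
  · exact hlt'.ne hb.dist_apply_eq
  · exact (hb.lt_dist_apply w hlt).ne (heq ▸ hb.dist_eq.symm)
  · exact (hb.lt_dist_apply w hlt).asymm hlt'

theorem notMem_segment_apply (hb : IsCriticalBall h x r y) (hfix : ∀ z, h z ≠ z)
    (hw : w ∈ segment ℝ (h y) x) : h w ∉ segment ℝ (h y) x := fun hw' => by
  rcases hb.eq_apply_or_dist_lt hfix hw, hb.eq_apply_or_dist_lt hfix hw' with
    ⟨rfl | hlt, heq | hlt'⟩
  · exact hfix _ heq
  · exact (hb.lt_dist _ hlt').ne hb.dist_apply_eq.symm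
  · exact (hb.lt_dist_apply w hlt).ne (heq ▸ hb.dist_apply_eq.symm)
  · exact (hb.lt_dist_apply w hlt).asymm hlt'

theorem mapsTo_compl_arc (hb : IsCriticalBall h x r y) (hinj : Function.Injective h)
    (hfix : ∀ z, h z ≠ z) (htwo : ∀ w ∈ segment ℝ y x, h (h w) ∉ segment ℝ (h y) x)
    {c : Set E} (hc : c ⊆ segment ℝ y x) (hxc : x ∉ c) :
    MapsTo h (segment ℝ (h y) x ∪ h '' c) (segment ℝ (h y) x ∪ h '' c)ᶜ := by
  rintro z (hz | ⟨w, hw, rfl⟩) (hz' | ⟨w', hw', hz'⟩)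
  · exact hb.notMem_segment_apply hfix hz hz'
  · obtain rfl := hinj hz'
    exact hxc (eq_of_mem_segment_of_mem_segment (hb.center_ne hfix) hb.apply_right_eq
      (hfix y).symm (hc hw') hz ▸ hw')
  · exact htwo w (hc hw) hz'
  · exact hb.notMem_segment hfix (hc hw) (hinj hz' ▸ hc hw')

end IsCriticalBall

end CriticalBall

section Brouwer

variable {h : Plane ≃ₜ Plane} {x y : Plane} {r : ℝ}

theorem IsCriticalBall.apply_apply_notMem_segment (hb : IsCriticalBall h x r y)
    (hI : InjIsotopicToId h) (hfix : ∀ z, h z ≠ z) {w : Plane} (hw : w ∈ segment ℝ y x) :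
    h (h w) ∉ segment ℝ (h y) x := fun hv => by
  have hwr : dist w x < r := by
    rcases hb.eq_or_dist_lt hfix hw with rfl | hlt
    · rcases hb.eq_apply_or_dist_lt hfix hv with heq | hlt
      · exact absurd heq (hfix _)
      · exact absurd (hb.lt_dist _ hlt) hb.dist_apply_eq.not_gt
    · exact hlt
  have hwr' : r < dist (h w) x := hb.lt_dist_apply w hwr
  have hvr : dist (h (h w)) x < r := by
    rcases hb.eq_apply_or_dist_lt hfix hv with heq | hlt
    · exact absurd hb.dist_eq (h.injective heq ▸ hwr'.ne')
    · exact hlt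
  have hball : segment ℝ (h (h w)) w ⊆ Metric.ball x r :=
    (convex_ball x r).segment_subset hvr hwr
  obtain ⟨H, hH, hHfix, hHab, hHP⟩ := exists_fixedPointFree_perturbation_fixing (ι := Unit) hI hfix
    (K := fun _ => segment ℝ (h (h w)) w) (fun _ => isCompact_segment _ _)
    (fun _ => (convex_segment _ _).isPreconnected) (fun _ _ h => absurd rfl h)
    (fun _ z hz hz' => (hb.lt_dist_apply z (hball hz)).asymm (hball hz'))
    (fun _ => left_mem_segment _ _ _) (fun _ => right_mem_segment _ _ _) (finite_singleton (h w))
    (fun _ => disjoint_singleton_right.2 fun hw => hwr'.asymm (hball hw))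
  refine hH.apply_apply_ne H.continuous hHfix w ?_
  rw [hHP w rfl, hHab () (h w) rfl]

theorem iterate_eq_iterate_of_eqOn {X : Type*} {f g : X → X} {x : X} {n : ℕ}
    (h : ∀ k < n, g (f^[k] x) = f (f^[k] x)) : g^[n] x = f^[n] x := by
  induction n with
  | zero => rfl
  | succ n ih =>
    rw [Function.iterate_succ_apply', ih fun k hk => h k (hk.trans n.lt_succ_self),
      h n n.lt_succ_self, Function.iterate_succ_apply']

/- With `i` the first time `≥ 3` at which the orbit of `x` meets `c`, the perturbed map sends
`h^[i - 1] x` to `h x'`, which it sends to `h^[2] x`. -/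
theorem exists_shorter_period_of_arc (hI : InjIsotopicToId h) (hfix : ∀ z, h z ≠ z) {n : ℕ}
    (hn : 3 ≤ n) (hx : h^[n] x = x) {c : Set Plane} (hcc : IsCompact c) (hcp : IsPreconnected c)
    (hcfree : MapsTo h c cᶜ) (hxc : x ∈ c) {x' : Plane} (hxc' : h x' ∈ c) {K : Set Plane}
    (hKc : IsCompact K) (hKp : IsPreconnected K) (hKfree : MapsTo h K Kᶜ)
    (hK : h (h x') ∈ K) (hK' : h (h x) ∈ K) (hd : Disjoint c K)
    (hKx : ∀ j, 3 ≤ j → j < n → h^[j] x ∉ K) :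
    ∃ m, 1 ≤ m ∧ m < n ∧ ∃ H : Plane ≃ₜ Plane,
      InjIsotopicToId H ∧ (∀ z, H z ≠ z) ∧ ∃ z, H^[m] z = z := by
  have hex : ∃ i, 3 ≤ i ∧ h^[i] x ∈ c := ⟨n, hn, hx.symm ▸ hxc⟩
  classical
  obtain ⟨i, ⟨hi3, hic⟩, hin, himin⟩ : ∃ i, (3 ≤ i ∧ h^[i] x ∈ c) ∧ i ≤ n ∧
      ∀ j < i, ¬ (3 ≤ j ∧ h^[j] x ∈ c) :=
    ⟨Nat.find hex, Nat.find_spec hex, Nat.find_min' hex ⟨hn, hx.symm ▸ hxc⟩,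
      fun j => Nat.find_min hex⟩
  obtain ⟨k, rfl⟩ := Nat.exists_eq_add_of_le' hi3
  obtain ⟨H, hH, hHfix, hHab, hHP⟩ := exists_fixedPointFree_perturbation_fixing hI hfix
    (K := fun b => cond b c K) (Bool.forall_bool.2 ⟨hKc, hcc⟩) (Bool.forall_bool.2 ⟨hKp, hcp⟩)
    (pairwise_disjoint_on_bool.2 hd) (Bool.forall_bool.2 ⟨hKfree, hcfree⟩)
    (a := fun b => cond b (h^[k + 3] x) (h (h x'))) (b := fun b => cond b (h x') (h (h x)))
    (Bool.forall_bool.2 ⟨hK, hic⟩) (Bool.forall_bool.2 ⟨hK', hxc'⟩)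
    ((finite_Ico 3 (k + 3)).image fun j => h^[j] x) (Bool.forall_bool.2
      ⟨disjoint_right.2 (forall_mem_image.2 fun j hj => hKx j hj.1 (hj.2.trans_le hin)),
        disjoint_right.2 (forall_mem_image.2 fun j hj hjc => himin j hj.2 ⟨hj.1, hjc⟩)⟩)
  refine ⟨k + 2, by omega, by omega, H, hH, hHfix, h (h x), ?_⟩
  have horbit : H^[k] (h (h x)) = h^[k] (h (h x)) := iterate_eq_iterate_of_eqOn fun j hj =>
    hHP _ ⟨j + 3, ⟨by omega, by omega⟩, by
      simp only [← Function.iterate_succ_apply, ← Function.iterate_succ_apply' (⇑h)]⟩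
  rw [add_comm, Function.iterate_add_apply, horbit]
  have hclose : H (h^[k] (h (h x))) = h x' := hHab true _ (by
    simp only [cond_true, ← Function.iterate_succ_apply, ← Function.iterate_succ_apply' (⇑h)])
  change H (H _) = _
  rw [hclose, hHab false _ rfl, cond_false]

theorem exists_shorter_period (hI : InjIsotopicToId h) (hfix : ∀ z, h z ≠ z) {n : ℕ}
    (hn : 3 ≤ n) (hx : h^[n] x = x) (hmin : ∀ m z, 1 ≤ m → m < n → h^[m] z ≠ z) :
    ∃ m, 1 ≤ m ∧ m < n ∧ ∃ H : Plane ≃ₜ Plane,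
      InjIsotopicToId H ∧ (∀ z, H z ≠ z) ∧ ∃ z, H^[m] z = z := by
  obtain ⟨r, y, hb⟩ := exists_isCriticalBall h hfix x
  have htwo : ∀ w ∈ segment ℝ y x, h (h w) ∉ segment ℝ (h y) x := fun w =>
    hb.apply_apply_notMem_segment hI hfix
  set L := segment ℝ (h y) x ∪ h '' segment ℝ y x ∪ (fun j => h^[j] x) '' Ico 3 n
  have hL : IsClosed L := ((isCompact_segment _ _).isClosed.union
    ((isCompact_segment _ _).image h.continuous).isClosed).union
      ((finite_Ico 3 n).image _).isClosed
  have hxL : h (h x) ∉ L := by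
    rintro ((hx2 | ⟨w, hw, hx2⟩) | ⟨j, hj, hx2⟩)
    · exact htwo x (right_mem_segment _ _ _) hx2
    · exact hb.notMem_segment hfix (right_mem_segment _ _ _) (h.injective hx2 ▸ hw)
    · obtain ⟨l, rfl⟩ := Nat.exists_eq_add_of_le' hj.1
      exact hmin (l + 1) (h (h x)) (by omega) (by have := hj.2; omega) hx2
  have hLε := eventually_nhdsWithin_of_eventually_nhds
    (s := Ioi 0) (eventually_ball_subset (hL.isOpen_compl.mem_nhds hxL))
  have hfreeε := eventually_mapsTo_compl_thickening h.continuous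
    (isCompact_singleton (x := h (h x))) (by simpa using hfix _)
  obtain ⟨ε, ⟨hεL, hεfree⟩, hε⟩ := ((hLε.and hfreeε).and self_mem_nhdsWithin).exists
  rw [Metric.thickening_singleton] at hεfree
  obtain ⟨x', hx', hx'ε, hxx'⟩ := exists_mem_segment_notMem_segment (hb.center_ne hfix)
    ((h.continuous.comp h.continuous).tendsto x (Metric.ball_mem_nhds _ hε))
  have hKε : segment ℝ (h (h x')) (h (h x)) ⊆ Metric.ball (h (h x)) ε :=
    (convex_ball _ _).segment_subset hx'ε (Metric.mem_ball_self hε)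
  have hsub : segment ℝ y x' ⊆ segment ℝ y x :=
    (convex_segment y x).segment_subset (left_mem_segment _ _ _) hx'
  refine exists_shorter_period_of_arc hI hfix hn hx
    ((isCompact_segment _ _).union ((isCompact_segment _ _).image h.continuous))
    (.union (h y) (left_mem_segment _ _ _) (mem_image_of_mem h (left_mem_segment _ _ _))
      (convex_segment _ _).isPreconnected
      ((convex_segment _ _).isPreconnected.image _ h.continuous.continuousOn))
    (hb.mapsTo_compl_arc h.injective hfix htwo hsub hxx') (.inl (right_mem_segment _ _ _))
    (.inr (mem_image_of_mem h (right_mem_segment _ _ _))) (isCompact_segment _ _)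
    (convex_segment _ _).isPreconnected (hεfree.mono hKε (compl_subset_compl.2 hKε))
    (left_mem_segment _ _ _) (right_mem_segment _ _ _) ?_ fun j hj3 hjn hjK =>
      hεL (hKε hjK) (.inr ⟨j, ⟨hj3, hjn⟩, rfl⟩)
  exact disjoint_left.2 fun z hz hzK =>
    hεL (hKε hzK) (.inl (union_subset_union_right _ (image_mono hsub) hz))

theorem iterate_ne_self (n : ℕ) (hn : 1 ≤ n) (h : Plane ≃ₜ Plane) (hI : InjIsotopicToId h)
    (hfix : ∀ z, h z ≠ z) (x : Plane) : h^[n] x ≠ x := by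
  induction n using Nat.strong_induction_on generalizing h x with
  | _ n ih =>
    intro hx
    obtain rfl | rfl | hn3 : n = 1 ∨ n = 2 ∨ 3 ≤ n := by omega
    · exact hfix x hx
    · exact hI.apply_apply_ne h.continuous hfix x hx
    · obtain ⟨m, hm, hmn, H, hH, hHfix, z, hz⟩ := exists_shorter_period hI hfix hn3 hx
        fun m z hm hmn => ih m hmn hm h hI hfix z
      exact ih m hmn hm H hH hHfix z hz

end Brouwer

section ChordlessCycle

variable {α : Type*} {R : α → α → Prop} {a b : α}

theorem exists_chain_of_transGen (h : Relation.TransGen R a b) :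
    ∃ (n : ℕ) (c : ℕ → α), c 0 = a ∧ c (n + 1) = b ∧ ∀ i ≤ n, R (c i) (c (i + 1)) := by
  induction h using Relation.TransGen.head_induction_on with
  | @single a hab =>
    exact ⟨0, fun m => m.casesOn a fun _ => b, rfl, rfl, fun i hi => by
      obtain rfl := Nat.le_zero.1 hi; exact hab⟩
  | @head a d had _ ih =>
    obtain ⟨n, c, h0, hn, hc⟩ := ih
    refine ⟨n + 1, fun m => m.casesOn a c, rfl, hn, fun i hi => ?_⟩
    cases i with
    | zero => simpa [h0] using had
    | succ i => exact hc i (by omega)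

theorem exists_shortest_cycle (h : Relation.TransGen R b b) :
    ∃ (n : ℕ) (c : ℕ → α), c (n + 1) = c 0 ∧ (∀ i ≤ n, R (c i) (c (i + 1))) ∧
      ∀ (m : ℕ) (d : ℕ → α), d (m + 1) = d 0 → (∀ i ≤ m, R (d i) (d (i + 1))) → n ≤ m := by
  classical
  have hcycle : ∃ (n : ℕ) (c : ℕ → α), c (n + 1) = c 0 ∧ ∀ i ≤ n, R (c i) (c (i + 1)) := by
    obtain ⟨n, c, h0, hn, hc⟩ := exists_chain_of_transGen h
    exact ⟨n, c, hn.trans h0.symm, hc⟩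
  obtain ⟨c, hc0, hc⟩ := Nat.find_spec hcycle
  exact ⟨Nat.find hcycle, c, hc0, hc, fun m d h1 h2 => Nat.find_min' hcycle ⟨d, h1, h2⟩⟩

theorem exists_chordless_cycle (h : Relation.TransGen R b b) :
    ∃ (n : ℕ) (c : Fin (n + 1) → α), ∀ i j, R (c i) (c j) ↔ j = i + 1 := by
  obtain ⟨n, c, hc0, hc, hmin⟩ := exists_shortest_cycle h
  refine ⟨n, fun i => c i, fun i j => ⟨fun hij => ?_, ?_⟩⟩
  · rw [Fin.ext_iff, Fin.val_add_one]
    rcases le_or_gt (j : ℕ) i with hji | hji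
    · have hback := hmin (i - j) (fun m => if m ≤ i - j then c (j + m) else c j) (by simp)
        fun m hm => by
          rcases hm.lt_or_eq with hm' | rfl
          · simpa [hm, Nat.succ_le_of_lt hm', add_assoc] using hc (j + m) (by omega)
          · simpa [Nat.add_sub_cancel' hji] using hij
      rw [if_pos (Fin.ext (by simp; omega))]
      omega
    · have hskip := hmin (n - (j - i - 1)) (fun m => if m ≤ i then c m else c (m + (j - i - 1)))
        (by
          have h1 : ¬ n - (j - i - 1 : ℕ) + 1 ≤ (i : ℕ) := by omega
          have h2 : n - (j - i - 1 : ℕ) + 1 + (j - i - 1 : ℕ) = n + 1 := by omega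
          simp [h1, h2, hc0])
        fun m hm => by
          rcases lt_trichotomy m i with hm' | rfl | hm'
          · simpa [hm'.le, Nat.succ_le_of_lt hm'] using hc m (by omega)
          · simpa [show (i : ℕ) + 1 + (j - i - 1) = j by omega] using hij
          · have h1 : ¬ m ≤ (i : ℕ) := by omega
            have h2 : ¬ m + 1 ≤ (i : ℕ) := by omega
            simpa [h1, h2, add_right_comm] using hc (m + (j - i - 1)) (by omega)
      rw [if_neg (fun h => by subst h; simp at hji; omega)]
      omega
  · rintro rfl
    have hi := hc i (by omega)
    change R (c i) (c (i + 1 : Fin (n + 1)))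
    rw [Fin.val_add_one]
    split_ifs with h
    · subst h
      simpa [hc0] using hi
    · exact hi

end ChordlessCycle

section ClosingLemma

theorem exists_iterate_eq_self_of_cyclic {α : Type*} {f : α → α} {n : ℕ} {z : Fin (n + 1) → α}
    (h : ∀ k, ∃ m, 1 ≤ m ∧ f^[m] (z (k - 1)) = z k) : ∃ m, 1 ≤ m ∧ f^[m] (z 0) = z 0 := by
  have hreach : ∀ k, ∃ m, f^[m] (z 0) = z k := fun k => by
    induction k using Fin.induction with
    | zero => exact ⟨0, rfl⟩
    | succ k ih =>
      obtain ⟨m, hm⟩ := ih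
      obtain ⟨l, -, hl⟩ := h k.succ
      refine ⟨l + m, ?_⟩
      rw [Function.iterate_add_apply, hm, ← hl, ← Fin.coeSucc_eq_succ, add_sub_cancel_right]
  obtain ⟨m, hm⟩ := hreach (0 - 1)
  obtain ⟨l, hl1, hl⟩ := h 0
  exact ⟨l + m, by omega, by rw [Function.iterate_add_apply, hm, hl]⟩

/-- A free path from `F (z k)` to `z (k + 1)` lets one perturb `F` so that `z k` is sent to
`z (k + 1)`; two steps of the orbit are traversed where `F (F (z k)) = z (k + 1)` already. -/
theorem no_closed_pseudo_orbit {F : Plane ≃ₜ Plane} (hF : InjIsotopicToId F)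
    (hfix : ∀ z, F z ≠ z) {n : ℕ} {z : Fin (n + 1) → Plane} {B : Fin (n + 1) → Set Plane}
    (hd : Pairwise fun i j => Disjoint (B i) (B j))
    (hB : ∀ k, JoinedIn (B k) (F (z (k - 1))) (z k))
    (hfree : ∀ k, F (F (z (k - 1))) = z k ∨ MapsTo F (B k) (B k)ᶜ) : False := by
  classical
  choose γ hγ using hB
  let N := {k // F (F (z (k - 1))) ≠ z k}
  have hsub : ∀ k, range (γ k) ⊆ B k := fun k => range_subset_iff.2 (hγ k)
  set P : Set Plane := ⋃ k ∈ {k | F (F (z (k - 1))) = z k}, {F (z (k - 1)), z k}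
  have hP : P.Finite := (toFinite _).biUnion fun k _ => toFinite _
  have hPmem : ∀ k, F (F (z (k - 1))) = z k → F (z (k - 1)) ∈ P ∧ z k ∈ P := fun k hk =>
    ⟨mem_biUnion hk (.inl rfl), mem_biUnion hk (.inr rfl)⟩
  have hPB : ∀ i : N, Disjoint (range (γ i)) P := fun i => by
    refine disjoint_iUnion₂_right.2 fun k hk => (hd fun h : i.1 = k => i.2 (h ▸ hk)).mono
      (hsub i) (insert_subset ?_ (singleton_subset_iff.2 ?_))
    · simpa using hγ k 0
    · simpa using hγ k 1
  obtain ⟨H, hH, hHfix, hHγ, hHP⟩ := exists_fixedPointFree_perturbation_fixing hF hfix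
    (K := fun i : N => range (γ i)) (fun i => isCompact_range (γ i).continuous)
    (fun i => isPreconnected_range (γ i).continuous)
    (fun i j hij => (hd fun h => hij (Subtype.ext h)).mono (hsub i) (hsub j))
    (fun i => ((hfree i).resolve_left i.2).mono (hsub i) (compl_subset_compl.2 (hsub i)))
    (a := fun i => F (z (i - 1))) (b := fun i => z i)
    (fun i => ⟨0, by simp⟩) (fun i => ⟨1, by simp⟩) hP hPB
  have hstep : ∀ k, ∃ m, 1 ≤ m ∧ H^[m] (z (k - 1)) = z k := fun k => by
    by_cases hk : F (F (z (k - 1))) = z k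
    · refine ⟨2, one_le_two, ?_⟩
      change H (H (z (k - 1))) = z k
      rw [hHP _ (hPmem k hk).1, hHP _ (hk ▸ (hPmem k hk).2), hk]
    · exact ⟨1, le_rfl, hHγ ⟨k, hk⟩ _ rfl⟩
  obtain ⟨m, hm, hmz⟩ := exists_iterate_eq_self_of_cyclic hstep
  exact iterate_ne_self m hm H hH hHfix _ hmz

end ClosingLemma

/-- Convex cells with disjoint interiors, whose interiors are free (disjoint from their image under
`F`), and such that no point of a common edge of two cells is sent into such an edge. -/
structure FreeCells (F : Plane → Plane) (C : Set (Set Plane)) : Prop where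
  convex : ∀ b ∈ C, Convex ℝ b
  isClosed : ∀ b ∈ C, IsClosed b
  nonempty_interior : ∀ b ∈ C, (interior b).Nonempty
  disjoint_interior : C.PairwiseDisjoint interior
  mapsTo_interior : ∀ b ∈ C, MapsTo F (interior b) (interior b)ᶜ
  notMem_inter : ∀ b ∈ C, ∀ b' ∈ C, b ≠ b' → ∀ z ∈ b ∩ b', F z ∉ b ∩ b'

/-- `F` sends some point of the cell `b` into the different cell `b'` of `C`. -/
def CellArrow (F : Plane → Plane) (C : Set (Set Plane)) (b b' : Set Plane) : Prop :=
  b ∈ C ∧ b' ∈ C ∧ b ≠ b' ∧ ∃ z ∈ b, F z ∈ b'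

namespace FreeCells

variable {F : Plane ≃ₜ Plane} {C : Set (Set Plane)} {b b' : Set Plane} {z : Plane}

theorem subset_closure_interior (h : FreeCells F C) (hb : b ∈ C) : b ⊆ closure (interior b) := by
  rw [(h.convex b hb).closure_interior_eq_closure_of_nonempty_interior (h.nonempty_interior b hb)]
  exact subset_closure

theorem disjoint_interior_left (h : FreeCells F C) (hb : b ∈ C) (hb' : b' ∈ C) (hne : b ≠ b') :
    Disjoint (interior b) b' :=
  ((h.disjoint_interior hb hb' hne).closure_right isOpen_interior).mono_right
    (h.subset_closure_interior hb')

theorem mapsTo_interior_compl (h : FreeCells F C) (hb : b ∈ C) : MapsTo F (interior b) bᶜ := by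
  have hd : Disjoint (F '' interior b) (interior b) :=
    disjoint_left.2 <| by rintro _ ⟨z, hz, rfl⟩; exact h.mapsTo_interior b hb hz
  have hd' := (hd.closure_right (F.isOpenMap _ isOpen_interior)).mono_right
    (h.subset_closure_interior hb)
  exact fun z hz => disjoint_left.1 hd' (mem_image_of_mem F hz)

theorem mapsTo_compl_interior (h : FreeCells F C) (hb : b ∈ C) : MapsTo F b (interior b)ᶜ := by
  have hd : Disjoint (F ⁻¹' interior b) (interior b) :=
    disjoint_left.2 fun z hz hz' => h.mapsTo_interior b hb hz' hz
  have hd' := (hd.closure_right (isOpen_interior.preimage F.continuous)).mono_right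
    (h.subset_closure_interior hb)
  exact fun z hz hFz => disjoint_left.1 hd' hFz hz

theorem joinedIn_interior_union (h : FreeCells F C) (hb : b ∈ C) {u v : Plane} (hu : u ∈ b)
    (hv : v ∈ b) : JoinedIn (interior b ∪ {u, v}) u v := by
  obtain ⟨m, hm⟩ := h.nonempty_interior b hb
  have hjoin : ∀ w ∈ ({u, v} : Set Plane), JoinedIn (interior b ∪ {u, v}) m w := fun w hw => by
    have hwb : w ∈ b := by rcases hw with rfl | rfl <;> assumption
    refine .of_segment_subset ?_
    rw [← insert_endpoints_openSegment]
    exact insert_subset (.inl hm) (insert_subset (.inr hw)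
      (((h.convex b hb).openSegment_interior_self_subset_interior hm hwb).trans
        subset_union_left))
  exact (hjoin u (.inl rfl)).symm.trans (hjoin v (.inr rfl))

theorem mapsTo_interior_union (h : FreeCells F C) (hfix : ∀ z, F z ≠ z) (hb : b ∈ C)
    {u v : Plane} (hu : u ∈ b) (hv : v ∈ b) (huv : F u ≠ v) (hvu : F v ≠ u) :
    MapsTo F (interior b ∪ {u, v}) (interior b ∪ {u, v})ᶜ := by
  have huvb : {u, v} ⊆ b := insert_subset hu (singleton_subset_iff.2 hv)
  rintro w (hw | hw) (hFw | hFw)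
  · exact h.mapsTo_interior b hb hw hFw
  · exact h.mapsTo_interior_compl hb hw (huvb hFw)
  · exact h.mapsTo_compl_interior hb (huvb hw) hFw
  · rcases hw with rfl | rfl <;> rcases hFw with hFw | hFw
    exacts [hfix _ hFw, huv hFw, hvu hFw, hfix _ hFw]

end FreeCells

section Acyclic

variable {F : Plane ≃ₜ Plane} {C : Set (Set Plane)} {n : ℕ} {c : Fin (n + 1) → Set Plane}
  {z : Fin (n + 1) → Plane}

theorem eq_add_one_of_chordless (hc : ∀ i j, CellArrow F C (c i) (c j) ↔ j = i + 1)
    {i j : Fin (n + 1)} (hij : i ≠ j) {w : Plane} (hw : w ∈ c i) (hFw : F w ∈ c j) :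
    j = i + 1 := by
  have hmem : ∀ i, c i ∈ C := fun i => ((hc i _).2 rfl).1
  have hinj : Function.Injective c := fun i j h => by
    have := (hc j (i + 1)).1 (h ▸ (hc i _).2 rfl)
    exact add_right_cancel this
  exact (hc i j).1 ⟨hmem i, hmem j, hinj.ne hij, w, hw, hFw⟩

theorem FreeCells.injective_of_chordless (h : FreeCells F C)
    (hc : ∀ i j, CellArrow F C (c i) (c j) ↔ j = i + 1) (hz : ∀ i, z i ∈ c i)
    (hFz : ∀ i, F (z i) ∈ c (i + 1)) : Function.Injective z := by
  intro i j hij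
  by_contra hne
  have succ_eq : ∀ i j, i ≠ j → z i = z j → i = j + 1 := fun i j hne hij => by
    by_contra h'
    exact hne (add_right_cancel
      (eq_add_one_of_chordless hc h' (hz i) (hij ▸ hFz j : F (z i) ∈ c (j + 1)))).symm
  have hi := succ_eq i j hne hij
  have hj := succ_eq j i (Ne.symm hne) hij.symm
  obtain ⟨hiC, hjC, hne', -⟩ := (hc i j).2 hj
  refine h.notMem_inter _ hiC _ hjC hne' (z i) ⟨hz i, hij ▸ hz j⟩ ⟨?_, hj ▸ hFz i⟩
  rw [hij, congrArg c hi]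
  exact hFz j

/-- The pieces `interior b ∪ {F z, z'}` of the cells of a chordless cycle are disjoint, so the
closing lemma applies to them. -/
theorem FreeCells.not_transGen (h : FreeCells F C) (hF : InjIsotopicToId F)
    (hfix : ∀ z, F z ≠ z) (b : Set Plane) : ¬ Relation.TransGen (CellArrow F C) b b := by
  intro hb
  obtain ⟨n, c, hc⟩ := exists_chordless_cycle hb
  have harrow : ∀ i, CellArrow F C (c i) (c (i + 1)) := fun i => (hc i _).2 rfl
  have hmem : ∀ i, c i ∈ C := fun i => (harrow i).1
  choose z hz hFz using fun i => (harrow i).2.2.2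
  have hz_inj : Function.Injective z := h.injective_of_chordless hc hz hFz
  have hFz' : ∀ i, F (z (i - 1)) ∈ c i := fun i => by simpa using hFz (i - 1)
  have hFz_ne : ∀ i j, i ≠ j → F (z (i - 1)) ≠ z j := fun i j hij heq => by
    by_cases hj : i - 1 = j
    · exact hfix _ (hj ▸ heq)
    · exact hij (by simpa using (eq_add_one_of_chordless hc hj (hz _) (heq ▸ hz j)).symm)
  set B : Fin (n + 1) → Set Plane := fun i => interior (c i) ∪ {F (z (i - 1)), z i}
  have hpair : ∀ i, {F (z (i - 1)), z i} ⊆ c i := fun i =>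
    insert_subset (hFz' i) (singleton_subset_iff.2 (hz i))
  have hB : Pairwise fun i j => Disjoint (B i) (B j) := fun i j hij => by
    have hcne : c i ≠ c j := fun he => hij <| add_right_cancel
      ((hc i _).1 (he ▸ harrow j)).symm
    have hij' : i - 1 ≠ j - 1 := fun he => hij (sub_left_injective he)
    refine disjoint_union_left.2 ⟨disjoint_union_right.2 ⟨h.disjoint_interior (hmem i) (hmem j)
      hcne, (h.disjoint_interior_left (hmem i) (hmem j) hcne).mono_right (hpair j)⟩,
      disjoint_union_right.2 ⟨((h.disjoint_interior_left (hmem j) (hmem i) hcne.symm).mono_right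
        (hpair i)).symm, disjoint_left.2 ?_⟩⟩
    rintro w (rfl | rfl) (hw | hw)
    exacts [hij' (hz_inj (F.injective hw)), hFz_ne i j hij hw, hFz_ne j i hij.symm hw.symm,
      hij (hz_inj hw)]
  refine no_closed_pseudo_orbit hF hfix hB
    (fun i => h.joinedIn_interior_union (hmem i) (hFz' i) (hz i)) fun i => or_iff_not_imp_left.2
    fun hi => h.mapsTo_interior_union hfix (hmem i) (hFz' i) (hz i) hi fun heq => ?_
  have := hz_inj (F.injective heq)
  exact (harrow (i - 1)).2.2.1 (by rw [sub_add_cancel, ← this])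

end Acyclic

section CutSet

/-- A locally finite set of cuts of the line into half-open intervals of length at most `1`. -/
structure IsCutSet (D : Set ℝ) : Prop where
  finite_inter_Icc : ∀ a b, (D ∩ Icc a b).Finite
  nonempty_inter_Ioc : ∀ x, (D ∩ Ioc x (x + 1)).Nonempty

/-- The left end of the interval of the partition cut out by `D` that contains `x`. -/
def cutBelow (D : Set ℝ) (x : ℝ) : ℝ := sSup (D ∩ Iic x)

/-- The right end of the interval of the partition cut out by `D` that contains `x`. -/
def cutAbove (D : Set ℝ) (x : ℝ) : ℝ := sInf (D ∩ Ioi x)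

variable {D : Set ℝ} {x y d e : ℝ}

theorem cutBelow_eq (hd : d ∈ D) (hgap : ∀ z ∈ D, z ≤ d ∨ e ≤ z) (hx : x ∈ Ico d e) :
    cutBelow D x = d :=
  IsGreatest.csSup_eq ⟨⟨hd, hx.1⟩, fun z hz => (hgap z hz.1).resolve_right
    fun h => (hx.2.trans_le h).not_ge hz.2⟩

theorem cutAbove_eq (he : e ∈ D) (hgap : ∀ z ∈ D, z ≤ d ∨ e ≤ z) (hx : x ∈ Ico d e) :
    cutAbove D x = e :=
  IsLeast.csInf_eq ⟨⟨he, hx.2⟩, fun z hz => (hgap z hz.1).resolve_left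
    fun h => (h.trans hx.1).not_gt hz.2⟩

namespace IsCutSet

theorem isGreatest_cutBelow (hD : IsCutSet D) (x : ℝ) :
    IsGreatest (D ∩ Iic x) (cutBelow D x) := by
  have hne : (D ∩ Icc (x - 1) x).Nonempty := by
    obtain ⟨d, hd, h1, h2⟩ := hD.nonempty_inter_Ioc (x - 1)
    exact ⟨d, hd, h1.le, by linarith⟩
  obtain ⟨d, ⟨hd, hdx⟩, hmax⟩ := exists_max_image _ id (hD.finite_inter_Icc (x - 1) x) hne
  have hgreat : IsGreatest (D ∩ Iic x) d := ⟨⟨hd, hdx.2⟩, fun e he =>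
    (le_total (x - 1) e).elim (fun h => hmax e ⟨he.1, h, he.2⟩) fun h => h.trans hdx.1⟩
  rwa [cutBelow, hgreat.csSup_eq]

theorem isLeast_cutAbove (hD : IsCutSet D) (x : ℝ) : IsLeast (D ∩ Ioi x) (cutAbove D x) := by
  have hfin : (D ∩ Ioc x (x + 1)).Finite :=
    (hD.finite_inter_Icc x (x + 1)).subset (inter_subset_inter_right _ Ioc_subset_Icc_self)
  obtain ⟨d, ⟨hd, hdx⟩, hmin⟩ := exists_min_image _ id hfin (hD.nonempty_inter_Ioc x)
  have hleast : IsLeast (D ∩ Ioi x) d := ⟨⟨hd, hdx.1⟩, fun e he =>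
    (le_total e (x + 1)).elim (fun h => hmin e ⟨he.1, he.2, h⟩) fun h => hdx.2.trans h⟩
  rwa [cutAbove, hleast.csInf_eq]

theorem cutBelow_mem (hD : IsCutSet D) (x : ℝ) : cutBelow D x ∈ D :=
  (hD.isGreatest_cutBelow x).1.1

theorem cutAbove_mem (hD : IsCutSet D) (x : ℝ) : cutAbove D x ∈ D := (hD.isLeast_cutAbove x).1.1

theorem cutBelow_le (hD : IsCutSet D) (x : ℝ) : cutBelow D x ≤ x := (hD.isGreatest_cutBelow x).1.2

theorem lt_cutAbove (hD : IsCutSet D) (x : ℝ) : x < cutAbove D x := (hD.isLeast_cutAbove x).1.2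

theorem cutBelow_lt_cutAbove (hD : IsCutSet D) (x : ℝ) : cutBelow D x < cutAbove D x :=
  (hD.cutBelow_le x).trans_lt (hD.lt_cutAbove x)

theorem le_cutBelow (hD : IsCutSet D) (hd : d ∈ D) (hdx : d ≤ x) : d ≤ cutBelow D x :=
  (hD.isGreatest_cutBelow x).2 ⟨hd, hdx⟩

theorem cutAbove_le (hD : IsCutSet D) (hd : d ∈ D) (hxd : x < d) : cutAbove D x ≤ d :=
  (hD.isLeast_cutAbove x).2 ⟨hd, hxd⟩

theorem le_cutBelow_or_cutAbove_le (hD : IsCutSet D) (hd : d ∈ D) (x : ℝ) :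
    d ≤ cutBelow D x ∨ cutAbove D x ≤ d :=
  (le_or_gt d x).imp (hD.le_cutBelow hd) (hD.cutAbove_le hd)

theorem cutAbove_le_cutBelow_add_one (hD : IsCutSet D) (x : ℝ) :
    cutAbove D x ≤ cutBelow D x + 1 := by
  obtain ⟨d, hd, h1, h2⟩ := hD.nonempty_inter_Ioc (cutBelow D x)
  exact ((hD.le_cutBelow_or_cutAbove_le hd x).resolve_left h1.not_ge).trans h2

theorem cutBelow_eq_of_mem_Ico (hD : IsCutSet D) (hy : y ∈ Ico (cutBelow D x) (cutAbove D x)) :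
    cutBelow D y = cutBelow D x :=
  cutBelow_eq (hD.cutBelow_mem x) (fun _ hz => hD.le_cutBelow_or_cutAbove_le hz x) hy

theorem cutAbove_eq_of_mem_Ico (hD : IsCutSet D) (hy : y ∈ Ico (cutBelow D x) (cutAbove D x)) :
    cutAbove D y = cutAbove D x :=
  cutAbove_eq (hD.cutAbove_mem x) (fun _ hz => hD.le_cutBelow_or_cutAbove_le hz x) hy

theorem cutAbove_cutBelow (hD : IsCutSet D) (x : ℝ) : cutAbove D (cutBelow D x) = cutAbove D x :=
  hD.cutAbove_eq_of_mem_Ico ⟨le_rfl, hD.cutBelow_lt_cutAbove x⟩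

theorem cut_add_intCast (hD : IsCutSet D) (hper : ∀ d ∈ D, ∀ k : ℤ, d + k ∈ D) (x : ℝ) (k : ℤ) :
    cutBelow D (x + k) = cutBelow D x + k ∧ cutAbove D (x + k) = cutAbove D x + k := by
  have hgap : ∀ z ∈ D, z ≤ cutBelow D x + k ∨ cutAbove D x + k ≤ z := fun z hz => by
    have hzk : z + (-k : ℤ) ∈ D := hper z hz _
    push_cast at hzk
    exact (hD.le_cutBelow_or_cutAbove_le hzk x).imp (fun h => by linarith) fun h => by linarith
  have hx : x + k ∈ Ico (cutBelow D x + k) (cutAbove D x + k) :=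
    ⟨by linarith [hD.cutBelow_le x], by linarith [hD.lt_cutAbove x]⟩
  exact ⟨cutBelow_eq (hper _ (hD.cutBelow_mem x) k) hgap hx,
    cutAbove_eq (hper _ (hD.cutAbove_mem x) k) hgap hx⟩

end IsCutSet

end CutSet

section MeshCuts

/-- The cuts `a + n` (`n : ℤ`), together with those of `[a + n + l, a + n + 1)` into intervals of
length `w n`: each `[a + n, a + n + 1)` consists of one interval of length `l` followed by
intervals of length at most `w n`. -/
def meshCuts (a l : ℝ) (w : ℤ → ℝ) : Set ℝ :=
  {x | Int.fract (x - a) = 0 ∨ ∃ j : ℕ, Int.fract (x - a) = l + j * w ⌊x - a⌋}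

variable {a l x : ℝ} {w : ℤ → ℝ} {n : ℤ}

theorem add_intCast_mem_meshCuts (a l : ℝ) (w : ℤ → ℝ) (n : ℤ) : a + n ∈ meshCuts a l w :=
  .inl (by simp)

theorem add_add_natCast_mul_mem_meshCuts {j : ℕ} (h0 : 0 ≤ l + j * w n) (h1 : l + j * w n < 1) :
    a + n + (l + j * w n) ∈ meshCuts a l w := by
  have hfloor : ⌊a + n + (l + j * w n) - a⌋ = n :=
    Int.floor_eq_iff.2 ⟨by linarith, by linarith⟩
  exact .inr ⟨j, by rw [hfloor, Int.fract, hfloor]; ring⟩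

theorem isCutSet_meshCuts (hw : ∀ n, 0 < w n) : IsCutSet (meshCuts a l w) := by
  refine ⟨fun c d => ?_, fun x => ?_⟩
  · refine (((finite_Icc ⌊c - a⌋ ⌊d - a⌋).biUnion fun n _ => ((finite_Iic ⌈(1 - l) / w n⌉₊).image
      fun j : ℕ => a + n + (l + j * w n)).insert (a + n))).subset ?_
    rintro x ⟨hx, hxc, hxd⟩
    have hsum := Int.floor_add_fract (x - a)
    refine mem_biUnion (x := ⌊x - a⌋) ⟨Int.floor_le_floor (by linarith),
      Int.floor_le_floor (by linarith)⟩ ?_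
    rcases hx with hx | ⟨j, hj⟩
    · exact .inl (by linarith)
    · refine .inr ⟨j, Nat.cast_le.1 (le_trans ?_ (Nat.le_ceil ((1 - l) / w ⌊x - a⌋))), by
        linarith⟩
      rw [le_div_iff₀ (hw _)]
      linarith [Int.fract_lt_one (x - a)]
  · refine ⟨a + ⌊x + 1 - a⌋, add_intCast_mem_meshCuts a l w _, ?_, ?_⟩
    · linarith [Int.lt_floor_add_one (x + 1 - a)]
    · linarith [Int.floor_le (x + 1 - a)]

theorem add_intCast_mem_meshCuts_of_mem (hw : ∀ m n, w m = w n) (hx : x ∈ meshCuts a l w)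
    (k : ℤ) : x + k ∈ meshCuts a l w := by
  have hxk : x + k - a = x - a + k := by ring
  simpa only [meshCuts, mem_ofPred_eq, hxk, Int.fract_add_intCast, hw _ ⌊x - a⌋] using hx

theorem cut_meshCuts_of_lt (hw : ∀ n, 0 < w n) (hl : l ≤ 1) (hx : x ∈ Ico (a + n) (a + n + l)) :
    cutBelow (meshCuts a l w) x = a + n ∧ cutAbove (meshCuts a l w) x = a + n + l := by
  have hl0 : 0 < l := by linarith [hx.1, hx.2]
  have hright : a + n + l ∈ meshCuts a l w := by
    rcases hl.lt_or_eq with hl1 | rfl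
    · simpa using add_add_natCast_mul_mem_meshCuts (a := a) (l := l) (w := w) (n := n) (j := 0)
        (by simpa using hl0.le) (by simpa using hl1)
    · simpa [add_assoc] using add_intCast_mem_meshCuts a 1 w (n + 1)
  have hgap : ∀ z ∈ meshCuts a l w, z ≤ a + n ∨ a + n + l ≤ z := fun z hz => by
    by_contra! hz'
    have hfloor : ⌊z - a⌋ = n := Int.floor_eq_iff.2 ⟨by linarith, by linarith⟩
    rw [meshCuts, mem_ofPred_eq, Int.fract, hfloor] at hz
    rcases hz with hz | ⟨j, hj⟩
    · linarith
    · have := mul_nonneg (Nat.cast_nonneg (α := ℝ) j) (hw n).le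
      linarith
  exact ⟨cutBelow_eq (add_intCast_mem_meshCuts a l w n) hgap hx, cutAbove_eq hright hgap hx⟩

theorem cutAbove_meshCuts_le (hw : ∀ n, 0 < w n) (hl : 0 ≤ l)
    (hx : x ∈ Ico (a + n + l) (a + n + 1)) :
    cutAbove (meshCuts a l w) x ≤ cutBelow (meshCuts a l w) x + w n := by
  have hD : IsCutSet (meshCuts a l w) := isCutSet_meshCuts hw
  set j := ⌊(x - (a + n + l)) / w n⌋₊
  have hjx : j * w n ≤ x - (a + n + l) := by
    rw [← le_div_iff₀ (hw n)]
    exact Nat.floor_le (div_nonneg (by linarith [hx.1]) (hw n).le)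
  have hxj : x - (a + n + l) < (j + 1) * w n := by
    rw [← div_lt_iff₀ (hw n)]
    exact Nat.lt_floor_add_one _
  have hj0 : 0 ≤ j * w n := mul_nonneg (Nat.cast_nonneg _) (hw n).le
  have hbelow : a + n + (l + j * w n) ≤ cutBelow (meshCuts a l w) x :=
    hD.le_cutBelow (add_add_natCast_mul_mem_meshCuts (by linarith) (by linarith [hx.2]))
      (by linarith)
  suffices h : cutAbove (meshCuts a l w) x ≤ a + n + (l + (j + 1) * w n) by linarith
  rcases lt_or_ge (l + (j + 1) * w n) 1 with h1 | h1
  · have := add_add_natCast_mul_mem_meshCuts (a := a) (l := l) (w := w) (n := n) (j := j + 1)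
      (by push_cast; linarith [hw n]) (by push_cast; exact h1)
    push_cast at this
    exact hD.cutAbove_le this (by linarith)
  · have := add_intCast_mem_meshCuts a l w (n + 1)
    push_cast at this
    exact (hD.cutAbove_le this (by linarith [hx.2])).trans (by linarith)

theorem cut_meshCuts_eq_or_le (hw : ∀ n, 0 < w n) (hl0 : 0 ≤ l) (hl1 : l ≤ 1) (x : ℝ) :
    (∃ n : ℤ, cutBelow (meshCuts a l w) x = a + n ∧ cutAbove (meshCuts a l w) x = a + n + l) ∨
      cutAbove (meshCuts a l w) x ≤ cutBelow (meshCuts a l w) x + w ⌊x - a⌋ := by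
  have h1 := Int.floor_le (x - a)
  have h2 := Int.lt_floor_add_one (x - a)
  rcases lt_or_ge x (a + ⌊x - a⌋ + l) with h | h
  · exact .inl ⟨_, cut_meshCuts_of_lt hw hl1 ⟨by linarith, h⟩⟩
  · exact .inr (cutAbove_meshCuts_le hw hl0 ⟨h, by linarith⟩)

end MeshCuts

section DeckTranslation

theorem Tr_zero : Tr 0 = id := by
  ext <;> simp [Tr]

theorem Tr_Tr (a b : ℤ) (z : Plane) : Tr a (Tr b z) = Tr (a + b) z := by
  simp only [Tr, Int.cast_add]
  congr 1
  ring

theorem Tr_neg_Tr (k : ℤ) (z : Plane) : Tr (-k) (Tr k z) = z := by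
  rw [Tr_Tr, neg_add_cancel, Tr_zero, id]

theorem Tr_Tr_neg (k : ℤ) (z : Plane) : Tr k (Tr (-k) z) = z := by
  rw [Tr_Tr, add_neg_cancel, Tr_zero, id]

theorem continuous_Tr (k : ℤ) : Continuous (Tr k) := by
  unfold Tr
  fun_prop

theorem dist_Tr (k : ℤ) (z w : Plane) : dist (Tr k z) (Tr k w) = dist z w := by
  simp [Tr, Prod.dist_eq]

theorem image_Tr_image_Tr (a b : ℤ) (s : Set Plane) : Tr a '' (Tr b '' s) = Tr (a + b) '' s := by
  simp only [image_image, Tr_Tr]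

theorem image_Tr_eq_preimage (k : ℤ) (s : Set Plane) : Tr k '' s = Tr (-k) ⁻¹' s :=
  congrFun (image_eq_preimage_of_inverse (Tr_neg_Tr k) (Tr_Tr_neg k)) s

theorem image_Tr_Icc_prod (k : ℤ) (a b : ℝ) (s : Set ℝ) :
    Tr k '' (Icc a b ×ˢ s) = Icc (a + k) (b + k) ×ˢ s := by
  rw [show Tr k = Prod.map (· + (k : ℝ)) id from rfl, prodMap_image_prod, image_id,
    image_add_const_Icc]

end DeckTranslation

section Brick

/-- The brick containing `p` of the tiling whose rows are cut out by `V`, the row with lower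
edge at height `y` being cut out by `H y`. -/
def brick (V : Set ℝ) (H : ℝ → Set ℝ) (p : Plane) : Set Plane :=
  Icc (cutBelow (H (cutBelow V p.2)) p.1) (cutAbove (H (cutBelow V p.2)) p.1) ×ˢ
    Icc (cutBelow V p.2) (cutAbove V p.2)

variable {V : Set ℝ} {H : ℝ → Set ℝ} {p q : Plane}

theorem mem_brick (hV : IsCutSet V) (hH : ∀ y, IsCutSet (H y)) (p : Plane) : p ∈ brick V H p :=
  ⟨⟨(hH _).cutBelow_le _, ((hH _).lt_cutAbove _).le⟩, hV.cutBelow_le _, (hV.lt_cutAbove _).le⟩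

theorem interior_brick : interior (brick V H p) =
    Ioo (cutBelow (H (cutBelow V p.2)) p.1) (cutAbove (H (cutBelow V p.2)) p.1) ×ˢ
      Ioo (cutBelow V p.2) (cutAbove V p.2) := by
  rw [brick, interior_prod_eq, interior_Icc, interior_Icc]

theorem nonempty_interior_brick (hV : IsCutSet V) (hH : ∀ y, IsCutSet (H y)) (p : Plane) :
    (interior (brick V H p)).Nonempty := by
  rw [interior_brick]
  exact (nonempty_Ioo.2 ((hH _).cutBelow_lt_cutAbove _)).prod
    (nonempty_Ioo.2 (hV.cutBelow_lt_cutAbove _))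

theorem brick_eq_of_mem_interior (hV : IsCutSet V) (hH : ∀ y, IsCutSet (H y))
    (hq : q ∈ interior (brick V H p)) : brick V H q = brick V H p := by
  rw [interior_brick] at hq
  have hq1 := Ioo_subset_Ico_self hq.1
  have hq2 := Ioo_subset_Ico_self hq.2
  simp only [brick, hV.cutBelow_eq_of_mem_Ico hq2, hV.cutAbove_eq_of_mem_Ico hq2,
    (hH _).cutBelow_eq_of_mem_Ico hq1, (hH _).cutAbove_eq_of_mem_Ico hq1]

theorem image_Tr_brick (hH : ∀ y, IsCutSet (H y)) (hper : ∀ y, ∀ d ∈ H y, ∀ k : ℤ, d + k ∈ H y)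
    (k : ℤ) (p : Plane) : Tr k '' brick V H p = brick V H (Tr k p) := by
  have hcut := (hH (cutBelow V p.2)).cut_add_intCast (hper _) p.1 k
  rw [brick, image_Tr_Icc_prod, ← hcut.1, ← hcut.2]
  rfl

theorem image_Tr_brick_ne (hV : IsCutSet V) (hH : ∀ y, IsCutSet (H y)) {k : ℤ} (hk : k ≠ 0)
    (p : Plane) : Tr k '' brick V H p ≠ brick V H p := by
  rw [brick, image_Tr_Icc_prod, Ne, prod_eq_prod_iff_of_nonempty
    ((nonempty_Icc.2 (by gcongr; exact ((hH _).cutBelow_lt_cutAbove _).le)).prod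
      (nonempty_Icc.2 (hV.cutBelow_lt_cutAbove _).le)),
    Icc_eq_Icc_iff (by gcongr; exact ((hH _).cutBelow_lt_cutAbove _).le)]
  simpa using hk

theorem locallyFinite_range_brick (hV : IsCutSet V) (hH : ∀ y, IsCutSet (H y)) :
    LocallyFinite (fun b : range (brick V H) => (b : Set Plane)) := by
  intro z
  refine ⟨Metric.ball z 1, Metric.ball_mem_nhds z one_pos,
    Finite.subset (Finite.preimage Subtype.val_injective.injOn ((Finite.biUnion
      (hV.finite_inter_Icc (z.2 - 2) (z.2 + 2)) fun y _ =>
      (((hH y).finite_inter_Icc (z.1 - 2) (z.1 + 2)).prod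
        (((hH y).finite_inter_Icc (z.1 - 2) (z.1 + 2)).prod
          (hV.finite_inter_Icc (z.2 - 2) (z.2 + 2)))).image
        fun e => Icc e.1 e.2.1 ×ˢ Icc y e.2.2))) ?_⟩
  rintro ⟨_, p, rfl⟩ ⟨q, ⟨hq1, hq2⟩, hqz⟩
  rw [Metric.mem_ball, Prod.dist_eq, max_lt_iff, Real.dist_eq, Real.dist_eq, abs_lt, abs_lt]
    at hqz
  have hD := hH (cutBelow V p.2)
  have h1 := hD.cutAbove_le_cutBelow_add_one p.1
  have h2 := hV.cutAbove_le_cutBelow_add_one p.2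
  refine mem_biUnion (x := cutBelow V p.2) ⟨hV.cutBelow_mem _, ?_, ?_⟩
    ⟨(cutBelow (H (cutBelow V p.2)) p.1, cutAbove (H (cutBelow V p.2)) p.1, cutAbove V p.2),
      ⟨⟨hD.cutBelow_mem p.1, ?_, ?_⟩, ⟨hD.cutAbove_mem p.1, ?_, ?_⟩, hV.cutAbove_mem p.2, ?_, ?_⟩,
      rfl⟩ <;>
    (try dsimp only) <;> linarith [hq1.1, hq1.2, hq2.1, hq2.2]

end Brick

section MaximalFreeRect

variable {F : Plane → Plane} {a l s t τ : ℝ} {z : Plane} {k k' : ℤ}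

/-- The rectangle `[a, a + l] × [s, t]`, of width at most `1`, is as wide as it can be with all
`[a, a + l'] × [s, t]`, `l' < l`, disjoint from their images under `F`. -/
structure IsMaximalFreeRect (F : Plane → Plane) (a l s t : ℝ) : Prop where
  pos : 0 < l
  le_one : l ≤ 1
  mapsTo_compl : ∀ l' < l, MapsTo F (Icc a (a + l') ×ˢ Icc s t) (Icc a (a + l') ×ˢ Icc s t)ᶜ
  meets_or_eq_one : (∃ z ∈ Icc a (a + l) ×ˢ Icc s t, F z ∈ Icc a (a + l) ×ˢ Icc s t) ∨ l = 1

theorem exists_isMaximalFreeRect (hF : Continuous F) (hτ0 : 0 < τ) (hτ1 : τ ≤ 1)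
    (hfree : MapsTo F (Icc a (a + τ) ×ˢ Icc s t) (Icc a (a + τ) ×ˢ Icc s t)ᶜ) :
    ∃ l, τ ≤ l ∧ IsMaximalFreeRect F a l s t := by
  have hK : IsCompact (Icc a (a + 1) ×ˢ Icc s t) := isCompact_Icc.prod isCompact_Icc
  have hZ : IsCompact ((Icc a (a + 1) ×ˢ Icc s t) ∩ F ⁻¹' (Icc a (a + 1) ×ˢ Icc s t)) :=
    hK.inter_right (hK.isClosed.preimage hF)
  have hreach : ∀ l' ≤ 1, ∀ z ∈ Icc a (a + l') ×ˢ Icc s t, F z ∈ Icc a (a + l') ×ˢ Icc s t →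
      z ∈ (Icc a (a + 1) ×ˢ Icc s t) ∩ F ⁻¹' (Icc a (a + 1) ×ˢ Icc s t) :=
    fun l' hl' z hz hFz => by
      have hsub : Icc a (a + l') ×ˢ Icc s t ⊆ Icc a (a + 1) ×ˢ Icc s t :=
        prod_mono_left (Icc_subset_Icc_right (by linarith))
      exact ⟨hsub hz, hsub hFz⟩
  rcases eq_empty_or_nonempty ((Icc a (a + 1) ×ˢ Icc s t) ∩ F ⁻¹' (Icc a (a + 1) ×ˢ Icc s t))
    with hempty | hne
  · exact ⟨1, hτ1, one_pos, le_rfl, fun l' hl' z hz hFz =>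
      (hempty ▸ hreach l' hl'.le z hz hFz :), .inr rfl⟩
  obtain ⟨z, ⟨hz, hFz⟩, hmin⟩ := hZ.exists_isMinOn hne
    (f := fun z => max (z.1 - a) ((F z).1 - a)) (by fun_prop)
  set l := max (z.1 - a) ((F z).1 - a)
  have h1 : z.1 - a ≤ l := le_max_left _ _
  have h2 : (F z).1 - a ≤ l := le_max_right _ _
  have hτl : τ ≤ l := le_of_not_gt fun hl => hfree (x := z)
    ⟨⟨hz.1.1, by linarith⟩, hz.2⟩ ⟨⟨hFz.1.1, by linarith⟩, hFz.2⟩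
  have hl1 : l ≤ 1 := max_le (by linarith [hz.1.2]) (by linarith [hFz.1.2])
  refine ⟨l, hτl, hτ0.trans_le hτl, hl1, fun l' hl' w hw hFw => ?_,
    .inl ⟨z, ⟨⟨hz.1.1, by linarith⟩, hz.2⟩, ⟨hFz.1.1, by linarith⟩, hFz.2⟩⟩
  exact hl'.not_ge ((hmin (hreach l' (hl'.le.trans hl1) w hw hFw)).trans
    (max_le (by linarith [hw.1.2]) (by linarith [hFw.1.2])))

namespace IsMaximalFreeRect

theorem mapsTo_interior (h : IsMaximalFreeRect F a l s t) (hT : ∀ k z, F (Tr k z) = Tr k (F z)) :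
    MapsTo F (interior (Tr k '' (Icc a (a + l) ×ˢ Icc s t)))
      (interior (Tr k '' (Icc a (a + l) ×ˢ Icc s t)))ᶜ := by
  rw [image_Tr_Icc_prod, interior_prod_eq, interior_Icc, interior_Icc]
  intro z hz hFz
  refine h.mapsTo_compl (max (z.1 - (a + k)) ((F z).1 - (a + k)))
    (max_lt (by linarith [hz.1.2]) (by linarith [hFz.1.2])) (x := Tr (-k) z)
    ⟨⟨?_, ?_⟩, Ioo_subset_Icc_self hz.2⟩ ?_
  · simpa [Tr] using hz.1.1.le
  · have := le_max_left (z.1 - (a + k)) ((F z).1 - (a + k))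
    simp only [Tr, Int.cast_neg]
    linarith
  · rw [hT]
    refine ⟨⟨by simpa [Tr] using hFz.1.1.le, ?_⟩, Ioo_subset_Icc_self hFz.2⟩
    have := le_max_right (z.1 - (a + k)) ((F z).1 - (a + k))
    simp only [Tr, Int.cast_neg]
    linarith

theorem notMem_inter (h : IsMaximalFreeRect F a l s t) (hT : ∀ k z, F (Tr k z) = Tr k (F z))
    (hk : k ≠ k')
    (hz : z ∈ Tr k '' (Icc a (a + l) ×ˢ Icc s t) ∩ Tr k' '' (Icc a (a + l) ×ˢ Icc s t)) :
    F z ∉ Tr k '' (Icc a (a + l) ×ˢ Icc s t) ∩ Tr k' '' (Icc a (a + l) ×ˢ Icc s t) := by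
  wlog hlt : k < k' generalizing k k'
  · rw [inter_comm] at hz ⊢
    exact this hk.symm hz (hk.symm.lt_of_le (not_lt.1 hlt))
  have hk' : (k : ℝ) + 1 ≤ k' := by exact_mod_cast hlt
  rw [image_Tr_Icc_prod, image_Tr_Icc_prod] at hz ⊢
  have hleft : ∀ w : Plane, w ∈ Icc (a + k : ℝ) (a + l + k) ×ˢ Icc s t ∩
      Icc (a + k' : ℝ) (a + l + k') ×ˢ Icc s t → Tr (-k') w ∈ Icc a (a + 0) ×ˢ Icc s t := by
    refine fun w hw => ⟨?_, hw.1.2⟩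
    simp only [Tr, Int.cast_neg]
    constructor <;> linarith [hw.1.1.2, hw.2.1.1, h.le_one]
  exact fun hFz => h.mapsTo_compl 0 h.pos (hleft z hz) (hT _ z ▸ hleft _ hFz)

end IsMaximalFreeRect

end MaximalFreeRect

section FreeTiling

/-- A locally finite tiling of the plane by free convex cells, invariant under the deck
transformations, no nontrivial one of which fixes a cell. -/
structure FreeTiling (F : Plane → Plane) (C : Set (Set Plane)) : Prop extends FreeCells F C where
  cover : ∀ z, ∃ b ∈ C, z ∈ b
  locallyFinite : LocallyFinite fun b : C => (b : Set Plane)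
  image_Tr_mem : ∀ b ∈ C, ∀ k, Tr k '' b ∈ C
  image_Tr_ne : ∀ b ∈ C, ∀ k, k ≠ 0 → Tr k '' b ≠ b

variable {F : Plane → Plane} {V : Set ℝ} {H : ℝ → Set ℝ} {ι : Type*}

theorem freeTiling_range_brick (hT : ∀ k z, F (Tr k z) = Tr k (F z)) (hV : IsCutSet V)
    (hH : ∀ y, IsCutSet (H y)) (hper : ∀ y, ∀ d ∈ H y, ∀ k : ℤ, d + k ∈ H y)
    {a l s t : ι → ℝ} (hR : ∀ i, IsMaximalFreeRect F (a i) (l i) (s i) (t i))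
    (hrow : Pairwise fun i j => Disjoint (Icc (s i) (t i)) (Icc (s j) (t j)))
    (hcase : ∀ p, MapsTo F (brick V H p) (brick V H p)ᶜ ∨
      ∃ i k, brick V H p = Tr k '' (Icc (a i) (a i + l i) ×ˢ Icc (s i) (t i))) :
    FreeTiling F (range (brick V H)) where
  convex := forall_mem_range.2 fun _ => (convex_Icc _ _).prod (convex_Icc _ _)
  isClosed := forall_mem_range.2 fun _ => isClosed_Icc.prod isClosed_Icc
  nonempty_interior := forall_mem_range.2 (nonempty_interior_brick hV hH)
  disjoint_interior := by
    rintro _ ⟨p, rfl⟩ _ ⟨q, rfl⟩ hne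
    exact disjoint_left.2 fun z hp hq => hne <|
      (brick_eq_of_mem_interior hV hH hp).symm.trans (brick_eq_of_mem_interior hV hH hq)
  mapsTo_interior := forall_mem_range.2 fun p => by
    rcases hcase p with h | ⟨i, k, h⟩
    · exact h.mono interior_subset (compl_subset_compl.2 interior_subset)
    · exact h ▸ (hR i).mapsTo_interior hT
  notMem_inter := by
    rintro _ ⟨p, rfl⟩ _ ⟨q, rfl⟩ hne z hz hFz
    rcases hcase p with hp | ⟨i, k, hp⟩
    · exact hp hz.1 hFz.1
    rcases hcase q with hq | ⟨j, m, hq⟩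
    · exact hq hz.2 hFz.2
    rw [hp, hq] at hne hz hFz
    obtain rfl | hij := eq_or_ne i j
    · exact (hR i).notMem_inter hT (fun hkm : k = m => hne (by rw [hkm])) hz hFz
    · rw [image_Tr_Icc_prod, image_Tr_Icc_prod] at hz
      exact disjoint_left.1 (hrow hij) hz.1.2 hz.2.2
  cover z := ⟨_, mem_range_self z, mem_brick hV hH z⟩
  locallyFinite := locallyFinite_range_brick hV hH
  image_Tr_mem := forall_mem_range.2 fun p k => ⟨_, (image_Tr_brick hH hper k p).symm⟩
  image_Tr_ne := forall_mem_range.2 fun p _ hk => image_Tr_brick_ne hV hH hk p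

theorem exists_pos_le_dist (hF : Continuous F) (hT : ∀ k z, F (Tr k z) = Tr k (F z))
    (hfix : ∀ z, F z ≠ z) {J : Set ℝ} (hJ : IsCompact J) :
    ∃ δ > 0, ∀ z : Plane, z.2 ∈ J → δ ≤ dist (F z) z := by
  rcases J.eq_empty_or_nonempty with rfl | hne
  · exact ⟨1, one_pos, fun z hz => hz.elim⟩
  obtain ⟨z₀, -, hmin⟩ := ((isCompact_Icc (a := (0 : ℝ)) (b := 1)).prod hJ).exists_isMinOn
    ((nonempty_Icc.2 zero_le_one).prod hne) (f := fun z => dist (F z) z) (by fun_prop)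
  refine ⟨dist (F z₀) z₀, dist_pos.2 (hfix z₀), fun z hz => ?_⟩
  have hz' : Tr (-⌊z.1⌋) z ∈ Icc (0 : ℝ) 1 ×ˢ J := by
    refine ⟨?_, hz⟩
    simp only [Tr, Int.cast_neg]
    constructor <;> linarith [Int.floor_le z.1, Int.lt_floor_add_one z.1]
  simpa only [mem_ofPred_eq, hT, dist_Tr] using hmin hz'

/-- The rows cut out by `V` have height at most `w`, a distance by which `F` moves each of their
points: the boxes of width at most `w` in a row are free. -/
structure IsFreeRowCut (F : Plane → Plane) (V : Set ℝ) (w : ℝ → ℝ) : Prop where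
  isCutSet : IsCutSet V
  pos : ∀ y, 0 < w y
  cutAbove_le : ∀ y, cutAbove V y ≤ cutBelow V y + w (cutBelow V y)
  lt_dist : ∀ y, ∀ z : Plane, z.2 ∈ Icc (cutBelow V y) (cutAbove V y) →
    w (cutBelow V y) < dist (F z) z

theorem exists_isFreeRowCut (hF : Continuous F) (hT : ∀ k z, F (Tr k z) = Tr k (F z))
    (hfix : ∀ z, F z ≠ z) {ε : ℝ} (hε : 0 < ε) :
    ∃ V w, IsFreeRowCut F V w ∧ ∀ y, w y < ε := by
  choose δ hδ0 hδ using fun n : ℤ =>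
    exists_pos_le_dist hF hT hfix (isCompact_Icc (a := (n : ℝ)) (b := n + 1))
  set w : ℤ → ℝ := fun n => min (ε / 2) (δ n / 2)
  have hw : ∀ n, 0 < w n := fun n => lt_min (half_pos hε) (half_pos (hδ0 n))
  have hV : IsCutSet (meshCuts 0 0 w) := isCutSet_meshCuts hw
  have hfloor : ∀ y, (⌊y⌋ : ℝ) ≤ cutBelow (meshCuts 0 0 w) y := fun y =>
    hV.le_cutBelow (by simpa using add_intCast_mem_meshCuts 0 0 w ⌊y⌋) (Int.floor_le y)
  have hceil : ∀ y, cutAbove (meshCuts 0 0 w) y ≤ ⌊y⌋ + 1 := fun y =>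
    hV.cutAbove_le (by simpa using add_intCast_mem_meshCuts 0 0 w (⌊y⌋ + 1))
      (Int.lt_floor_add_one y)
  have hrow : ∀ y, ⌊cutBelow (meshCuts 0 0 w) y⌋ = ⌊y⌋ := fun y => Int.floor_eq_iff.2
    ⟨hfloor y, (hV.cutBelow_le y).trans_lt (Int.lt_floor_add_one y)⟩
  refine ⟨meshCuts 0 0 w, fun y => w ⌊y⌋, ⟨hV, fun y => hw _, fun y => ?_, fun y z hz => ?_⟩,
    fun y => (min_le_left _ _).trans_lt (half_lt_self hε)⟩
  · simpa only [hrow, sub_zero] using cutAbove_meshCuts_le hw le_rfl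
      (⟨by simp [Int.floor_le y], by simp⟩ :
        y ∈ Ico ((0 : ℝ) + ⌊y⌋ + 0) (0 + ⌊y⌋ + 1))
  · simp only [hrow]
    exact ((min_le_right _ _).trans_lt (half_lt_self (hδ0 _))).trans_le
      (hδ _ z ⟨(hfloor y).trans hz.1, hz.2.trans (hceil y)⟩)

theorem IsFreeRowCut.mapsTo_brick {w : ℝ → ℝ} (h : IsFreeRowCut F V w) {p : Plane}
    (hwidth : cutAbove (H (cutBelow V p.2)) p.1 ≤
      cutBelow (H (cutBelow V p.2)) p.1 + w (cutBelow V p.2)) :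
    MapsTo F (brick V H p) (brick V H p)ᶜ := fun z hz hFz =>
  (h.lt_dist p.2 z hz.2).not_ge <| max_le
    ((Real.dist_le_of_mem_Icc hFz.1 hz.1).trans (by linarith))
    ((Real.dist_le_of_mem_Icc hFz.2 hz.2).trans (by linarith [h.cutAbove_le p.2]))

theorem IsFreeRowCut.exists_freeTiling {w : ℝ → ℝ} (h : IsFreeRowCut F V w)
    (hT : ∀ k z, F (Tr k z) = Tr k (F z)) {c : ι → Plane} {l : ι → ℝ}
    (hR : ∀ i, IsMaximalFreeRect F (c i).1 (l i) (cutBelow V (c i).2) (cutAbove V (c i).2))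
    (hrow : Pairwise fun i j => Disjoint (Icc (cutBelow V (c i).2) (cutAbove V (c i).2))
      (Icc (cutBelow V (c j).2) (cutAbove V (c j).2))) :
    ∃ C, FreeTiling F C ∧ ∀ i, Icc (c i).1 ((c i).1 + l i) ×ˢ
      Icc (cutBelow V (c i).2) (cutAbove V (c i).2) ∈ C := by
  have hV := h.isCutSet
  set s : ι → ℝ := fun i => cutBelow V (c i).2
  have hs : s.Injective := fun i j hij => by
    by_contra hne
    exact disjoint_left.1 (hrow hne) ⟨le_rfl, (hV.cutBelow_lt_cutAbove _).le⟩
      ⟨hij.ge, hij.le.trans (hV.cutBelow_lt_cutAbove _).le⟩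
  set a : ℝ → ℝ := Function.extend s (fun i => (c i).1) 0
  set L : ℝ → ℝ := Function.extend s l 0
  have ha : ∀ i, a (s i) = (c i).1 := hs.extend_apply _ _
  have hL : ∀ i, L (s i) = l i := hs.extend_apply _ _
  have hL0 : ∀ y, y ∉ range s → L y = 0 := Function.extend_apply' l (0 : ℝ → ℝ)
  have hL01 : ∀ y, 0 ≤ L y ∧ L y ≤ 1 := fun y => by
    by_cases hy : y ∈ range s
    · obtain ⟨i, rfl⟩ := hy
      exact hL i ▸ ⟨(hR i).pos.le, (hR i).le_one⟩
    · simp [hL0 y hy]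
  set H : ℝ → Set ℝ := fun y => meshCuts (a y) (L y) fun _ => w y
  have hH : ∀ y, IsCutSet (H y) := fun y => isCutSet_meshCuts fun _ => h.pos y
  refine ⟨range (brick V H), freeTiling_range_brick hT hV hH
    (fun y d hd k => add_intCast_mem_meshCuts_of_mem (fun _ _ => rfl) hd k) hR hrow fun p => ?_,
    fun i => ⟨c i, ?_⟩⟩
  · rcases cut_meshCuts_eq_or_le (fun _ => h.pos _) (hL01 (cutBelow V p.2)).1
      (hL01 (cutBelow V p.2)).2 p.1 with ⟨n, hbelow, habove⟩ | hwidth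
    · have hpos := (hH (cutBelow V p.2)).cutBelow_lt_cutAbove p.1
      have hlen : L (cutBelow V p.2) ≠ 0 := fun h0 => by
        rw [hbelow, habove, h0] at hpos
        linarith
      obtain ⟨i, hi⟩ := not_imp_comm.1 (hL0 (cutBelow V p.2)) hlen
      refine .inr ⟨i, n, ?_⟩
      rw [image_Tr_Icc_prod, brick, hbelow, habove, ← hi, ha, hL, add_right_comm,
        ← hV.cutAbove_cutBelow p.2, ← hV.cutAbove_cutBelow (c i).2, ← hi]
    · exact .inl (h.mapsTo_brick hwidth)
  · obtain ⟨hbelow, habove⟩ := cut_meshCuts_of_lt (a := a (s i)) (l := L (s i))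
      (w := fun _ => w (s i)) (n := 0) (x := (c i).1) (fun _ => h.pos _) (hL01 _).2
      (by simp [ha, hL, (hR i).pos])
    rw [brick, hbelow, habove, ha, hL, Int.cast_zero, add_zero]

/-- The horizontal segment of length `τ` with left end `c`. -/
def horizontalSegment (c : Plane) (τ : ℝ) : Set Plane := Icc c.1 (c.1 + τ) ×ˢ {c.2}

theorem isCompact_horizontalSegment (c : Plane) (τ : ℝ) : IsCompact (horizontalSegment c τ) :=
  isCompact_Icc.prod isCompact_singleton

theorem Icc_prod_Icc_subset_thickening {c : Plane} {τ s t ε : ℝ}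
    (hst : Icc s t ⊆ Metric.ball c.2 ε) :
    Icc c.1 (c.1 + τ) ×ˢ Icc s t ⊆ Metric.thickening ε (horizontalSegment c τ) := fun z hz =>
  Metric.mem_thickening_iff.2 ⟨(z.1, c.2), ⟨hz.1, rfl⟩, by
    simpa [Prod.dist_eq] using hst hz.2⟩

theorem exists_freeTiling [Finite ι] (hF : Continuous F) (hT : ∀ k z, F (Tr k z) = Tr k (F z))
    (hfix : ∀ z, F z ≠ z) {c : ι → Plane} (hc : Function.Injective fun i => (c i).2) {τ : ι → ℝ}
    (hτ0 : ∀ i, 0 < τ i) (hτ1 : ∀ i, τ i ≤ 1)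
    (hfree : ∀ i, MapsTo F (horizontalSegment (c i) (τ i)) (horizontalSegment (c i) (τ i))ᶜ) :
    ∃ C, FreeTiling F C ∧ ∀ i, ∃ R ∈ C, horizontalSegment (c i) (τ i) ⊆ R ∧
      ((∃ z ∈ R, F z ∈ R) ∨ ∃ z ∈ R, Tr 1 z ∈ R) := by
  have hthick : ∀ᶠ ε in 𝓝[>] (0 : ℝ), ∀ i,
      MapsTo F (Metric.thickening ε (horizontalSegment (c i) (τ i)))
        (Metric.thickening ε (horizontalSegment (c i) (τ i)))ᶜ := eventually_all.2 fun i =>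
    eventually_mapsTo_compl_thickening hF (isCompact_horizontalSegment _ _) (hfree i)
  have hball : ∀ᶠ ε in 𝓝[>] (0 : ℝ), ∀ i j, i ≠ j →
      Disjoint (Metric.ball (c i).2 ε) (Metric.ball (c j).2 ε) :=
    eventually_all.2 fun i => eventually_all.2 fun j => eventually_imp_distrib_left.2 fun hij => by
      simpa only [Metric.thickening_singleton] using eventually_disjoint_thickening
        isCompact_singleton isClosed_singleton (disjoint_singleton.2 (hc.ne hij))
  obtain ⟨ε, ⟨hthick, hball⟩, hε⟩ := ((hthick.and hball).and self_mem_nhdsWithin).exists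
  obtain ⟨V, w, hV, hwε⟩ := exists_isFreeRowCut hF hT hfix hε
  have hrow : ∀ i, Icc (cutBelow V (c i).2) (cutAbove V (c i).2) ⊆ Metric.ball (c i).2 ε :=
    fun i y hy => (Real.dist_le_of_mem_Icc hy ⟨hV.isCutSet.cutBelow_le _,
      (hV.isCutSet.lt_cutAbove _).le⟩).trans_lt
        (by linarith [hV.cutAbove_le (c i).2, hwε (cutBelow V (c i).2)])
  have hsub := fun i => Icc_prod_Icc_subset_thickening (τ := τ i) (hrow i)
  choose l hτl hR using fun i => exists_isMaximalFreeRect hF (hτ0 i) (hτ1 i)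
    ((hthick i).mono (hsub i) (compl_subset_compl.2 (hsub i)))
  obtain ⟨C, hC, hRC⟩ := hV.exists_freeTiling hT hR
    fun i j hij => (hball i j hij).mono (hrow i) (hrow j)
  have hmem : ∀ i, (c i).2 ∈ Icc (cutBelow V (c i).2) (cutAbove V (c i).2) := fun i =>
    ⟨hV.isCutSet.cutBelow_le _, (hV.isCutSet.lt_cutAbove _).le⟩
  refine ⟨C, hC, fun i => ⟨_, hRC i, prod_mono (Icc_subset_Icc_right (by linarith [hτl i]))
    (singleton_subset_iff.2 (hmem i)), (hR i).meets_or_eq_one.imp_right fun hl => ?_⟩⟩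
  exact ⟨c i, ⟨⟨le_rfl, by linarith⟩, hmem i⟩, by simp [Tr, hl], hmem i⟩

end FreeTiling

section CircleValued

variable {X : Type*} [TopologicalSpace X]

theorem exists_continuous_coe_eq [SimplyConnectedSpace X] [LocallyPathConnectedSpace X]
    {g : X → AddCircle (1 : ℝ)} (hg : Continuous g) :
    ∃ θ : X → ℝ, Continuous θ ∧ ∀ x, (θ x : AddCircle (1 : ℝ)) = g x := by
  obtain ⟨x⟩ := (inferInstance : Nonempty X)
  obtain ⟨t, ht⟩ := QuotientAddGroup.mk_surjective (g x)
  obtain ⟨θ, ⟨-, hθ⟩, -⟩ :=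
    (AddCircle.isCoveringMap_coe (1 : ℝ)).existsUnique_continuousMap_lifts ⟨g, hg⟩ x t ht
  exact ⟨θ, θ.continuous, congrFun hθ⟩

end CircleValued

section EssentialSubset

variable {O S B V : Set Plane}

/-- `S` contains a connected set joining a point to a nontrivial translate of it, i.e. it projects
to a set of the annulus containing an essential connected set. -/
def ContainsEssentialConnected (S : Set Plane) : Prop :=
  ∃ K ⊆ S, IsPreconnected K ∧ ∃ k ≠ 0, ∃ z ∈ K, Tr k z ∈ K

/-- `S` contains a path joining a point to a nontrivial translate of it, i.e. it projects to a set
of the annulus containing an essential loop. -/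
def ContainsEssentialLoop (S : Set Plane) : Prop :=
  ∃ k ≠ 0, ∃ z, JoinedIn S z (Tr k z)

theorem Tr_mem_iff (hO : ∀ k, MapsTo (Tr k) O O) {k : ℤ} {z : Plane} : Tr k z ∈ O ↔ z ∈ O :=
  ⟨fun h => Tr_neg_Tr k z ▸ hO (-k) h, fun h => hO k h⟩

theorem mapsTo_Tr_interior (hO : ∀ k, MapsTo (Tr k) O O) (k : ℤ) :
    MapsTo (Tr k) (interior O) (interior O) := fun z hz =>
  mem_interior.2 ⟨Tr (-k) ⁻¹' interior O, fun _ hw => (Tr_mem_iff hO).1 (interior_subset hw),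
    isOpen_interior.preimage (continuous_Tr _), by rwa [mem_preimage, Tr_neg_Tr]⟩

theorem joinedIn_Tr (hO : ∀ k, MapsTo (Tr k) O O) {z w : Plane} (h : JoinedIn O z w) (k : ℤ) :
    JoinedIn O (Tr k z) (Tr k w) :=
  (h.map_continuousOn (continuous_Tr k).continuousOn).mono (hO k).image_subset

theorem infDist_Tr (hS : ∀ k, MapsTo (Tr k) S S) (k : ℤ) (z : Plane) :
    Metric.infDist (Tr k z) S = Metric.infDist z S := by
  have himage : Tr k '' S = S := (image_Tr_eq_preimage k S).trans (ext fun _ => Tr_mem_iff hS)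
  conv_lhs => rw [← himage]
  exact Metric.infDist_image (.of_dist_eq (dist_Tr k))

theorem exists_equivariant_of_not_containsEssentialLoop (hO : IsOpen O)
    (hT : ∀ k, MapsTo (Tr k) O O) (hno : ¬ ContainsEssentialLoop O) :
    ∃ u : Plane → ℤ, (∀ z ∈ O, ∀ᶠ w in 𝓝 z, u w = u z) ∧ ∀ z ∈ O, u (Tr 1 z) = u z + 1 := by
  let r : Setoid O :=
    { r z w := ∃ k, JoinedIn O (Tr k z) w
      iseqv :=
        { refl z := ⟨0, by rw [Tr_zero]; exact .refl z.2⟩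
          symm := fun ⟨k, h⟩ => ⟨-k, by simpa only [Tr_neg_Tr] using (joinedIn_Tr hT h (-k)).symm⟩
          trans := fun ⟨k, h⟩ ⟨l, h'⟩ =>
            ⟨l + k, by simpa only [Tr_Tr] using (joinedIn_Tr hT h l).trans h'⟩ } }
  have hu : ∀ z, ∃ k : ℤ, ∀ hz : z ∈ O, JoinedIn O (Tr k (Quotient.mk r ⟨z, hz⟩).out) z := by
    intro z
    by_cases hz : z ∈ O
    · exact (Quotient.mk_out (s := r) ⟨z, hz⟩).imp fun k h _ => h
    · exact ⟨0, fun h => absurd h hz⟩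
  choose u hu using hu
  have hshift : ∀ {z w : Plane} {k : ℤ}, z ∈ O → JoinedIn O (Tr k z) w → u w = u z + k := by
    intro z w k hz h
    have hout : Quotient.mk r ⟨w, h.target_mem⟩ = Quotient.mk r ⟨z, hz⟩ :=
      (Quotient.sound ⟨k, h⟩ : Quotient.mk r ⟨z, hz⟩ = _).symm
    have hw := hu w h.target_mem
    rw [hout] at hw
    have hz' := (joinedIn_Tr hT (hu z hz) k).trans h
    rw [Tr_Tr] at hz'
    by_contra hne
    refine hno ⟨u w - (k + u z), by omega, _, hz'.trans ?_⟩
    rw [← sub_add_cancel (u w) (k + u z), ← Tr_Tr] at hw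
    exact hw.symm
  refine ⟨u, fun z hz => ?_, fun z hz => hshift hz (.refl (hT 1 hz))⟩
  filter_upwards [pathComponentIn_mem_nhds (hO.mem_nhds hz)] with w hw
  simpa using hshift hz (by rwa [Tr_zero] : JoinedIn O (Tr 0 z) w)

theorem exists_continuous_Tr_invariant_cutoff (hB : IsClosed B) (hV : IsOpen V) (hBV : B ⊆ V)
    (hBT : ∀ k, MapsTo (Tr k) B B) (hVT : ∀ k, MapsTo (Tr k) V V) (hB' : B.Nonempty)
    (hV' : Vᶜ.Nonempty) :
    ∃ l : Plane → ℝ, Continuous l ∧ (∀ k z, l (Tr k z) = l z) ∧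
      (∀ z ∈ B, ∀ᶠ w in 𝓝 z, l w = 1) ∧ ∀ z ∈ Vᶜ, ∀ᶠ w in 𝓝 z, l w = 0 := by
  have hVT' : ∀ k, MapsTo (Tr k) Vᶜ Vᶜ := fun k z hz hz' => hz ((Tr_mem_iff hVT).1 hz')
  have hposB : ∀ z ∉ B, 0 < Metric.infDist z B := fun z => (hB.notMem_iff_infDist_pos hB').1
  have hposV : ∀ z ∈ V, 0 < Metric.infDist z Vᶜ := fun z hz =>
    (hV.isClosed_compl.notMem_iff_infDist_pos hV').1 (notMem_compl_iff.2 hz)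
  have hpos : ∀ z, 0 < Metric.infDist z Vᶜ + Metric.infDist z B := fun z => by
    by_cases hz : z ∈ V
    · exact add_pos_of_pos_of_nonneg (hposV z hz) Metric.infDist_nonneg
    · exact add_pos_of_nonneg_of_pos Metric.infDist_nonneg (hposB z fun h => hz (hBV h))
  set a : Plane → ℝ := fun z =>
    Metric.infDist z Vᶜ / (Metric.infDist z Vᶜ + Metric.infDist z B) with ha
  have hac : Continuous a := (Metric.continuous_infDist_pt _).div
    ((Metric.continuous_infDist_pt _).add (Metric.continuous_infDist_pt _)) fun z => (hpos z).ne'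
  refine ⟨fun z => max 0 (min 1 (3 * a z - 1)), by fun_prop, fun k z => ?_, fun z hz => ?_,
    fun z hz => ?_⟩
  · simp only [ha, infDist_Tr hVT', infDist_Tr hBT]
  · have haz : 2 / 3 < a z := by
      simp only [ha, Metric.infDist_zero_of_mem hz, add_zero]
      rw [div_self (hposV z (hBV hz)).ne']
      norm_num
    filter_upwards [hac.continuousAt.eventually_const_lt haz] with w hw
    rw [min_eq_left (by linarith), max_eq_right zero_le_one]
  · have haz : a z < 1 / 3 := by
      simp only [ha, Metric.infDist_zero_of_mem hz, zero_div]
      norm_num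
    filter_upwards [hac.continuousAt.eventually_lt_const haz] with w hw
    exact max_eq_left ((min_le_right _ _).trans (by linarith))

/- `W` lifts the circle-valued function equal to `l * u` on `O` and to `0` off `O`, where `u` is
locally constant with `u ∘ Tr 1 = u + 1`. -/
theorem exists_continuous_lift_Tr_add (hO : IsOpen O) (hT : ∀ k, MapsTo (Tr k) O O)
    (hno : ¬ ContainsEssentialLoop O) {l : Plane → ℝ} (hl : Continuous l)
    (hlT : ∀ k z, l (Tr k z) = l z) (hlO : ∀ z ∉ O, ∃ n : ℤ, ∀ᶠ w in 𝓝 z, l w = n) :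
    ∃ W : Plane → ℝ, Continuous W ∧ (∀ z ∉ O, (W z : AddCircle (1 : ℝ)) = 0) ∧
      ∀ z, (W (Tr 1 z) : AddCircle (1 : ℝ)) = (W z + l z : ℝ) := by
  classical
  obtain ⟨u, hu, hu1⟩ := exists_equivariant_of_not_containsEssentialLoop hO hT hno
  have hint (n : ℤ) : ((n : ℝ) : AddCircle (1 : ℝ)) = 0 := by simp
  set g : Plane → AddCircle (1 : ℝ) := fun z =>
    if z ∈ O then ((l z * u z : ℝ) : AddCircle (1 : ℝ)) else 0 with hg
  have hgc : Continuous g := continuous_iff_continuousAt.2 fun z => by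
    by_cases hz : z ∈ O
    · have hcont : Continuous fun w => ((l w * u z : ℝ) : AddCircle (1 : ℝ)) :=
        (AddCircle.continuous_mk' 1).comp (by fun_prop)
      refine hcont.continuousAt.congr ?_
      filter_upwards [hO.mem_nhds hz, hu z hz] with w hw huw
      simp only [hg, if_pos hw, huw]
    · obtain ⟨n, hn⟩ := hlO z hz
      refine (continuousAt_const (y := 0)).congr ?_
      filter_upwards [hn] with w hw
      simp only [hg, hw, ← Int.cast_mul, hint, ite_self]
  obtain ⟨W, hW, hWg⟩ := exists_continuous_coe_eq hgc
  refine ⟨W, hW, fun z hz => (hWg z).trans (if_neg hz), fun z => ?_⟩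
  rw [hWg, AddCircle.coe_add, hWg]
  by_cases hz : z ∈ O
  · simp only [hg, if_pos hz, if_pos (hT 1 hz), hlT, hu1 z hz]
    push_cast
    rw [mul_add, mul_one, AddCircle.coe_add]
  · obtain ⟨n, hn⟩ := hlO z hz
    simp only [hg, if_neg hz, if_neg (mt (Tr_mem_iff hT).1 hz), hn.self_of_nhds, hint,
      add_zero]

theorem exists_apply_Tr_eq_add {W l : Plane → ℝ} (hW : Continuous W) (hl : Continuous l)
    (hlT : ∀ k z, l (Tr k z) = l z)
    (hWl : ∀ z, (W (Tr 1 z) : AddCircle (1 : ℝ)) = (W z + l z : ℝ)) :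
    ∃ d, ∀ (k : ℤ) z, W (Tr k z) = W z + k * (l z + d) := by
  have hstep : ∀ z, W (Tr 1 z) = W z + (l z + (W (Tr 1 0) - (W 0 + l 0))) := fun z => by
    have hconst := (AddCircle.isCoveringMap_coe (1 : ℝ)).const_of_comp
      (g := fun z => W (Tr 1 z) - (W z + l z)) ((hW.comp (continuous_Tr 1)).sub (hW.add hl))
      (fun a b => by simp only [AddCircle.coe_sub, hWl, sub_self]) z 0
    linarith
  refine ⟨W (Tr 1 0) - (W 0 + l 0), fun k z => ?_⟩
  induction k with
  | zero => simp [Tr_zero]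
  | succ n ih => rw [add_comm, ← Tr_Tr, hstep, hlT, ih]; push_cast; ring
  | pred n ih =>
    have := hstep (Tr (-n - 1) z)
    rw [Tr_Tr, add_sub_cancel, ih, hlT] at this
    push_cast at this ⊢
    linarith

theorem containsEssentialLoop_diff (hB : IsClosed B) (hV : IsOpen V) (hBV : B ⊆ V)
    (hBT : ∀ k, MapsTo (Tr k) B B) (hVT : ∀ k, MapsTo (Tr k) V V)
    (hBe : ContainsEssentialConnected B) (hVe : ContainsEssentialConnected Vᶜ) :
    ContainsEssentialLoop (V \ B) := by
  by_contra hno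
  obtain ⟨K₁, hK₁, hc₁, k₁, hk₁, z₁, hz₁, hz₁'⟩ := hBe
  obtain ⟨K₂, hK₂, hc₂, k₂, hk₂, z₂, hz₂, hz₂'⟩ := hVe
  obtain ⟨l, hl, hlT, hlB, hlV⟩ := exists_continuous_Tr_invariant_cutoff hB hV hBV hBT hVT
    ⟨z₁, hK₁ hz₁⟩ ⟨z₂, hK₂ hz₂⟩
  have hlO : ∀ z ∉ V \ B, ∃ n : ℤ, ∀ᶠ w in 𝓝 z, l w = n := fun z hz => by
    by_cases hzV : z ∈ V
    · exact ⟨1, by simpa using hlB z (by_contra fun h => hz ⟨hzV, h⟩)⟩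
    · exact ⟨0, by simpa using hlV z hzV⟩
  have hT : ∀ k, MapsTo (Tr k) (V \ B) (V \ B) := fun k z hz =>
    ⟨hVT k hz.1, fun h => hz.2 ((Tr_mem_iff hBT).1 h)⟩
  obtain ⟨W, hW, hW0, hW1⟩ := exists_continuous_lift_Tr_add (hV.sdiff hB) hT hno hl hlT hlO
  obtain ⟨d, hd⟩ := exists_apply_Tr_eq_add hW hl hlT hW1
  have hval : ∀ {K : Set Plane} {k : ℤ} {z : Plane}, IsPreconnected K → K ⊆ (V \ B)ᶜ → k ≠ 0 →
      z ∈ K → Tr k z ∈ K → l z + d = 0 := fun {K k z} hK hsub hk hz hz' => by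
    have := (AddCircle.isCoveringMap_coe (1 : ℝ)).constOn_of_comp hK hW.continuousOn
      (fun a ha b hb => (hW0 a (hsub ha)).trans (hW0 b (hsub hb)).symm) hz' hz
    simpa [hd, hk] using this
  have h₁ := hval hc₁ (fun z hz h => h.2 (hK₁ hz)) hk₁ hz₁ hz₁'
  have h₂ := hval hc₂ (fun z hz h => hK₂ hz h.1) hk₂ hz₂ hz₂'
  rw [(hlB z₁ (hK₁ hz₁)).self_of_nhds] at h₁
  rw [(hlV z₂ (hK₂ hz₂)).self_of_nhds] at h₂
  linarith

end EssentialSubset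

theorem iterate_Tr {F : Plane → Plane} (hT : ∀ k z, F (Tr k z) = Tr k (F z)) (n : ℕ) (k : ℤ)
    (z : Plane) : F^[n] (Tr k z) = Tr k (F^[n] z) :=
  Function.Commute.iterate_left (hT k) n z

theorem symm_Tr {F : Plane ≃ₜ Plane} (hT : ∀ k z, F (Tr k z) = Tr k (F z)) (k : ℤ) (z : Plane) :
    F.symm (Tr k z) = Tr k (F.symm z) := by
  rw [Homeomorph.symm_apply_eq, hT, Homeomorph.apply_symm_apply]

section Attractor

/-- `R` meets its image under `F` or `Tr 1`, and some iterate of `F` maps a point of `R` into a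
nontrivial translate of `R`. The orbit of `R` then projects to an essential subset of the
annulus. -/
def IsReturning (F : Plane → Plane) (R : Set Plane) : Prop :=
  ((∃ z ∈ R, F z ∈ R) ∨ ∃ z ∈ R, Tr 1 z ∈ R) ∧
    ∃ q : ℕ, ∃ p ≠ 0, ∃ x ∈ R, ∃ y ∈ R, F^[q] x = Tr p y

variable {R A : Set Plane}

theorem IsReturning.symm {F : Plane ≃ₜ Plane} (h : IsReturning F R)
    (hT : ∀ k z, F (Tr k z) = Tr k (F z)) : IsReturning F.symm R := by
  obtain ⟨hcrit, q, p, hp, x, hx, y, hy, hxy⟩ := h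
  refine ⟨hcrit.imp_left fun ⟨z, hz, hFz⟩ => ⟨F z, hFz, by rwa [F.symm_apply_apply]⟩,
    q, -p, neg_ne_zero.2 hp, y, hy, x, hx, ?_⟩
  rw [← Tr_neg_Tr p y, ← hxy, iterate_Tr (symm_Tr hT),
    Function.LeftInverse.iterate F.symm_apply_apply q]

theorem IsReturning.containsEssentialConnected {F : Plane → Plane} (h : IsReturning F R)
    (hF : Continuous F) (hR : IsPreconnected R) (hRA : R ⊆ A) (hFA : MapsTo F A A)
    (hTA : ∀ k, MapsTo (Tr k) A A) : ContainsEssentialConnected A := by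
  obtain ⟨⟨z, hz, hFz⟩ | ⟨z, hz, hTz⟩, q, p, hp, x, hx, y, hy, hxy⟩ := h
  · refine ⟨(⋃ i : ℕ, F^[i] '' R) ∪ Tr p '' R, union_subset
      (iUnion_subset fun i => image_subset_iff.2 fun v hv => hFA.iterate i (hRA hv))
      (image_subset_iff.2 fun v hv => hTA p (hRA hv)), ?_, p, hp, x,
      .inl (mem_iUnion.2 ⟨0, mem_image_of_mem _ hx⟩), .inr (mem_image_of_mem _ hx)⟩
    refine .union (Tr p y) (mem_iUnion.2 ⟨q, x, hx, hxy⟩) (mem_image_of_mem _ hy)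
      (.iUnion_of_chain (fun n => hR.image _ (hF.iterate n).continuousOn) fun n => ?_)
      (hR.image _ (continuous_Tr p).continuousOn)
    exact ⟨F^[n + 1] z, ⟨F z, hFz, (Function.iterate_succ_apply _ _ _).symm⟩, z, hz, rfl⟩
  · exact ⟨R, hRA, hR, 1, one_ne_zero, z, hz, hTz⟩

end Attractor

namespace FreeTiling

variable {F : Plane ≃ₜ Plane} {C P : Set (Set Plane)} {b b' R R' : Set Plane}

theorem isClosed_sUnion {F : Plane → Plane} (h : FreeTiling F C) (hP : P ⊆ C) :
    IsClosed (⋃₀ P) := by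
  rw [sUnion_eq_iUnion]
  exact (h.locallyFinite.comp_injective (inclusion_injective hP)).isClosed_iUnion
    fun b => h.isClosed b (hP b.2)

theorem mem_interior_sUnion {F : Plane → Plane} (h : FreeTiling F C) {z : Plane}
    (hz : ∀ b ∈ C, z ∈ b → b ∈ P) : z ∈ interior (⋃₀ P) := by
  refine mem_interior.2 ⟨(⋃₀ (C \ P))ᶜ, fun w hw => ?_,
    (h.isClosed_sUnion sdiff_subset).isOpen_compl, ?_⟩
  · obtain ⟨b, hb, hwb⟩ := h.cover w
    exact ⟨b, by_contra fun hbP => hw ⟨b, ⟨hb, hbP⟩, hwb⟩, hwb⟩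
  · rintro ⟨b, ⟨hb, hbP⟩, hzb⟩
    exact hbP (hz b hb hzb)

theorem disjoint_interior_sUnion (h : FreeTiling F C) (hP : P ⊆ C) (hR : R ∈ C) (hRP : R ∉ P) :
    Disjoint R (interior (⋃₀ P)) := by
  refine ((disjoint_sUnion_right.2 fun b hb => ?_).mono_right interior_subset).closure_left
    isOpen_interior |>.mono_left (h.subset_closure_interior hR)
  exact h.disjoint_interior_left hR (hP hb) (ne_of_mem_of_not_mem hb hRP).symm

theorem cellArrow_image_Tr (h : FreeTiling F C) (hT : ∀ k z, F (Tr k z) = Tr k (F z))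
    (hbb' : CellArrow F C b b') (k : ℤ) : CellArrow F C (Tr k '' b) (Tr k '' b') := by
  obtain ⟨hb, hb', hne, z, hz, hFz⟩ := hbb'
  exact ⟨h.image_Tr_mem b hb k, h.image_Tr_mem b' hb' k,
    (Function.LeftInverse.injective (Tr_neg_Tr k)).image_injective.ne hne, Tr k z,
    mem_image_of_mem _ hz, hT k z ▸ mem_image_of_mem _ hFz⟩

theorem reflTransGen_image_Tr (h : FreeTiling F C) (hT : ∀ k z, F (Tr k z) = Tr k (F z))
    (hbb' : Relation.ReflTransGen (CellArrow F C) b b') (k : ℤ) :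
    Relation.ReflTransGen (CellArrow F C) (Tr k '' b) (Tr k '' b') :=
  hbb'.lift (Tr k '' ·) fun _ _ hab => h.cellArrow_image_Tr hT hab k

/-- The union of the cells that can be reached along arrows from the translates of `R`. -/
def reach (F : Plane → Plane) (C : Set (Set Plane)) (R : Set Plane) : Set Plane :=
  ⋃₀ {b | b ∈ C ∧ ∃ k, Relation.ReflTransGen (CellArrow F C) (Tr k '' R) b}

theorem mapsTo_interior_reach (h : FreeTiling F C) :
    MapsTo F (reach F C R) (interior (reach F C R)) := by
  rintro z ⟨b, ⟨hb, k, hk⟩, hz⟩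
  refine h.mem_interior_sUnion fun b' hb' hFz => ⟨hb', k, ?_⟩
  rcases eq_or_ne b b' with rfl | hne
  exacts [hk, hk.tail ⟨hb, hb', hne, z, hz, hFz⟩]

theorem mapsTo_Tr_reach (h : FreeTiling F C) (hT : ∀ k z, F (Tr k z) = Tr k (F z)) (k : ℤ) :
    MapsTo (Tr k) (reach F C R) (reach F C R) := by
  rintro z ⟨b, ⟨hb, j, hj⟩, hz⟩
  refine ⟨_, ⟨h.image_Tr_mem b hb k, k + j, ?_⟩, mem_image_of_mem _ hz⟩
  rw [← image_Tr_image_Tr]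
  exact h.reflTransGen_image_Tr hT hj k

theorem subset_reach (hR : R ∈ C) : R ⊆ reach F C R :=
  subset_sUnion_of_mem ⟨hR, 0, by rw [Tr_zero, image_id]⟩

theorem disjoint_interior_reach (h : FreeTiling F C) (hT : ∀ k z, F (Tr k z) = Tr k (F z))
    (hR' : R' ∈ C) (hno : ∀ k, ¬ Relation.ReflTransGen (CellArrow F C) R (Tr k '' R')) :
    Disjoint R' (interior (reach F C R)) := by
  refine h.disjoint_interior_sUnion (fun b hb => hb.1) hR' ?_
  rintro ⟨-, k, hk⟩
  refine hno (-k) ?_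
  simpa only [image_Tr_image_Tr, neg_add_cancel, Tr_zero, image_id] using
    h.reflTransGen_image_Tr hT hk (-k)

/- `reach F C R` contains the forward orbit of `R` and the complement of its interior contains the
backward orbit of `R'`. -/
theorem containsEssentialLoop_reach (h : FreeTiling F C) (hT : ∀ k z, F (Tr k z) = Tr k (F z))
    (hRC : R ∈ C) (hR : IsReturning F R) (hRC' : R' ∈ C) (hR' : IsReturning F R')
    (hno : ∀ k, ¬ Relation.ReflTransGen (CellArrow F C) R (Tr k '' R')) :
    ContainsEssentialLoop (interior (reach F C R) \ F '' reach F C R) := by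
  have hFA := h.mapsTo_interior_reach (R := R)
  have hTA := h.mapsTo_Tr_reach hT (R := R)
  refine containsEssentialLoop_diff (F.isClosedMap _ (h.isClosed_sUnion fun b hb => hb.1))
    isOpen_interior hFA.image_subset ?_ (mapsTo_Tr_interior hTA) ?_ ?_
  · rintro k _ ⟨z, hz, rfl⟩
    exact ⟨Tr k z, hTA k hz, hT k z⟩
  · obtain ⟨K, hK, hc, k, hk, z, hz, hz'⟩ := hR.containsEssentialConnected F.continuous
      (h.convex R hRC).isPreconnected (subset_reach hRC) (hFA.mono_right interior_subset) hTA
    exact ⟨F '' K, image_mono hK, hc.image _ F.continuous.continuousOn, k, hk, F z,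
      mem_image_of_mem _ hz, hT k z ▸ mem_image_of_mem _ hz'⟩
  · refine (hR'.symm hT).containsEssentialConnected F.symm.continuous
      (h.convex R' hRC').isPreconnected
      (h.disjoint_interior_reach hT hRC' hno).subset_compl_right ?_ ?_
    · exact fun z hz hz' => hz (by simpa using hFA (interior_subset hz'))
    · exact fun k z hz hz' => hz ((Tr_mem_iff (mapsTo_Tr_interior hTA)).1 hz')

end FreeTiling

section PeriodicWalk

variable {A : Type*} [AddCommGroup A] {r : A → A → Prop} {e : A}

theorem apply_add_mul_eq_add_zsmul {W : ℤ → A} {n k : ℤ} (hW : ∀ i, W (i + n) = W i + k • e)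
    (q i : ℤ) : W (i + n * q) = W i + (k * q) • e := by
  induction q generalizing i with
  | zero => simp
  | succ q ih =>
    rw [mul_add_one, ← add_assoc, hW, ih, mul_add_one, add_zsmul, add_assoc]
  | pred q ih =>
    rw [← add_left_inj (k • e), ← hW, mul_sub_one, ← add_sub_assoc, sub_add_cancel, ih, add_assoc,
      ← add_zsmul, mul_sub_one, sub_add_cancel]

theorem exists_periodic_extension (hr : ∀ a b, r a b → ∀ m : ℤ, r (a + m • e) (b + m • e))
    {n : ℕ} (hn : 0 < n) {w : ℕ → A} {k : ℤ} (hwn : w n = w 0 + k • e)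
    (hw : ∀ i < n, r (w i) (w (i + 1))) :
    ∃ W : ℤ → A, (∀ i, W (i + n) = W i + k • e) ∧ ∀ i, r (W i) (W (i + 1)) := by
  have hn' : (0 : ℤ) < n := by exact_mod_cast hn
  set W : ℤ → A := fun i => w (i % n).toNat + (k * (i / n)) • e with hW
  have hWl (q : ℤ) (l : ℕ) (hl : l ≤ n) : W (l + n * q) = w l + (k * q) • e := by
    simp only [hW, Int.add_mul_emod_self_left, Int.add_mul_ediv_left _ _ hn'.ne']
    obtain rfl | hl := hl.eq_or_lt
    · simp [Int.ediv_self hn'.ne', hwn, mul_add, add_zsmul, add_assoc]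
    · rw [← Int.natCast_mod, ← Int.natCast_ediv, Nat.mod_eq_of_lt hl, Nat.div_eq_of_lt hl]
      simp
  refine ⟨W, fun i => ?_, fun i => ?_⟩
  · simp only [hW, Int.add_emod_right, Int.add_ediv_of_dvd_right dvd_rfl, Int.ediv_self hn'.ne',
      mul_add_one, add_zsmul, add_assoc]
  · obtain ⟨l, hl⟩ := Int.eq_ofNat_of_zero_le (Int.emod_nonneg i hn'.ne')
    have hln : l < n := by have := Int.emod_lt_of_pos i hn'; lia
    rw [← Int.emod_add_mul_ediv i n, hl, add_right_comm, ← Nat.cast_succ, hWl _ _ hln.le,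
      hWl _ _ hln]
    exact hr _ _ (hw l hln) _

theorem exists_simple_periodic_walk (hr : ∀ a b, r a b → ∀ m : ℤ, r (a + m • e) (b + m • e))
    (he : ∀ m : ℤ, m • e = 0 → m = 0) {a : A} {k : ℤ} (hk : k ≠ 0)
    (h : Relation.ReflTransGen r a (a + k • e)) :
    ∃ n : ℕ, ∃ k : ℤ, k ≠ 0 ∧ ∃ W : ℤ → A, (∀ i, W (i + n) = W i + k • e) ∧
      (∀ i, r (W i) (W (i + 1))) ∧ ∀ i j m : ℤ, W i = W j + m • e → (n : ℤ) ∣ i - j := by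
  have hwalk : ∃ n : ℕ, ∃ k : ℤ, k ≠ 0 ∧ ∃ w : ℕ → A, w n = w 0 + k • e ∧
      ∀ i < n, r (w i) (w (i + 1)) := by
    rcases Relation.reflTransGen_iff_eq_or_transGen.1 h with h | h
    · exact absurd (he k (by simpa using h)) hk
    · obtain ⟨n, w, h0, hn, hw⟩ := exists_chain_of_transGen h
      exact ⟨n + 1, k, hk, w, by rw [hn, h0], fun i hi => hw i (Nat.lt_succ_iff.1 hi)⟩
  classical
  obtain ⟨k, hk, w, hwn, hw⟩ := Nat.find_spec hwalk
  set n := Nat.find hwalk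
  have hn : 0 < n := Nat.pos_of_ne_zero fun h => hk (he k (by simpa [h] using hwn))
  obtain ⟨W, hWn, hW⟩ := exists_periodic_extension hr hn hwn hw
  have hWr (i : ℤ) (l : ℕ) : r (W (i + l)) (W (i + (l + 1 : ℕ))) := by
    rw [Nat.cast_succ, ← add_assoc]
    exact hW _
  have hmin (d : ℕ) (hd0 : 0 < d) (hdn : d < n) (j m : ℤ) : W (j + d) ≠ W j + m • e := by
    intro hjd
    by_cases hm : m = 0
    · refine Nat.find_min hwalk (Nat.sub_lt hn hd0) ⟨k, hk, fun l => W (j + d + l), ?_,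
        fun l _ => hWr _ l⟩
      simp only [Nat.cast_zero, add_zero, hjd, hm, zero_smul, ← hWn]
      congr 1
      lia
    · exact Nat.find_min hwalk hdn ⟨m, hm, fun l => W (j + l), by simpa using hjd,
        fun l _ => hWr j l⟩
  refine ⟨n, k, hk, W, hWn, hW, fun i j m hij => by_contra fun hdvd => ?_⟩
  have hn' : (0 : ℤ) < n := by exact_mod_cast hn
  have hd0 : 0 < (i - j) % n :=
    (Int.emod_nonneg _ hn'.ne').lt_of_ne fun h => hdvd (Int.dvd_of_emod_eq_zero h.symm)
  have hi : i = j + ((i - j) % n).toNat + n * ((i - j) / n) := by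
    rw [Int.toNat_of_nonneg hd0.le, add_assoc, Int.emod_add_mul_ediv, add_sub_cancel]
  refine hmin ((i - j) % n).toNat (by lia) (by have := Int.emod_lt_of_pos (i - j) hn'; lia) j
    (m - k * ((i - j) / n)) ?_
  rw [sub_zsmul, ← add_assoc, ← hij, ← sub_eq_add_neg, eq_sub_iff_add_eq,
    ← apply_add_mul_eq_add_zsmul hWn, ← hi]

end PeriodicWalk

section PolygonalPath

variable {E : Type*} [AddCommGroup E] [Module ℝ E]

/-- The polygonal curve through the points `W n` at the integer times `n`. -/
def polygonalCurve (W : ℤ → E) (t : ℝ) : E :=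
  AffineMap.lineMap (W ⌊t⌋) (W (⌊t⌋ + 1)) (Int.fract t)

theorem polygonalCurve_of_mem_Icc (W : ℤ → E) {n : ℤ} {t : ℝ} (ht : t ∈ Icc (n : ℝ) (n + 1)) :
    polygonalCurve W t = AffineMap.lineMap (W n) (W (n + 1)) (t - n) := by
  obtain rfl | h := ht.2.eq_or_lt
  · have : (n : ℝ) + 1 = (n + 1 : ℤ) := by push_cast; rfl
    rw [polygonalCurve, this, Int.floor_intCast, Int.fract_intCast]
    simp
  · rw [polygonalCurve, ← Int.self_sub_floor, Int.floor_eq_iff.2 ⟨ht.1, h⟩]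

theorem continuous_polygonalCurve [TopologicalSpace E] [IsTopologicalAddGroup E]
    [ContinuousSMul ℝ E] (W : ℤ → E) : Continuous (polygonalCurve W) := by
  refine LocallyFinite.continuous (f := fun n : ℤ => Icc (n : ℝ) (n + 1)) ?_
    (iUnion_Icc_intCast ℝ) (fun _ => isClosed_Icc) fun n => ?_
  · exact locallyFinite_Icc_of_tendsto tendsto_intCast_atTop_atTop
      (tendsto_atBot_add_const_right _ 1 (tendsto_intCast_atBot_iff.2 tendsto_id))
  · exact (AffineMap.lineMap_continuous.comp (by fun_prop)).continuousOn.congr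
      fun t ht => polygonalCurve_of_mem_Icc W ht

theorem polygonalCurve_add_intCast {W : ℤ → E} {n : ℤ} {c : E} (hW : ∀ i, W (i + n) = W i + c)
    (t : ℝ) : polygonalCurve W (t + n) = polygonalCurve W t + c := by
  simp only [polygonalCurve, Int.floor_add_intCast, Int.fract_add_intCast, add_right_comm _ n, hW,
    AffineMap.lineMap_apply_module]
  module

end PolygonalPath

section Grid

/-- The point of the plane with integer coordinates `v`. -/
def latticePoint (v : ℤ × ℤ) : Plane := (v.1, v.2)

/-- The edges, contained in `U`, of the square grid with vertex set `ℤ × ℤ`. -/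
def GridStep (U : Set Plane) (v v' : ℤ × ℤ) : Prop :=
  (v'.1 - v.1).natAbs + (v'.2 - v.2).natAbs = 1 ∧ segment ℝ (latticePoint v) (latticePoint v') ⊆ U

variable {U : Set Plane} {u u' v v' : ℤ × ℤ}

theorem latticePoint_add (u v : ℤ × ℤ) :
    latticePoint (u + v) = latticePoint u + latticePoint v := by
  simp [latticePoint]

theorem latticePoint_injective : Function.Injective latticePoint := fun u v h => by
  simpa [latticePoint, Prod.ext_iff] using h

theorem GridStep.add (h : GridStep U v v') (hU : ∀ z ∈ U, z + latticePoint u ∈ U) :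
    GridStep U (v + u) (v' + u) := by
  refine ⟨by simpa using h.1, ?_⟩
  simp only [latticePoint_add, add_comm _ (latticePoint u), ← segment_translate_image]
  rintro _ ⟨z, hz, rfl⟩
  simpa only [add_comm] using hU z (h.2 hz)

theorem reflTransGen_gridStep_floor {a b : Plane} (hab : dist a b < 1)
    (ha : Metric.ball a 2 ⊆ U) :
    Relation.ReflTransGen (GridStep U) (⌊a.1⌋, ⌊a.2⌋) (⌊b.1⌋, ⌊b.2⌋) := by
  have hfloor (x y : ℝ) (hxy : dist x y < 1) : (⌊y⌋ - ⌊x⌋).natAbs ≤ 1 := by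
    rw [Real.dist_eq, abs_lt] at hxy
    have h₁ : ⌊y⌋ < ⌊x⌋ + 2 := Int.floor_lt.2 (by
      push_cast
      linarith [Int.lt_floor_add_one x])
    have h₂ : ⌊x⌋ < ⌊y⌋ + 2 := Int.floor_lt.2 (by
      push_cast
      linarith [Int.lt_floor_add_one y])
    omega
  rw [Prod.dist_eq, max_lt_iff] at hab
  have hself (x : ℝ) : dist (⌊x⌋ : ℝ) x < 2 := by
    rw [Real.dist_eq, abs_sub_comm, Int.self_sub_floor, Int.abs_fract]
    linarith [Int.fract_lt_one x]
  have hother (x y : ℝ) (hxy : dist x y < 1) : dist (⌊y⌋ : ℝ) x < 2 := by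
    have h : dist (⌊y⌋ : ℝ) y < 1 := by
      rw [Real.dist_eq, abs_sub_comm, Int.self_sub_floor, Int.abs_fract]
      exact Int.fract_lt_one y
    linarith [dist_triangle_right (⌊y⌋ : ℝ) x y]
  have hmem {m n : ℤ} (hm : dist (m : ℝ) a.1 < 2) (hn : dist (n : ℝ) a.2 < 2) :
      latticePoint (m, n) ∈ Metric.ball a 2 := max_lt hm hn
  have hstep {v v' : ℤ × ℤ} (hv : latticePoint v ∈ Metric.ball a 2)
      (hv' : latticePoint v' ∈ Metric.ball a 2)
      (h : (v'.1 - v.1).natAbs + (v'.2 - v.2).natAbs ≤ 1) :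
      Relation.ReflTransGen (GridStep U) v v' := by
    rcases Nat.le_one_iff_eq_zero_or_eq_one.1 h with h | h
    · rw [show v = v' from Prod.ext (by omega) (by omega)]
    · exact .single ⟨h, ((convex_ball a 2).segment_subset hv hv').trans ha⟩
  have hmid := hmem (hother _ _ hab.1) (hself a.2)
  exact (hstep (hmem (hself _) (hself _)) hmid (by simpa using hfloor _ _ hab.1)).trans
    (hstep hmid (hmem (hother _ _ hab.1) (hother _ _ hab.2)) (by simpa using hfloor _ _ hab.2))

theorem reflTransGen_gridStep_floor_of_path {a b : Plane} (γ : Path a b)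
    (hγ : ∀ t, Metric.ball (γ t) 2 ⊆ U) :
    Relation.ReflTransGen (GridStep U) (⌊a.1⌋, ⌊a.2⌋) (⌊b.1⌋, ⌊b.2⌋) := by
  simpa using PreconnectedSpace.induction₂'
    (fun s t => Relation.ReflTransGen (GridStep U) (⌊(γ s).1⌋, ⌊(γ s).2⌋) (⌊(γ t).1⌋, ⌊(γ t).2⌋))
    (fun s => by
      filter_upwards [γ.continuous.continuousAt.eventually (Metric.ball_mem_nhds _ one_pos)]
        with t ht
      exact ⟨reflTransGen_gridStep_floor (by rwa [dist_comm]) (hγ s),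
        reflTransGen_gridStep_floor ht (hγ t)⟩)
    ⟨fun _ _ _ h₁ h₂ => h₁.trans h₂⟩ 0 1

theorem floor_ceil_lineMap {a b : ℤ} (hab : (b - a).natAbs ≤ 1) {θ : ℝ} (hθ : θ ∈ Ioo 0 1) :
    ⌊AffineMap.lineMap (a : ℝ) b θ⌋ = min a b ∧ ⌈AffineMap.lineMap (a : ℝ) b θ⌉ = max a b := by
  obtain rfl | rfl | rfl : b = a ∨ b = a + 1 ∨ b = a - 1 := by omega
  · simp
  · simp only [AffineMap.lineMap_apply_module', Int.floor_eq_iff, Int.ceil_eq_iff, smul_eq_mul,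
      min_eq_left (lt_add_one a).le, max_eq_right (lt_add_one a).le]
    push_cast
    constructor <;> constructor <;> linarith [hθ.1, hθ.2]
  · simp only [AffineMap.lineMap_apply_module', Int.floor_eq_iff, Int.ceil_eq_iff, smul_eq_mul,
      min_eq_right (sub_one_lt a).le, max_eq_left (sub_one_lt a).le]
    push_cast
    constructor <;> constructor <;> linarith [hθ.1, hθ.2]

theorem eq_or_reverse_of_lineMap_eq (hv : (v'.1 - v.1).natAbs + (v'.2 - v.2).natAbs = 1)
    (hu : (u'.1 - u.1).natAbs + (u'.2 - u.2).natAbs = 1) {θ θ' : ℝ} (hθ : θ ∈ Ico 0 1)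
    (hθ' : θ' ∈ Ico 0 1)
    (h : AffineMap.lineMap (latticePoint v) (latticePoint v') θ =
      AffineMap.lineMap (latticePoint u) (latticePoint u') θ') :
    v = u ∧ θ = θ' ∨ v = u' ∧ v' = u := by
  have hfst : AffineMap.lineMap (v.1 : ℝ) v'.1 θ = AffineMap.lineMap (u.1 : ℝ) u'.1 θ' := by
    simpa [latticePoint, AffineMap.lineMap_apply_module] using congrArg Prod.fst h
  have hsnd : AffineMap.lineMap (v.2 : ℝ) v'.2 θ = AffineMap.lineMap (u.2 : ℝ) u'.2 θ' := by
    simpa [latticePoint, AffineMap.lineMap_apply_module] using congrArg Prod.snd h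
  have hfst' := And.intro (congrArg Int.floor hfst) (congrArg Int.ceil hfst)
  have hsnd' := And.intro (congrArg Int.floor hsnd) (congrArg Int.ceil hsnd)
  rcases hθ.1.eq_or_lt with rfl | h0 <;> rcases hθ'.1.eq_or_lt with rfl | h0'
  · exact .inl ⟨latticePoint_injective (by simpa using h), rfl⟩
  · have h₁ := floor_ceil_lineMap (a := u.1) (b := u'.1) (by omega) ⟨h0', hθ'.2⟩
    have h₂ := floor_ceil_lineMap (a := u.2) (b := u'.2) (by omega) ⟨h0', hθ'.2⟩
    simp only [AffineMap.lineMap_apply_zero, Int.floor_intCast, Int.ceil_intCast] at hfst' hsnd'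
    omega
  · have h₁ := floor_ceil_lineMap (a := v.1) (b := v'.1) (by omega) ⟨h0, hθ.2⟩
    have h₂ := floor_ceil_lineMap (a := v.2) (b := v'.2) (by omega) ⟨h0, hθ.2⟩
    simp only [AffineMap.lineMap_apply_zero, Int.floor_intCast, Int.ceil_intCast] at hfst' hsnd'
    omega
  · have h₁ := floor_ceil_lineMap (a := u.1) (b := u'.1) (by omega) ⟨h0', hθ'.2⟩
    have h₂ := floor_ceil_lineMap (a := u.2) (b := u'.2) (by omega) ⟨h0', hθ'.2⟩
    have h₃ := floor_ceil_lineMap (a := v.1) (b := v'.1) (by omega) ⟨h0, hθ.2⟩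
    have h₄ := floor_ceil_lineMap (a := v.2) (b := v'.2) (by omega) ⟨h0, hθ.2⟩
    obtain hvu | hvu : v = u ∧ v' = u' ∨ v = u' ∧ v' = u := by
      simp only [Prod.ext_iff]
      omega
    · obtain ⟨rfl, rfl⟩ := hvu
      refine .inl ⟨rfl, AffineMap.lineMap_injective ℝ (fun hvv' => ?_) h⟩
      rw [latticePoint_injective hvv'] at hv
      simp at hv
    · exact .inr hvu

end Grid

section EssentialCurve

variable {O : Set Plane}

theorem exists_gridStep_cycle (hO : IsOpen O) (h : ContainsEssentialLoop O) :
    ∃ N : ℕ, 3 ≤ N ∧ ∃ v : ℤ × ℤ, ∃ k : ℤ, k ≠ 0 ∧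
      Relation.ReflTransGen (GridStep ((fun z => (N : ℝ)⁻¹ • z) ⁻¹' O)) v
        (v + k • ((N : ℤ), (0 : ℤ))) := by
  obtain ⟨k, hk, z, γ, hγ⟩ := h
  obtain ⟨δ, hδ, hδO⟩ := (isCompact_range γ.continuous).exists_thickening_subset_open hO
    (range_subset_iff.2 hγ)
  obtain ⟨N, hN⟩ := exists_nat_gt (max 2 (2 / δ))
  obtain ⟨hN2, hNδ⟩ := max_lt_iff.1 hN
  have hN0 : (0 : ℝ) < N := by linarith
  refine ⟨N, by exact_mod_cast hN2, (⌊N * z.1⌋, ⌊N * z.2⌋), k, hk, ?_⟩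
  have hpath := reflTransGen_gridStep_floor_of_path
    (γ.map (continuous_const_smul (N : ℝ))) (U := (fun z => (N : ℝ)⁻¹ • z) ⁻¹' O) fun t w hw => by
      refine hδO (Metric.mem_thickening_iff.2 ⟨γ t, mem_range_self t, ?_⟩)
      rw [← inv_smul_smul₀ hN0.ne' (γ t), dist_smul₀, norm_inv, Real.norm_natCast,
        inv_mul_lt_iff₀ hN0]
      rw [div_lt_iff₀ hδ] at hNδ
      exact (Metric.mem_ball.1 hw).trans hNδ
  have hshift : (N : ℝ) * (z.1 + k) = N * z.1 + (k * N : ℤ) := by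
    push_cast
    ring
  simpa only [Prod.smul_fst, Prod.smul_snd, smul_eq_mul, Tr, hshift, Int.floor_add_intCast,
    Prod.mk_add_mk, Prod.smul_mk, add_zero, mul_zero] using hpath

theorem le_of_gridStep_of_add_eq {U : Set Plane} {W : ℤ → ℤ × ℤ}
    (hW : ∀ i, GridStep U (W i) (W (i + 1))) {n N : ℕ} {k : ℤ} (hk : k ≠ 0)
    (hn : W n = W 0 + k • ((N : ℤ), (0 : ℤ))) : N ≤ n := by
  have hbound (i : ℕ) : ((W i).1 - (W 0).1).natAbs ≤ i := by
    induction i with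
    | zero => simp
    | succ i ih =>
      have := (hW i).1
      push_cast
      omega
  have hkN : (W n).1 - (W 0).1 = k * N := by simp [hn]
  calc N ≤ k.natAbs * N := Nat.le_mul_of_pos_left _ (Int.natAbs_pos.2 hk)
    _ = ((W n).1 - (W 0).1).natAbs := by rw [hkN, Int.natAbs_mul, Int.natAbs_natCast]
    _ ≤ n := hbound n

theorem exists_sub_eq_mul_of_polygonalCurve_eq {U : Set Plane} {W : ℤ → ℤ × ℤ} {e : ℤ × ℤ} {n : ℕ}
    (hW : ∀ i, GridStep U (W i) (W (i + 1))) (hn : 3 ≤ n)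
    (hinj : ∀ i j m : ℤ, W i = W j + m • e → (n : ℤ) ∣ i - j) {t t' : ℝ} {m : ℤ}
    (h : polygonalCurve (latticePoint ∘ W) t =
      polygonalCurve (latticePoint ∘ W) t' + latticePoint (m • e)) :
    ∃ q : ℤ, t - t' = n * q := by
  have hedge : AffineMap.lineMap (latticePoint (W ⌊t⌋)) (latticePoint (W (⌊t⌋ + 1)))
      (Int.fract t) = AffineMap.lineMap (latticePoint (W ⌊t'⌋ + m • e))
        (latticePoint (W (⌊t'⌋ + 1) + m • e)) (Int.fract t') := by
    refine h.trans ?_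
    simp only [polygonalCurve, Function.comp_apply, latticePoint_add,
      AffineMap.lineMap_apply_module]
    module
  rcases eq_or_reverse_of_lineMap_eq (hW _).1 (by simpa using (hW ⌊t'⌋).1)
    ⟨Int.fract_nonneg t, Int.fract_lt_one t⟩ ⟨Int.fract_nonneg t', Int.fract_lt_one t'⟩ hedge
    with ⟨hv, hθ⟩ | ⟨hv, hv'⟩
  · obtain ⟨q, hq⟩ := hinj _ _ _ hv
    refine ⟨q, ?_⟩
    rw [← Int.floor_add_fract t, ← Int.floor_add_fract t', hθ, add_sub_add_right_eq_sub]
    exact_mod_cast hq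
  · have h2 : (n : ℤ) ∣ 2 := by
      have := dvd_sub (hinj _ _ _ hv') (hinj _ _ _ hv)
      rwa [show ⌊t⌋ + 1 - ⌊t'⌋ - (⌊t⌋ - (⌊t'⌋ + 1)) = 2 by ring] at this
    exact absurd (Int.le_of_dvd two_pos h2) (by lia)

theorem exists_simple_essential_curve (hO : IsOpen O) (hT : ∀ k, MapsTo (Tr k) O O)
    (h : ContainsEssentialLoop O) :
    ∃ γ : ℝ → Plane, ∃ k : ℤ, k ≠ 0 ∧ Continuous γ ∧ (∀ s, γ (s + 1) = Tr k (γ s)) ∧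
      (∀ s, γ s ∈ O) ∧ ∀ s s' m, γ s = Tr m (γ s') → ∃ n : ℤ, s - s' = n := by
  obtain ⟨N, hN, v, k, hk, hv⟩ := exists_gridStep_cycle hO h
  set e : ℤ × ℤ := (N, 0)
  set U : Set Plane := (fun z => (N : ℝ)⁻¹ • z) ⁻¹' O with hU
  have hN0 : (N : ℝ) ≠ 0 := by positivity
  have hTr (m : ℤ) (z : Plane) : (N : ℝ)⁻¹ • (z + latticePoint (m • e)) = Tr m ((N : ℝ)⁻¹ • z) := by
    ext <;> simp [latticePoint, Tr, e]
    field_simp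
  have hUe (m : ℤ) : ∀ z ∈ U, z + latticePoint (m • e) ∈ U := fun z hz => by
    rw [hU, mem_preimage, hTr]
    exact hT m hz
  obtain ⟨n, k, hk, W, hWn, hW, hWinj⟩ := exists_simple_periodic_walk (e := e)
    (fun a b hab m => hab.add (hUe m)) (fun m hm => by simp [e] at hm; omega) hk hv
  have hn : 3 ≤ n := hN.trans (le_of_gridStep_of_add_eq hW hk (by rw [← hWn, zero_add]))
  refine ⟨fun s => (N : ℝ)⁻¹ • polygonalCurve (latticePoint ∘ W) (s * n), k, hk,
    ?_, fun s => ?_, fun s => ?_, fun s s' m hs => ?_⟩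
  · have := continuous_polygonalCurve (latticePoint ∘ W)
    fun_prop
  · beta_reduce
    rw [add_one_mul, ← Int.cast_natCast n, polygonalCurve_add_intCast
      (c := latticePoint (k • e)) (fun i => by simp [hWn, latticePoint_add]), hTr]
  · have hseg := (hW ⌊s * n⌋).2
    rw [segment_eq_image_lineMap] at hseg
    exact hseg ⟨_, ⟨Int.fract_nonneg _, (Int.fract_lt_one _).le⟩, rfl⟩
  · rw [← hTr] at hs
    obtain ⟨q, hq⟩ := exists_sub_eq_mul_of_polygonalCurve_eq hW hn hWinj
      (smul_right_injective _ (inv_ne_zero hN0) hs)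
    exact ⟨q, mul_left_cancel₀ (by positivity : (n : ℝ) ≠ 0) (by rw [← hq]; ring)⟩

end EssentialCurve

section Covering

variable {X : Type*} [TopologicalSpace X]

theorem continuous_prj : Continuous prj := by
  unfold prj
  exact ((AddCircle.continuous_mk' 1).comp continuous_fst).prodMk continuous_snd

theorem prj_Tr (k : ℤ) (z : Plane) : prj (Tr k z) = prj z := by
  simp [prj, Tr]

theorem prj_eq_prj_iff {z w : Plane} : prj z = prj w ↔ ∃ m, z = Tr m w := by
  refine ⟨fun h => ?_, fun ⟨m, hm⟩ => hm ▸ prj_Tr m w⟩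
  obtain ⟨m, hm⟩ := (AddCircle.coe_eq_zero_iff 1).1
    ((AddCircle.coe_sub 1 z.1 w.1).trans (sub_eq_zero.2 (congrArg Prod.fst h)))
  have hm : (m : ℝ) = z.1 - w.1 := by simpa using hm
  exact ⟨m, Prod.ext (by simp [Tr, hm]) (congrArg Prod.snd h :)⟩

theorem Tr_eq_self_iff {k : ℤ} {z : Plane} : Tr k z = z ↔ k = 0 := by
  simp [Tr, Prod.ext_iff]

theorem exists_continuous_prj_eq [SimplyConnectedSpace X] [LocallyPathConnectedSpace X]
    {g : X → Ann} (hg : Continuous g) (x : X) {z : Plane} (hz : prj z = g x) :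
    ∃ G : X → Plane, Continuous G ∧ G x = z ∧ ∀ y, prj (G y) = g y := by
  obtain ⟨θ, ⟨hθx, hθ⟩, -⟩ := (AddCircle.isCoveringMap_coe (1 : ℝ)).existsUnique_continuousMap_lifts
    ⟨fun y => (g y).1, by fun_prop⟩ x z.1 (congrArg Prod.fst hz)
  exact ⟨fun y => (θ y, (g y).2), by fun_prop, Prod.ext hθx (congrArg Prod.snd hz).symm,
    fun y => Prod.ext (congrFun hθ y) rfl⟩

theorem eq_of_prj_eq [PreconnectedSpace X] {G G' : X → Plane} (hG : Continuous G)
    (hG' : Continuous G') (h : ∀ y, prj (G y) = prj (G' y)) {x : X} (hx : G x = G' x) : G = G' :=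
  funext fun y => Prod.ext (congrFun ((AddCircle.isCoveringMap_coe (1 : ℝ)).eq_of_comp_eq
    (continuous_fst.comp hG) (continuous_fst.comp hG')
    (funext fun y => congrArg Prod.fst (h y)) x (congrArg Prod.fst hx)) y)
    (congrArg Prod.snd (h y) :)

theorem IsLift.injIsotopicToId_and_map_Tr {f : Ann ≃ₜ Ann} {F : Plane ≃ₜ Plane} (h : IsLift f F)
    (hf : IsotopicToId f) : InjIsotopicToId F ∧ ∀ k z, F (Tr k z) = Tr k (F z) := by
  obtain ⟨H, hHc, hHh, hH0, hH1⟩ := hf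
  have hprj := continuous_prj
  obtain ⟨G, hGc, hG00, hG⟩ := exists_continuous_prj_eq (X := ℝ × Plane)
    (g := fun q => H q.1 (prj q.2)) (hHc.comp (f := fun q : ℝ × Plane => (q.1, prj q.2))
      (by fun_prop)) 0 (z := 0) (hH0 _).symm
  have hG0 (z : Plane) : G (0, z) = z := congrFun (eq_of_prj_eq (G := fun z => G (0, z))
    (by fun_prop) continuous_id (fun z => by rw [hG, hH0, id]) hG00) z
  have hGT (t : ℝ) (k : ℤ) (z : Plane) : G (t, Tr k z) = Tr k (G (t, z)) := by
    have := continuous_Tr k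
    exact congrFun (eq_of_prj_eq (G := fun q : ℝ × Plane => G (q.1, Tr k q.2))
      (G' := fun q => Tr k (G q)) (by fun_prop) (by fun_prop)
      (fun q => by simp only [hG, prj_Tr]) (x := 0) (by simp only [Prod.fst_zero, hG0, hG00]; rfl))
      (t, z)
  have hGi (t : ℝ) : Function.Injective fun z => G (t, z) := by
    intro z w (hzw : G (t, z) = G (t, w))
    obtain ⟨g, hg⟩ := hHh t
    have hHzw : H t (prj z) = H t (prj w) := by rw [← hG (t, z), ← hG (t, w), hzw]
    rw [hg, hg] at hHzw
    obtain ⟨m, rfl⟩ := prj_eq_prj_iff.1 (g.injective hHzw)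
    rw [hGT, Tr_eq_self_iff] at hzw
    rw [hzw, Tr_zero, id]
  have hFG (z : Plane) : prj (F z) = prj (G (1, z)) := by rw [h, hG, hH1]
  obtain ⟨m, hm⟩ := prj_eq_prj_iff.1 (hFG 0)
  have hF (z : Plane) : F z = Tr m (G (1, z)) := by
    have := continuous_Tr m
    exact congrFun (eq_of_prj_eq F.continuous (G' := fun z => Tr m (G (1, z))) (by fun_prop)
      (fun z => by rw [prj_Tr, hFG]) hm) z
  refine ⟨⟨fun t z => G (t, z) + (t * m, 0), by fun_prop,
    fun t z w hzw => hGi t (add_right_cancel hzw), fun z => by simp [hG0],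
    fun z => by rw [hF]; ext <;> simp [Tr]⟩, fun k z => ?_⟩
  rw [hF, hF, hGT, Tr_Tr, Tr_Tr, add_comm]

theorem not_homotopic_const_of_lift {φ : C(AddCircle (1 : ℝ), Ann)} {γ : ℝ → Plane}
    (hγ : Continuous γ) (hφ : ∀ s : ℝ, φ s = prj (γ s)) {k : ℤ} (hk : k ≠ 0)
    (hper : ∀ s, γ (s + 1) = Tr k (γ s)) (pt : Ann) :
    ¬ φ.Homotopic (ContinuousMap.const _ pt) := by
  rintro ⟨H⟩
  have hcoe : Continuous ((↑) : ℝ → AddCircle (1 : ℝ)) := AddCircle.continuous_mk' 1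
  obtain ⟨G, hGc, hG00, hG⟩ := exists_continuous_prj_eq (X := ℝ × ℝ)
    (g := fun q => H (projIcc 0 1 zero_le_one q.1, (q.2 : AddCircle (1 : ℝ))))
    (H.continuous.comp ((continuous_projIcc.comp continuous_fst).prodMk
      (hcoe.comp continuous_snd))) 0 (z := γ 0) (by simp [← hφ])
  have hG0 (s : ℝ) : G (0, s) = γ s := congrFun (eq_of_prj_eq (G := fun s => G (0, s))
    (by fun_prop) hγ (fun s => by simp [hG, hφ]) hG00) s
  have hGT (q : ℝ × ℝ) : G (q.1, q.2 + 1) = Tr k (G q) := by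
    have := continuous_Tr k
    exact congrFun (eq_of_prj_eq (G := fun q : ℝ × ℝ => G (q.1, q.2 + 1))
      (G' := fun q => Tr k (G q)) (by fun_prop) (by fun_prop)
      (fun q => by simp only [hG, prj_Tr, AddCircle.coe_add_period]) (x := 0)
      (by simp only [Prod.fst_zero, Prod.snd_zero, hG0, hper, hG00])) q
  have hG1 : G (1, 1) = G (1, 0) := congrFun (eq_of_prj_eq (G := fun s => G (1, s))
    (G' := fun _ => G (1, 0)) (by fun_prop) continuous_const (fun s => by simp [hG]) rfl) 1
  exact hk (Tr_eq_self_iff.1 ((hGT (1, 0)).symm.trans (by simpa using hG1)))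

theorem IntersectionProperty.exists_apply_eq_Tr {f : Ann ≃ₜ Ann} {F : Plane ≃ₜ Plane}
    (hf : IntersectionProperty f) (hF : IsLift f F) {γ : ℝ → Plane} {k : ℤ} (hk : k ≠ 0)
    (hγ : Continuous γ) (hper : ∀ s, γ (s + 1) = Tr k (γ s))
    (hinj : ∀ s s' m, γ s = Tr m (γ s') → ∃ n : ℤ, s - s' = n) :
    ∃ s s' m, F (γ s) = Tr m (γ s') := by
  have hp : Function.Periodic (prj ∘ γ) 1 := fun s => by
    rw [Function.comp_apply, hper, prj_Tr, Function.comp_apply]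
  let φ : C(AddCircle (1 : ℝ), Ann) := ⟨hp.lift,
    (QuotientAddGroup.isQuotientMap_mk _).continuous_iff.2 (continuous_prj.comp hγ)⟩
  have hess : IsEssentialCircle (range φ) := by
    refine ⟨φ, fun a b hab => ?_, rfl, fun ⟨pt, hpt⟩ =>
      not_homotopic_const_of_lift hγ (fun s => hp.lift_coe s) hk hper pt hpt⟩
    induction a using QuotientAddGroup.induction_on with | H s
    induction b using QuotientAddGroup.induction_on with | H s'
    obtain ⟨m, hm⟩ := prj_eq_prj_iff.1 hab
    obtain ⟨n, hn⟩ := hinj _ _ _ hm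
    rw [← sub_add_cancel s s', hn]
    simp
  obtain ⟨_, ⟨a, rfl⟩, _, ⟨b, rfl⟩, hab⟩ := hf _ hess
  induction a using QuotientAddGroup.induction_on with | H s'
  induction b using QuotientAddGroup.induction_on with | H s
  obtain ⟨m, hm⟩ := prj_eq_prj_iff.1 ((hF (γ s)).trans hab)
  exact ⟨s, s', m, hm⟩

end Covering

section Preparation

theorem exists_injective_forall_mem {ι α : Type*} [Finite ι] {s : ι → Set α}
    (hs : ∀ i, (s i).Infinite) : ∃ f : ι → α, Function.Injective f ∧ ∀ i, f i ∈ s i := by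
  classical
  cases nonempty_fintype ι
  choose t hts ht using fun i => (hs i).exists_subset_card_eq (Fintype.card ι)
  obtain ⟨f, hf, hft⟩ := (Finset.all_card_le_biUnion_card_iff_exists_injective t).1 fun u => by
    rcases u.eq_empty_or_nonempty with rfl | ⟨i, hi⟩
    · simp
    · exact (u.card_le_univ.trans_eq (ht i).symm).trans
        (Finset.card_le_card (Finset.subset_biUnion_of_mem t hi))
  exact ⟨f, hf, fun i => hts i (hft i)⟩

theorem exists_isCompact_isPreconnected_between {X : Type*} [TopologicalSpace X] {S P : Set X}
    (hS : IsPathConnected S) (hP : P.Finite) (hPS : P ⊆ S) :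
    ∃ K, IsCompact K ∧ IsPreconnected K ∧ K.Nonempty ∧ P ⊆ K ∧ K ⊆ S := by
  obtain ⟨a, ha⟩ := hS.nonempty
  obtain ⟨n, p, -, hp⟩ := (hP.insert a).fin_param
  obtain ⟨i, -⟩ : a ∈ range p := hp ▸ mem_insert a P
  obtain ⟨m, rfl⟩ := Nat.exists_eq_add_one_of_ne_zero i.pos.ne'
  obtain ⟨γ, hγS, hpγ⟩ := hS.exists_path_through_family p fun j =>
    insert_subset ha hPS (hp ▸ mem_range_self j)
  refine ⟨range γ, isCompact_range γ.continuous, isPreconnected_range γ.continuous,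
    range_nonempty γ, ?_, hγS⟩
  exact (subset_insert a P).trans (hp ▸ range_subset_iff.2 hpγ)

theorem exists_isOpen_isPreconnected_superset {E ι : Type*} [NormedAddCommGroup E]
    [NormedSpace ℝ E] [Finite ι] {Λ : AddSubgroup E} [DiscreteTopology Λ] {F : E → E}
    (hF : Continuous F) {K : ι → Set E} (hK : ∀ i, IsCompact (K i))
    (hKp : ∀ i, IsPreconnected (K i)) (hfree : ∀ i, MapsTo F (K i) (K i)ᶜ)
    (hd : Pairwise fun i j => Disjoint (K i) (K j)) (hΛ : TranslateDisjoint Λ (⋃ i, K i)) :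
    ∃ U : ι → Set E, (∀ i, IsOpen (U i)) ∧ (∀ i, IsPreconnected (U i)) ∧ (∀ i, K i ⊆ U i) ∧
      (∀ i, MapsTo F (U i) (U i)ᶜ) ∧ (Pairwise fun i j => Disjoint (U i) (U j)) ∧
      TranslateDisjoint Λ (⋃ i, U i) := by
  have hdisj : ∀ᶠ δ in 𝓝[>] (0 : ℝ), ∀ i j, i ≠ j →
      Disjoint (Metric.thickening δ (K i)) (Metric.thickening δ (K j)) :=
    eventually_all.2 fun i => eventually_all.2 fun j => eventually_all.2 fun hij =>
      eventually_disjoint_thickening (hK i) (hK j).isClosed (hd hij)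
  obtain ⟨δ, ⟨⟨hfreeδ, hdδ⟩, hΛδ⟩, hδ⟩ :=
    ((((eventually_all.2 fun i => eventually_mapsTo_compl_thickening hF (hK i) (hfree i)).and
      hdisj).and (eventually_translateDisjoint_thickening (isCompact_iUnion hK) hΛ)).and
      self_mem_nhdsWithin).exists
  exact ⟨fun i => Metric.thickening δ (K i), fun i => Metric.isOpen_thickening,
    fun i => isPreconnected_thickening (hKp i) δ, fun i => Metric.self_subset_thickening hδ _,
    hfreeδ, hdδ, by rwa [← Metric.thickening_iUnion]⟩

theorem exists_isSupportedPush_forall_mapsTo {E ι : Type*} [NormedAddCommGroup E]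
    [NormedSpace ℝ E] [CompleteSpace E] [Finite ι] {Λ : AddSubgroup E}
    (hE : 1 < Module.rank ℝ E) {U J P : ι → Set E} (hUo : ∀ i, IsOpen (U i))
    (hUc : ∀ i, IsPreconnected (U i)) (hU : TranslateDisjoint Λ (⋃ i, U i))
    (hd : Pairwise fun i j => Disjoint (U i) (U j)) (hJU : ∀ i, J i ⊆ U i)
    (hJ : ∀ i, (J i).Infinite) (hP : ∀ i, (P i).Finite) (hPU : ∀ i, P i ⊆ U i) :
    ∃ Φ : E ≃ₜ E, (∀ v ∈ Λ, ∀ z, Φ (v + z) = v + Φ z) ∧ (∀ i, Φ ⁻¹' U i = U i) ∧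
      ∀ i, MapsTo Φ (P i) (J i) := by
  cases nonempty_fintype ι
  have hUi : ∀ i, TranslateDisjoint Λ (U i) := fun i => hU.mono (subset_iUnion U i)
  choose g hg hgJ using fun i => exists_isSupportedPush_mapsTo hE (hUo i) (hUc i) (hUi i) (hJU i)
    (hJ i) (hP i) (hPU i)
  obtain ⟨Φ, hΦ, heq⟩ := exists_isSupportedPush_eqOn hU hd hg Finset.univ
  replace heq : ∀ i, EqOn Φ (g i) (U i) := fun i => heq i (Finset.mem_univ i)
  refine ⟨Φ, hΦ.map_add, fun i => Subset.antisymm (fun z hz => ?_) fun z hz => ?_,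
    fun i z hz => heq i (hPU i hz) ▸ hgJ i hz⟩
  · obtain ⟨w, hw⟩ := (g i).surjective (Φ z)
    have hwU : w ∈ U i := (hg i).mem_of_apply_mem (hUi i) (hw ▸ hz)
    exact Φ.injective ((heq i hwU).trans hw) ▸ hwU
  · exact mem_preimage.2 (heq i hz ▸ (hg i).mapsTo hz)

end Preparation

section DeckGroup

/-- The group of deck translations of `prj`, as a subgroup of the plane. -/
def deck : AddSubgroup Plane := AddSubgroup.zmultiples (1, 0)

theorem Tr_eq_zsmul_add (k : ℤ) (z : Plane) : Tr k z = k • ((1, 0) : Plane) + z := by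
  ext <;> simp [Tr, add_comm]

theorem translateDisjoint_deck_iff {U : Set Plane} :
    TranslateDisjoint deck U ↔ ∀ k, ∀ z ∈ U, Tr k z ∈ U → k = 0 := by
  simp [TranslateDisjoint, deck, AddSubgroup.mem_zmultiples_iff, Tr_eq_zsmul_add]

instance : DiscreteTopology deck :=
  inferInstanceAs (DiscreteTopology (AddSubgroup.zmultiples ((1, 0) : Plane)))

end DeckGroup

section HorizontalSegment

theorem exists_horizontalSegment_subset {U : Set Plane} (hU : IsOpen U) {c : Plane} (hc : c ∈ U) :
    ∃ τ, 0 < τ ∧ τ ≤ 1 ∧ horizontalSegment c τ ⊆ U := by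
  have hnear : ∀ᶠ x in 𝓝 c.1, (x, c.2) ∈ U :=
    (by fun_prop : ContinuousAt (fun x => (x, c.2)) c.1).eventually (hU.mem_nhds hc)
  obtain ⟨r, hr, hrU⟩ := Metric.eventually_nhds_iff_ball.1 hnear
  refine ⟨min (r / 2) 1, by positivity, min_le_right _ _, ?_⟩
  rintro ⟨x, _⟩ ⟨⟨hcx, hxc⟩, rfl⟩
  refine hrU x ?_
  rw [Metric.mem_ball, Real.dist_eq, abs_of_nonneg (sub_nonneg.2 hcx)]
  linarith [min_le_left (r / 2) 1]

theorem infinite_horizontalSegment {c : Plane} {τ : ℝ} (hτ : 0 < τ) :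
    (horizontalSegment c τ).Infinite :=
  (Icc_infinite (lt_add_of_pos_right c.1 hτ)).prod_left (singleton_nonempty _)

theorem exists_horizontalSegment_subset_of_finite {ι : Type*} [Finite ι] {U : ι → Set Plane}
    (hU : ∀ i, IsOpen (U i)) (hne : ∀ i, (U i).Nonempty) :
    ∃ (c : ι → Plane) (τ : ι → ℝ), (Function.Injective fun i => (c i).2) ∧ (∀ i, 0 < τ i) ∧
      (∀ i, τ i ≤ 1) ∧ ∀ i, horizontalSegment (c i) (τ i) ⊆ U i := by
  choose a ha using hne
  have hinf : ∀ i, {y | ((a i).1, y) ∈ U i}.Infinite := fun i =>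
    infinite_of_mem_nhds (a i).2
      ((by fun_prop : ContinuousAt (fun y => ((a i).1, y)) (a i).2).eventually
        ((hU i).mem_nhds (ha i)))
  obtain ⟨y, hy, hyU⟩ := exists_injective_forall_mem hinf
  choose τ hτ0 hτ1 hτU using fun i => exists_horizontalSegment_subset (hU i) (hyU i)
  exact ⟨fun i => ((a i).1, y i), τ, hy, hτ0, hτ1, hτU⟩

end HorizontalSegment

section Conjugation

/-- The homeomorphism `Φ ∘ F ∘ Φ⁻¹`. -/
def conjHomeo (Φ F : Plane ≃ₜ Plane) : Plane ≃ₜ Plane := Φ.symm.trans (F.trans Φ)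

theorem conjHomeo_apply_apply (Φ F : Plane ≃ₜ Plane) (z : Plane) :
    conjHomeo Φ F (Φ z) = Φ (F z) := by
  simp [conjHomeo]

theorem iterate_conjHomeo (Φ F : Plane ≃ₜ Plane) (n : ℕ) (z : Plane) :
    (conjHomeo Φ F)^[n] (Φ z) = Φ (F^[n] z) :=
  ((show Function.Semiconj Φ F (conjHomeo Φ F) from
    fun z => (conjHomeo_apply_apply Φ F z).symm).iterate_right n z).symm

/-- The properties of a fixed point free lift of an isotopically trivial annulus homeomorphism
with the intersection property that are used in the proof, phrased in the plane so as to be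
invariant under conjugation by homeomorphisms commuting with the deck transformations. -/
structure IsFixedPointFreeLift (F : Plane ≃ₜ Plane) : Prop where
  injIsotopicToId : InjIsotopicToId F
  map_Tr : ∀ k z, F (Tr k z) = Tr k (F z)
  apply_ne : ∀ z, F z ≠ z
  not_mapsTo_compl : ∀ O, IsOpen O → (∀ k, MapsTo (Tr k) O O) → ContainsEssentialLoop O →
    ¬ MapsTo F O Oᶜ

theorem IsLift.isFixedPointFreeLift {f : Ann ≃ₜ Ann} {F : Plane ≃ₜ Plane} (hF : IsLift f F)
    (hf : IsotopicToId f) (hint : IntersectionProperty f) (hfix : ∀ z, F z ≠ z) :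
    IsFixedPointFreeLift F where
  injIsotopicToId := (hF.injIsotopicToId_and_map_Tr hf).1
  map_Tr := (hF.injIsotopicToId_and_map_Tr hf).2
  apply_ne := hfix
  not_mapsTo_compl O hO hT hloop hfree := by
    obtain ⟨γ, k, hk, hγ, hper, hγO, hinj⟩ := exists_simple_essential_curve hO hT hloop
    obtain ⟨s, s', m, hm⟩ := hint.exists_apply_eq_Tr hF hk hγ hper hinj
    exact hfree (hγO s) (hm ▸ hT m (hγO s'))

theorem IsFixedPointFreeLift.conj {Φ F : Plane ≃ₜ Plane} (hF : IsFixedPointFreeLift F)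
    (hΦ : ∀ k z, Φ (Tr k z) = Tr k (Φ z)) : IsFixedPointFreeLift (conjHomeo Φ F) where
  injIsotopicToId := hF.injIsotopicToId.conj Φ
  map_Tr k z := by
    obtain ⟨w, rfl⟩ := Φ.surjective z
    rw [← hΦ, conjHomeo_apply_apply, conjHomeo_apply_apply, hF.map_Tr, hΦ]
  apply_ne z hz := by
    obtain ⟨w, rfl⟩ := Φ.surjective z
    exact hF.apply_ne w (Φ.injective ((conjHomeo_apply_apply Φ F w).symm.trans hz))
  not_mapsTo_compl O hO hT hloop hfree := by
    obtain ⟨k, hk, z, hz⟩ := hloop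
    refine hF.not_mapsTo_compl (Φ ⁻¹' O) (hO.preimage Φ.continuous)
      (fun k w hw => mem_preimage.2 (hΦ k w ▸ hT k hw)) ⟨k, hk, Φ.symm z, ?_⟩
      fun w hw hFw => hfree hw (conjHomeo_apply_apply Φ F w ▸ hFw)
    have himage := hz.map Φ.symm.continuous
    rwa [symm_Tr hΦ, Φ.image_symm] at himage

end Conjugation

section Normalization

variable {ι : Type*} [Finite ι] {F : Plane ≃ₜ Plane} {X : ι → Set Plane} {P : Set Plane}

theorem exists_conj_mapsTo_horizontalSegment (hX : ∀ i, IsPathConnected (X i))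
    (hfree : ∀ i, MapsTo F (X i) (X i)ᶜ) (hd : Pairwise fun i j => Disjoint (X i) (X j))
    (hXT : TranslateDisjoint deck (⋃ i, X i)) (hP : P.Finite) :
    ∃ (Φ : Plane ≃ₜ Plane) (c : ι → Plane) (τ : ι → ℝ), (∀ k z, Φ (Tr k z) = Tr k (Φ z)) ∧
      (Function.Injective fun i => (c i).2) ∧ (∀ i, 0 < τ i) ∧ (∀ i, τ i ≤ 1) ∧
      (∀ i, MapsTo (conjHomeo Φ F) (horizontalSegment (c i) (τ i))
        (horizontalSegment (c i) (τ i))ᶜ) ∧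
      ∀ i, MapsTo Φ (X i ∩ P) (horizontalSegment (c i) (τ i)) := by
  choose K hKc hKp hKne hPK hKX using fun i =>
    exists_isCompact_isPreconnected_between (hX i) (hP.inter_of_right (X i)) inter_subset_left
  obtain ⟨U, hUo, hUc, hKU, hUfree, hUd, hUT⟩ := exists_isOpen_isPreconnected_superset F.continuous
    hKc hKp (fun i => (hfree i).mono (hKX i) (compl_subset_compl.2 (hKX i)))
    (fun i j hij => (hd hij).mono (hKX i) (hKX j)) (hXT.mono (iUnion_mono hKX))
  obtain ⟨c, τ, hc, hτ0, hτ1, hcU⟩ :=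
    exists_horizontalSegment_subset_of_finite hUo fun i => (hKne i).mono (hKU i)
  obtain ⟨Φ, hΦ, hΦU, hΦP⟩ := exists_isSupportedPush_forall_mapsTo (by norm_num) hUo hUc hUT hUd hcU
    (fun i => infinite_horizontalSegment (hτ0 i)) (fun i => hP.inter_of_right (X i))
    fun i => (hPK i).trans (hKU i)
  refine ⟨Φ, c, τ, fun k z => ?_, hc, hτ0, hτ1, fun i z hz hFz => ?_, hΦP⟩
  · rw [Tr_eq_zsmul_add, Tr_eq_zsmul_add, hΦ _ (AddSubgroup.zsmul_mem_zmultiples _ k)]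
  · obtain ⟨w, rfl⟩ := Φ.surjective z
    rw [conjHomeo_apply_apply] at hFz
    exact hUfree i (hΦU i ▸ hcU i hz : w ∈ U i) (hΦU i ▸ hcU i hFz)

theorem IsFixedPointFreeLift.exists_freeTiling_conj (hF : IsFixedPointFreeLift F)
    (hX : ∀ i, IsPathConnected (X i)) (hfree : ∀ i, MapsTo F (X i) (X i)ᶜ)
    (hd : Pairwise fun i j => Disjoint (X i) (X j)) (hXT : TranslateDisjoint deck (⋃ i, X i))
    (hP : P.Finite) :
    ∃ Φ : Plane ≃ₜ Plane, (∀ k z, Φ (Tr k z) = Tr k (Φ z)) ∧ ∃ C, FreeTiling (conjHomeo Φ F) C ∧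
      ∀ i, ∃ R ∈ C, MapsTo Φ (X i ∩ P) R ∧
        ((∃ z ∈ R, conjHomeo Φ F z ∈ R) ∨ ∃ z ∈ R, Tr 1 z ∈ R) := by
  obtain ⟨Φ, c, τ, hΦ, hc, hτ0, hτ1, hseg, hΦP⟩ :=
    exists_conj_mapsTo_horizontalSegment hX hfree hd hXT hP
  obtain ⟨C, hC, hR⟩ := exists_freeTiling (conjHomeo Φ F).continuous (hF.conj hΦ).map_Tr
    (hF.conj hΦ).apply_ne hc hτ0 hτ1 hseg
  refine ⟨Φ, hΦ, C, hC, fun i => ?_⟩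
  obtain ⟨R, hRC, hsegR, hcrit⟩ := hR i
  exact ⟨R, hRC, (hΦP i).mono_right hsegR, hcrit⟩

end Normalization

namespace FreeTiling

section Orbit

variable {F : Plane → Plane} {C : Set (Set Plane)} {R R' : Set Plane}

theorem reflTransGen_of_apply_mem (hR : R ∈ C) (hR' : R' ∈ C) {x : Plane} (hx : x ∈ R)
    (hFx : F x ∈ R') : Relation.ReflTransGen (CellArrow F C) R R' := by
  rcases eq_or_ne R R' with rfl | hne
  exacts [.refl, .single ⟨hR, hR', hne, x, hx, hFx⟩]

theorem reflTransGen_of_iterate_mem (h : FreeTiling F C) (hR : R ∈ C) (hR' : R' ∈ C) {x : Plane}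
    (hx : x ∈ R) {q : ℕ} (hq : 0 < q) (hFx : F^[q] x ∈ R') :
    Relation.ReflTransGen (CellArrow F C) R R' := by
  induction q, hq using Nat.le_induction generalizing R x with
  | base => exact reflTransGen_of_apply_mem hR hR' hx hFx
  | succ n _ ih =>
    obtain ⟨b, hb, hxb⟩ := h.cover (F x)
    exact (reflTransGen_of_apply_mem hR hb hx hxb).trans (ih hb hxb hFx)

theorem reflTransGen_image_Tr_nsmul {F : Plane ≃ₜ Plane} (h : FreeTiling F C)
    (hT : ∀ k z, F (Tr k z) = Tr k (F z)) {p : ℤ}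
    (hp : Relation.ReflTransGen (CellArrow F C) R (Tr p '' R)) (n : ℕ) :
    Relation.ReflTransGen (CellArrow F C) R (Tr (n • p) '' R) := by
  induction n with
  | zero => rw [zero_nsmul, Tr_zero, image_id]
  | succ n ih =>
    rw [succ_nsmul, ← image_Tr_image_Tr]
    exact ih.trans (h.reflTransGen_image_Tr hT hp _)

end Orbit

end FreeTiling

namespace IsFixedPointFreeLift

variable {F : Plane ≃ₜ Plane} {C : Set (Set Plane)} {R R' : Set Plane} {a b : ℤ}

theorem exists_reflTransGen_image_Tr (hF : IsFixedPointFreeLift F) (h : FreeTiling F C)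
    (hRC : R ∈ C) (hR : IsReturning F R) (hRC' : R' ∈ C) (hR' : IsReturning F R') :
    ∃ k, Relation.ReflTransGen (CellArrow F C) R (Tr k '' R') := by
  by_contra! hno
  have hTA := h.mapsTo_Tr_reach hF.map_Tr (R := R)
  refine hF.not_mapsTo_compl _ (isOpen_interior.sdiff (F.isClosedMap _
    (h.isClosed_sUnion fun b hb => hb.1))) (fun k z hz => ⟨mapsTo_Tr_interior hTA k hz.1, ?_⟩)
    (h.containsEssentialLoop_reach hF.map_Tr hRC hR hRC' hR' hno)
    fun z hz hFz => hFz.2 (mem_image_of_mem F (interior_subset hz.1))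
  rintro ⟨w, hw, hwz⟩
  exact hz.2 ⟨Tr (-k) w, hTA (-k) hw, by rw [hF.map_Tr, hwz, Tr_neg_Tr]⟩

theorem not_reflTransGen_image_Tr_of_neg (hF : IsFixedPointFreeLift F) (h : FreeTiling F C)
    (hRC : R ∈ C) (ha : 0 < a) (hb : b < 0)
    (hRa : Relation.ReflTransGen (CellArrow F C) R (Tr a '' R)) :
    ¬ Relation.ReflTransGen (CellArrow F C) R (Tr b '' R) := by
  intro hRb
  lift a to ℕ using ha.le
  obtain ⟨m, rfl⟩ := Int.exists_eq_neg_ofNat hb.le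
  have hforth := h.reflTransGen_image_Tr_nsmul hF.map_Tr hRa m
  have hback := h.reflTransGen_image_Tr hF.map_Tr
    (h.reflTransGen_image_Tr_nsmul hF.map_Tr hRb a) (m • (a : ℤ))
  have hsum : m • (a : ℤ) + a • (-m : ℤ) = 0 := by simp only [nsmul_eq_mul]; ring
  rw [image_Tr_image_Tr, hsum, Tr_zero, image_id] at hback
  rcases Relation.reflTransGen_iff_eq_or_transGen.1 hforth with heq | htrans
  · exact h.image_Tr_ne R hRC _ (nsmul_pos ha (by lia)).ne' heq
  · exact h.not_transGen hF.injIsotopicToId hF.apply_ne R (htrans.trans_left hback)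

theorem not_iterate_eq_Tr_of_neg (hF : IsFixedPointFreeLift F) (h : FreeTiling F C)
    (hRC : R ∈ C) (hR : (∃ z ∈ R, F z ∈ R) ∨ ∃ z ∈ R, Tr 1 z ∈ R)
    (hRC' : R' ∈ C) (hR' : (∃ z ∈ R', F z ∈ R') ∨ ∃ z ∈ R', Tr 1 z ∈ R')
    (ha : 0 < a) (hb : b < 0) {q q' : ℕ} (hq : 0 < q) (hq' : 0 < q') {x y x' y' : Plane}
    (hx : x ∈ R) (hy : y ∈ R) (hx' : x' ∈ R') (hy' : y' ∈ R') (hxy : F^[q] x = Tr a y) :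
    F^[q'] x' ≠ Tr b y' := by
  intro hxy'
  have hret : IsReturning F R := ⟨hR, q, a, ha.ne', x, hx, y, hy, hxy⟩
  have hret' : IsReturning F R' := ⟨hR', q', b, hb.ne, x', hx', y', hy', hxy'⟩
  have hRa : Relation.ReflTransGen (CellArrow F C) R (Tr a '' R) :=
    h.reflTransGen_of_iterate_mem hRC (h.image_Tr_mem R hRC a) hx hq (hxy ▸ mem_image_of_mem _ hy)
  have hRb : Relation.ReflTransGen (CellArrow F C) R' (Tr b '' R') :=
    h.reflTransGen_of_iterate_mem hRC' (h.image_Tr_mem R' hRC' b) hx' hq'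
      (hxy' ▸ mem_image_of_mem _ hy')
  obtain ⟨k, hk⟩ := hF.exists_reflTransGen_image_Tr h hRC hret hRC' hret'
  obtain ⟨m, hm⟩ := hF.exists_reflTransGen_image_Tr h hRC' hret' hRC hret
  obtain ⟨n, hn⟩ := Archimedean.arch (k + m + 1) (neg_pos.2 hb)
  have hnb := h.reflTransGen_image_Tr hF.map_Tr
    ((h.reflTransGen_image_Tr_nsmul hF.map_Tr hRb n).trans
      (h.reflTransGen_image_Tr hF.map_Tr hm _)) k
  rw [image_Tr_image_Tr, image_Tr_image_Tr] at hnb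
  exact hF.not_reflTransGen_image_Tr_of_neg h hRC ha (by rw [smul_neg] at hn; linarith) hRa
    (hk.trans hnb)

end IsFixedPointFreeLift

section Pair

variable {X₁ X₂ : Set Plane} (hT₁ : ∀ k : ℤ, k ≠ 0 → Disjoint (Tr k '' X₁) X₁)
  (hT₂ : ∀ k : ℤ, k ≠ 0 → Disjoint (Tr k '' X₂) X₂)
  (hX₁₂ : X₁ = X₂ ∨ ∀ k : ℤ, Disjoint (Tr k '' X₁) X₂)
include hT₁ hT₂ hX₁₂

theorem eq_and_eq_zero_of_Tr_mem {A B : Set Plane} (hA : A ∈ ({X₁, X₂} : Set (Set Plane)))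
    (hB : B ∈ ({X₁, X₂} : Set (Set Plane))) {k : ℤ} {z : Plane} (hz : z ∈ A) (hkz : Tr k z ∈ B) :
    A = B ∧ k = 0 := by
  have h₁ : z ∈ X₁ → Tr k z ∈ X₁ → k = 0 := fun hz hkz =>
    by_contra fun hk => disjoint_left.1 (hT₁ k hk) (mem_image_of_mem _ hz) hkz
  have h₂ : z ∈ X₂ → Tr k z ∈ X₂ → k = 0 := fun hz hkz =>
    by_contra fun hk => disjoint_left.1 (hT₂ k hk) (mem_image_of_mem _ hz) hkz
  rcases hX₁₂ with rfl | hd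
  · obtain rfl | rfl := hA <;> obtain rfl | rfl := hB <;> exact ⟨rfl, h₁ hz hkz⟩
  rcases hA with rfl | rfl <;> rcases hB with rfl | rfl
  · exact ⟨rfl, h₁ hz hkz⟩
  · exact (disjoint_left.1 (hd k) (mem_image_of_mem _ hz) hkz).elim
  · exact (disjoint_left.1 (hd (-k)) ⟨_, hkz, Tr_neg_Tr k z⟩ hz).elim
  · exact ⟨rfl, h₂ hz hkz⟩

theorem pairwise_disjoint_pair :
    Pairwise fun A B : ({X₁, X₂} : Set (Set Plane)) => Disjoint A.1 B.1 := fun A B hAB =>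
  disjoint_left.2 fun z hzA hzB => hAB <| Subtype.ext
    (eq_and_eq_zero_of_Tr_mem hT₁ hT₂ hX₁₂ A.2 B.2 hzA
      (by rwa [Tr_zero] : Tr 0 z ∈ B.1)).1

theorem translateDisjoint_pair :
    TranslateDisjoint deck (⋃ A : ({X₁, X₂} : Set (Set Plane)), A.1) := by
  refine translateDisjoint_deck_iff.2 fun k z hz hkz => ?_
  obtain ⟨A, hzA⟩ := mem_iUnion.1 hz
  obtain ⟨B, hzB⟩ := mem_iUnion.1 hkz
  exact (eq_and_eq_zero_of_Tr_mem hT₁ hT₂ hX₁₂ A.2 B.2 hzA hzB).2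

end Pair

/-- Lemma 4.1: a Franks-type fixed point lemma. If there are two path-connected sets
`X₁, X₂` in ℝ², each free for `F` and for all nontrivial deck transformations, either equal
or with disjoint deck orbits, such that some positive iterate of `X₁` meets a positive
translate of `X₁` and some positive iterate of `X₂` meets a negative translate of `X₂`,
then `F` has a fixed point. -/
theorem franks_type_fixed_point
    (f : Ann ≃ₜ Ann) (F : Plane ≃ₜ Plane)
    (hiso : IsotopicToId f) (hint : IntersectionProperty f) (hlift : IsLift f F)
    (X₁ X₂ : Set Plane)
    (hpc₁ : IsPathConnected X₁) (hpc₂ : IsPathConnected X₂)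
    (hfree₁ : Disjoint (⇑F '' X₁) X₁) (hfree₂ : Disjoint (⇑F '' X₂) X₂)
    (hT₁ : ∀ k : ℤ, k ≠ 0 → Disjoint (Tr k '' X₁) X₁)
    (hT₂ : ∀ k : ℤ, k ≠ 0 → Disjoint (Tr k '' X₂) X₂)
    (hX₁₂ : X₁ = X₂ ∨ ∀ k : ℤ, Disjoint (Tr k '' X₁) X₂)
    (p₁ q₁ p₂ q₂ : ℕ) (hp₁ : 0 < p₁) (hq₁ : 0 < q₁) (hp₂ : 0 < p₂) (hq₂ : 0 < q₂)
    (hmeet₁ : ((⇑F)^[q₁] '' X₁ ∩ Tr (p₁ : ℤ) '' X₁).Nonempty)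
    (hmeet₂ : ((⇑F)^[q₂] '' X₂ ∩ Tr (-(p₂ : ℤ)) '' X₂).Nonempty) :
    ∃ z : Plane, F z = z := by
  by_contra! hfix
  have hF := hlift.isFixedPointFreeLift hiso hint hfix
  obtain ⟨_, ⟨x, hx, rfl⟩, y, hy, hyx⟩ := hmeet₁
  obtain ⟨_, ⟨x', hx', rfl⟩, y', hy', hyx'⟩ := hmeet₂
  have hX : ∀ A : ({X₁, X₂} : Set (Set Plane)), IsPathConnected A.1 := by
    rintro ⟨_, rfl | rfl⟩ <;> assumption
  have hfree : ∀ A : ({X₁, X₂} : Set (Set Plane)), MapsTo F A.1 A.1ᶜ := by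
    rintro ⟨_, rfl | rfl⟩ <;> rwa [mapsTo_iff_image_subset, subset_compl_iff_disjoint_right]
  obtain ⟨Φ, hΦ, C, hC, hR⟩ := hF.exists_freeTiling_conj hX hfree
    (pairwise_disjoint_pair hT₁ hT₂ hX₁₂) (translateDisjoint_pair hT₁ hT₂ hX₁₂)
    (toFinite {x, y, x', y'})
  obtain ⟨R, hRC, hΦR, hRcrit⟩ := hR ⟨X₁, .inl rfl⟩
  obtain ⟨R', hRC', hΦR', hRcrit'⟩ := hR ⟨X₂, .inr rfl⟩
  refine (hF.conj hΦ).not_iterate_eq_Tr_of_neg hC hRC hRcrit hRC' hRcrit'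
    (Int.natCast_pos.2 hp₁) (neg_lt_zero.2 (Int.natCast_pos.2 hp₂)) hq₁ hq₂
    (hΦR ⟨hx, by simp⟩) (hΦR ⟨hy, by simp⟩) (hΦR' ⟨hx', by simp⟩) (hΦR' ⟨hy', by simp⟩) ?_ ?_
  · rw [iterate_conjHomeo, ← hyx, hΦ]
  · rw [iterate_conjHomeo, ← hyx', hΦ]
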